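/- arXiv:1911.05416 — 4 statements merged into one kernel-verified Lean document; each statement's English description precedes it below -/
import Mathlib

section
/- Let n be a positive integer and for each i ∈ {1,…,n} let 0 ≤ a_i < b_i ≤ 1, and define agent i's valuation by v_i(S) = λ(S ∩ [a_i, b_i]) / (b_i − a_i), where λ is Lebesgue measure (a uniform valuation over a single interval). Then there exists a contiguous 1/4-envy-free allocation of [0,1] among the n agents. -/
/-- The valuation of an agent with a uniform valuation over the interval `[ai, bi]`:
`v(S) = λ(S ∩ [ai, bi]) / (bi - ai)` evaluated on the interval `S = [s, t]`. -/
noncomputable def uniformVal (ai bi s t : ℝ) : ℝ :=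
  (MeasureTheory.volume (Set.Icc s t ∩ Set.Icc ai bi)).toReal / (bi - ai)

/-!
Encode a contiguous division of the cake by the vector of the lengths of its pieces, a point of the
standard simplex. Every agent likes best some piece of positive length, and for an atomless measure
the divisions at which it likes the `k`-th piece best form a closed set. The colourful KKM theorem
therefore yields a division and a permutation `π` such that agent `i` likes the piece `π i` best: an
envy-free division, as in the theorem of Stromquist and Woodall.

By compactness it is enough to find, at every scale, nearby divisions, one for each agent, at which
the agents like distinct pieces best. In Kuhn's triangulation of the dilated simplex the vertices of
each cell can be assigned to distinct agents. If every vertex is labelled by a piece of positive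
length that its owner likes best, Sperner's lemma provides a cell on which all labels occur.
-/

namespace CakeCutting

open Finset

section KuhnTriangulation

open scoped Fin.CommRing

theorem even_card_of_not_surjective {α : Type*} [Finite α] {f : α → α}
    (hf : ¬ Function.Surjective f) {z : α} {s : Finset α}
    (hs : ∀ i, i ∈ s ↔ ∀ k ≠ z, ∃ j ≠ i, f j = k) : Even #s := by
  classical
  cases nonempty_fintype α
  obtain rfl | ⟨i₀, hi₀⟩ := s.eq_empty_or_nonempty
  · simp
  rw [hs] at hi₀
  have hz : ∀ i, f i ≠ z := by
    rintro i rfl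
    refine hf fun k => ?_
    obtain rfl | hk := eq_or_ne k (f i)
    · exact ⟨i, rfl⟩
    · exact (hi₀ k hk).imp fun j => And.right
  have hinj : Set.InjOn f (univ.erase i₀ : Finset α) := by
    refine injOn_of_surjOn_of_card_le (t := univ.erase z) f (fun i _ => by simp [hz])
      (fun k hk => ?_) (by simp)
    obtain ⟨j, hj, hjk⟩ := hi₀ k (by simpa using hk)
    exact ⟨j, by simpa using hj, hjk⟩
  obtain ⟨j₀, hj₀, hfj₀⟩ := hi₀ (f i₀) (hz i₀)
  have hmem : ∀ i, i ∈ s ↔ ∃ j ≠ i, f j = f i := by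
    refine fun i => (hs i).trans ⟨fun h => h _ (hz i), fun ⟨j, hj, hji⟩ k hk => ?_⟩
    obtain ⟨l, -, rfl⟩ := hi₀ k hk
    obtain rfl | hl := eq_or_ne l i
    · exact ⟨j, hj, hji⟩
    · exact ⟨l, hl, rfl⟩
  have hpair : s = {i₀, j₀} := by
    ext i
    simp only [Set.InjOn, coe_erase, coe_univ, Set.mem_sdiff, Set.mem_univ, true_and,
      Set.mem_singleton_iff] at hinj
    simp only [hmem, mem_insert, mem_singleton]
    grind
  rw [hpair, card_pair hj₀.symm]
  exact even_two

/-- The lattice points of the simplex `stdSimplex ℝ α` dilated by `N`. -/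
def latticeSimplex (α : Type*) [Fintype α] (N : ℤ) : Set (α → ℤ) := {x | 0 ≤ x ∧ ∑ k, x k = N}

theorem sub_single_mem_latticeSimplex {α : Type*} [Fintype α] [DecidableEq α] {x : α → ℤ} {N : ℤ}
    (hx : x ∈ latticeSimplex α (N + 1)) {k : α} (hk : 0 < x k) :
    x - Pi.single k 1 ∈ latticeSimplex α N := by
  refine ⟨fun l => ?_, by simp [hx.2]⟩
  obtain rfl | hl := eq_or_ne l k
  · simpa using Int.add_one_le_iff.mpr hk
  · simpa [hl] using hx.1 l

theorem exists_pos_and_imp_eq_single {α : Type*} [Fintype α] [DecidableEq α] {x : α → ℤ} {N : ℤ}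
    (hx : x ∈ latticeSimplex α N) (hN : 0 < N) (l : α) :
    ∃ k, 0 < x k ∧ (k = l → x = Pi.single l N) := by
  by_cases h : ∃ k ≠ l, 0 < x k
  · obtain ⟨k, hkl, hk⟩ := h
    exact ⟨k, hk, fun e => (hkl e).elim⟩
  push Not at h
  have hzero : ∀ k ≠ l, x k = 0 := fun k hk => (h k hk).antisymm (hx.1 k)
  have hl : x l = N := by rw [← hx.2, Fintype.sum_eq_single l hzero]
  refine ⟨l, hl ▸ hN, fun _ => funext fun k => ?_⟩
  obtain rfl | hk := eq_or_ne k l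
  · simpa using hl
  · simpa [hk] using hzero k hk

variable {n : ℕ} [NeZero n] {N : ℤ} {v : Fin n → Fin n → ℤ}

/-- The agent owning a lattice point, read cyclically modulo `n`; moving a unit from one coordinate
to the next passes the point on to the next agent. -/
def owner : (Fin n → ℤ) →ₗ[ℤ] Fin n := Fintype.linearCombination ℤ id

@[simp]
theorem owner_single (k : Fin n) (c : ℤ) : owner (Pi.single k c) = c • k :=
  Fintype.linearCombination_apply_single ℤ id k c

/-- The move of one unit from coordinate `k` to the (cyclically) next one. -/
def unitMove (k : Fin n) : Fin n → ℤ := Pi.single (k + 1) 1 - Pi.single k 1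

theorem unitMove_apply_le (k l : Fin n) : unitMove k l ≤ if k + 1 = l then 1 else 0 := by
  simp only [unitMove, Pi.sub_apply, Pi.single_apply, eq_comm (a := l)]
  split_ifs <;> simp

theorem unitMove_injective [Nontrivial (Fin n)] : Function.Injective (unitMove (n := n)) := by
  intro k l h
  by_contra hkl
  have hneg : unitMove k k = -1 := by simp [unitMove]
  have hnonneg : 0 ≤ unitMove l k := by
    simp only [unitMove, Pi.sub_apply, Pi.single_apply, if_neg hkl]
    split_ifs <;> simp
  rw [← h, hneg] at hnonneg
  contradiction

/-- The simplices of Kuhn's triangulation of the hyperplane `∑ k, x k = N`. The vertices are listed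
in the cyclic order in which every coordinate is moved exactly once, and are indexed by their
owners. -/
structure IsCell (N : ℤ) (v : Fin n → Fin n → ℤ) : Prop where
  sum_eq : ∀ j, ∑ k, v j k = N
  owner_eq : ∀ j, owner (v j) = j
  exists_perm : ∃ σ : Equiv.Perm (Fin n), ∀ j, v (j + 1) = v j + unitMove (σ j)

theorem IsCell.mem_latticeSimplex (hv : IsCell N v) (hnonneg : 0 ≤ v) (j : Fin n) :
    v j ∈ latticeSimplex (Fin n) N :=
  ⟨hnonneg j, hv.sum_eq j⟩

-- On the way from `v j` around the cell to `v i`, no coordinate is increased more than once.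
theorem IsCell.apply_le_apply_add_one (hv : IsCell N v) (i j k : Fin n) :
    v i k ≤ v j k + 1 := by
  obtain ⟨σ, hσ⟩ := hv.exists_perm
  have hpath : ∀ t : ℕ, v (j + t) k - v j k = ∑ s ∈ range t, unitMove (σ (j + s)) k := by
    intro t
    have hstep : ∀ s : ℕ, unitMove (σ (j + s)) k = v (j + (s + 1 : ℕ)) k - v (j + s) k := by
      intro s
      rw [Nat.cast_succ, ← add_assoc, hσ, Pi.add_apply, add_sub_cancel_left]
    simp only [hstep, sum_range_sub fun s : ℕ => v (j + s) k, Nat.cast_zero, add_zero]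
  let e : Equiv.Perm (Fin n) := (Equiv.addLeft j).trans (σ.trans (Equiv.addRight 1))
  rw [← sub_le_iff_le_add']
  calc v i k - v j k = ∑ s ∈ range (i - j).val, unitMove (σ (j + s)) k := by
        rw [← hpath, Fin.cast_val_eq_self, add_sub_cancel]
    _ ≤ ∑ s ∈ range (i - j).val, if σ (j + s) + 1 = k then 1 else 0 :=
        sum_le_sum fun s _ => unitMove_apply_le _ _
    _ ≤ ∑ s ∈ range n, if σ (j + s) + 1 = k then 1 else 0 :=
        sum_le_sum_of_subset_of_nonneg (range_mono (i - j).isLt.le) fun s _ _ => by positivity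
    _ = ∑ s : Fin n, if e s = k then 1 else 0 := by
        rw [← Fin.sum_univ_eq_sum_range fun s : ℕ => if σ (j + s) + 1 = k then (1 : ℤ) else 0]
        simp only [Fin.cast_val_eq_self]
        rfl
    _ = 1 := by
        rw [Equiv.sum_comp e fun l => if l = k then (1 : ℤ) else 0, Fintype.sum_ite_eq']

/-- The vertices of a cell after reflecting the `i`-th one in the opposite facet. -/
def pivot (v : Fin n → Fin n → ℤ) (i : Fin n) : Fin n → Fin n → ℤ :=
  Function.update v i (v (i - 1) + v (i + 1) - v i)

@[simp]
theorem pivot_self (v : Fin n → Fin n → ℤ) (i : Fin n) :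
    pivot v i i = v (i - 1) + v (i + 1) - v i :=
  Function.update_self ..

@[simp]
theorem pivot_of_ne (v : Fin n → Fin n → ℤ) {i j : Fin n} (h : j ≠ i) : pivot v i j = v j :=
  Function.update_of_ne h ..

theorem pivot_pivot [Nontrivial (Fin n)] (v : Fin n → Fin n → ℤ) (i : Fin n) :
    pivot (pivot v i) i = v := by
  funext j
  by_cases h : j = i
  · subst h
    simp
  · simp [h]

theorem IsCell.pivot_ne [Nontrivial (Fin n)] (hv : IsCell N v) (i : Fin n) : pivot v i ≠ v := by
  intro h
  obtain ⟨σ, hσ⟩ := hv.exists_perm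
  have hpred : v i = v (i - 1) + unitMove (σ (i - 1)) := by simpa using hσ (i - 1)
  have hfix : v (i - 1) + v (i + 1) - v i = v i := by simpa using congrFun h i
  have hmove : unitMove (σ i) = unitMove (σ (i - 1)) := by
    rw [hσ i] at hfix
    linear_combination hfix + hpred
  simpa [eq_comm (a := i)] using σ.injective (unitMove_injective hmove)

theorem exists_pivot_neg (hnonneg : 0 ≤ v) {i : Fin n} (hpivot : ¬ 0 ≤ pivot v i) :
    ∃ k, pivot v i i k < 0 := by
  by_contra! h
  refine hpivot fun j => ?_
  obtain rfl | hj := eq_or_ne j i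
  · exact h
  · exact (hnonneg j).trans_eq (pivot_of_ne v hj).symm

theorem IsCell.isCell_pivot [Nontrivial (Fin n)] (hv : IsCell N v) (i : Fin n) :
    IsCell N (pivot v i) := by
  obtain ⟨σ, hσ⟩ := hv.exists_perm
  have hpred : v i = v (i - 1) + unitMove (σ (i - 1)) := by simpa using hσ (i - 1)
  refine ⟨fun j => ?_, fun j => ?_, (Equiv.swap (i - 1) i).trans σ, fun j => ?_⟩
  · obtain rfl | h := eq_or_ne j i
    · simp [sum_add_distrib, hv.sum_eq]
    · simpa [h] using hv.sum_eq j
  · obtain rfl | h := eq_or_ne j i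
    · simp [hv.owner_eq]
    · simpa [h] using hv.owner_eq j
  · obtain rfl | h := eq_or_ne j i
    · simp [hpred]
    obtain rfl | h' := eq_or_ne j (i - 1)
    · rw [sub_add_cancel, pivot_self, pivot_of_ne v h, Equiv.trans_apply, Equiv.swap_apply_left,
        hσ i]
      abel
    · have hsucc : j + 1 ≠ i := fun e => h' (eq_sub_of_add_eq e)
      simp [h, hsucc, Equiv.swap_apply_of_ne_of_ne h' h, hσ]

theorem IsCell.eq_zero_of_pivot_neg [Nontrivial (Fin n)] (hv : IsCell N v) (hnonneg : 0 ≤ v)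
    {i k : Fin n} (hk : pivot v i i k < 0) {j : Fin n} (hj : j ≠ i) : v j k = 0 := by
  have h := (hv.isCell_pivot i).apply_le_apply_add_one j i k
  rw [pivot_of_ne v hj] at h
  have := hnonneg j k
  simp only [Pi.zero_apply] at this
  lia

theorem finite_setOf_isCell_nonneg (N : ℤ) :
    {v : Fin n → Fin n → ℤ | IsCell N v ∧ 0 ≤ v}.Finite := by
  refine (Set.finite_Icc (0 : Fin n → Fin n → ℤ) fun _ _ => N).subset ?_
  rintro v ⟨hv, hnonneg⟩
  refine ⟨hnonneg, fun j k => ?_⟩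
  rw [← hv.sum_eq j]
  exact single_le_sum (fun l _ => hnonneg j l) (mem_univ k)

/-- The vertices of the cell at the corner `(N + 1, 0, …, 0)` of the lattice simplex of size
`N + 1`. -/
def cornerCell (N : ℤ) (j : Fin n) : Fin n → ℤ := Pi.single 0 N + Pi.single j 1

theorem cornerCell_apply_of_ne (N : ℤ) {j k : Fin n} (h0 : k ≠ 0) (hk : k ≠ j) :
    cornerCell N j k = 0 := by
  simp [cornerCell, h0, hk]

theorem cornerCell_zero (N : ℤ) : cornerCell N (0 : Fin n) = Pi.single 0 (N + 1) :=
  (Pi.single_add ..).symm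

theorem isCell_cornerCell (N : ℤ) : IsCell (N + 1) (cornerCell N : Fin n → Fin n → ℤ) := by
  refine ⟨fun j => ?_, fun j => ?_, Equiv.refl _, fun j => ?_⟩
  · simp [cornerCell, sum_add_distrib]
  · simp [cornerCell]
  · simp [cornerCell, unitMove]

theorem cornerCell_nonneg (hN : 0 ≤ N) : 0 ≤ (cornerCell N : Fin n → Fin n → ℤ) := fun _ =>
  add_nonneg (Pi.single_nonneg.mpr hN) (Pi.single_nonneg.mpr zero_le_one)

theorem not_pivot_cornerCell_nonneg [Nontrivial (Fin n)] (N : ℤ) :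
    ¬ 0 ≤ pivot (cornerCell N) (-1 : Fin n) := by
  intro h
  have := h (-1) (-1)
  simp [cornerCell] at this

theorem eq_cornerCell_of_le_apply_zero {x : Fin n → ℤ} (hx : x ∈ latticeSimplex (Fin n) (N + 1))
    (h0 : N ≤ x 0) {k : Fin n} (hk : k ≠ 0) (hpos : 0 < x k) : x = cornerCell N k := by
  have hle : ∀ l ∈ univ, cornerCell N k l ≤ x l := by
    intro l _
    obtain rfl | hl := eq_or_ne l 0
    · simpa [cornerCell, hk] using h0
    obtain rfl | hlk := eq_or_ne l k
    · simpa [cornerCell, hl] using Int.add_one_le_iff.mpr hpos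
    · simpa [cornerCell_apply_of_ne N hl hlk] using hx.1 l
  have heq := (sum_eq_sum_iff_of_le hle).mp (((isCell_cornerCell N).sum_eq k).trans hx.2.symm)
  exact funext fun l => (heq l (mem_univ l)).symm

/-- Labellings of the lattice simplex that satisfy Sperner's boundary condition and use the label
`0` on the facet `x (-1) = 0` only at the vertex `(N, 0, …, 0)`. The latter leaves a single way into
the simplex through that facet. -/
structure IsLabelling (N : ℤ) (ℓ : (Fin n → ℤ) → Fin n) : Prop where
  pos : ∀ x ∈ latticeSimplex (Fin n) N, 0 < x (ℓ x)
  eq_single : ∀ x ∈ latticeSimplex (Fin n) N, x (-1) = 0 → ℓ x = 0 → x = Pi.single 0 N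

-- Shifting the given labels away from the facet `x (-1) = 0` leaves it free for the labels that the
-- second condition of `IsLabelling` demands.
theorem exists_isLabelling (hN : 0 ≤ N) {ℓ : Fin n → (Fin n → ℤ) → Fin n}
    (hℓ : ∀ i, ∀ x ∈ latticeSimplex (Fin n) N, 0 < x (ℓ i x)) :
    ∃ ℓ', IsLabelling (N + 1) ℓ' ∧
      ∀ x, x (-1) ≠ 0 → ℓ' x = ℓ (owner x) (x - Pi.single (-1) 1) := by
  have hfacet : ∀ x ∈ latticeSimplex (Fin n) (N + 1),
      ∃ k, 0 < x k ∧ (k = 0 → x = Pi.single 0 (N + 1)) :=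
    fun x hx => exists_pos_and_imp_eq_single hx (by lia) 0
  choose! c hc using hfacet
  refine ⟨fun x => if x (-1) = 0 then c x else ℓ (owner x) (x - Pi.single (-1) 1),
    ⟨fun x hx => ?_, fun x hx hlast h => ?_⟩, fun x hlast => if_neg hlast⟩
  · split_ifs with hlast
    · exact (hc x hx).1
    have hmem := sub_single_mem_latticeSimplex hx ((hx.1 _).lt_of_ne' hlast)
    have hsingle : (0 : Fin n → ℤ) ≤ Pi.single (-1) 1 := Pi.single_nonneg.mpr zero_le_one
    exact (hℓ (owner x) _ hmem).trans_le (sub_le_self _ (hsingle _))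
  · rw [if_pos hlast] at h
    exact (hc x hx).2 h

/-- The facet of `v` opposite to the `i`-th vertex carries all labels except possibly `-1`. -/
def IsDoor (ℓ : (Fin n → ℤ) → Fin n) (v : Fin n → Fin n → ℤ) (i : Fin n) : Prop :=
  ∀ k ≠ -1, ∃ j ≠ i, ℓ (v j) = k

variable {ℓ : (Fin n → ℤ) → Fin n} {i : Fin n}

theorem IsDoor.isDoor_pivot (h : IsDoor ℓ v i) : IsDoor ℓ (pivot v i) i := by
  intro k hk
  obtain ⟨j, hj, hjk⟩ := h k hk
  exact ⟨j, hj, by rwa [pivot_of_ne v hj]⟩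

/-- The doors of all cells in the lattice simplex; a door shared by two cells occurs twice. -/
noncomputable def doors (N : ℤ) (ℓ : (Fin n → ℤ) → Fin n) :
    Finset ((Fin n → Fin n → ℤ) × Fin n) :=
  open Classical in
  {p ∈ (finite_setOf_isCell_nonneg N).toFinset ×ˢ univ | IsDoor ℓ p.1 p.2}

theorem mem_doors {p : (Fin n → Fin n → ℤ) × Fin n} :
    p ∈ doors N ℓ ↔ (IsCell N p.1 ∧ 0 ≤ p.1) ∧ IsDoor ℓ p.1 p.2 := by
  simp [doors]

variable [Nontrivial (Fin n)]

theorem isDoor_cornerCell (hN : 0 ≤ N) (hℓ : IsLabelling (N + 1) ℓ) :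
    IsDoor ℓ (cornerCell N) (-1) := by
  refine fun k hk => ⟨k, hk, ?_⟩
  have hmem := (isCell_cornerCell N).mem_latticeSimplex (cornerCell_nonneg hN) k
  have hlast : cornerCell N k (-1) = 0 := by simp [cornerCell, hk.symm]
  by_contra hne
  have hzero : ℓ (cornerCell N k) = 0 := by
    by_contra h
    exact (hℓ.pos _ hmem).ne' (cornerCell_apply_of_ne N h hne)
  have hk0 : k ≠ 0 := fun h => hne (hzero.trans h.symm)
  simpa [cornerCell, hk0] using congrFun (hℓ.eq_single _ hmem hlast hzero) k

theorem IsDoor.eq_cornerCell (hℓ : IsLabelling (N + 1) ℓ) (hv : IsCell (N + 1) v)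
    (hnonneg : 0 ≤ v) (hi : IsDoor ℓ v i) (hpivot : ¬ 0 ≤ pivot v i) :
    v = cornerCell N ∧ i = -1 := by
  obtain ⟨k, hk⟩ := exists_pivot_neg hnonneg hpivot
  have hmem := hv.mem_latticeSimplex hnonneg
  have hzero : ∀ j ≠ i, v j k = 0 := fun j => hv.eq_zero_of_pivot_neg hnonneg hk
  obtain rfl : k = -1 := by
    by_contra hne
    obtain ⟨j, hj, rfl⟩ := hi k hne
    exact (hℓ.pos _ (hmem j)).ne' (hzero j hj)
  choose! f hf hfℓ using hi
  have hzero_ne : (0 : Fin n) ≠ -1 := by simp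
  have hf0 : v (f 0) = Pi.single 0 (N + 1) :=
    hℓ.eq_single _ (hmem _) (hzero _ (hf 0 hzero_ne)) (hfℓ 0 hzero_ne)
  have hle : ∀ j, N ≤ v j 0 := fun j => by
    simpa [hf0] using hv.apply_le_apply_add_one (f 0) j 0
  have hcorner : ∀ j k, k ≠ 0 → 0 < v j k → v j = cornerCell N k := fun j k =>
    eq_cornerCell_of_le_apply_zero (hmem j) (hle j)
  have hvf : ∀ k ≠ -1, v (f k) = cornerCell N k := by
    intro k hk
    obtain rfl | hk0 := eq_or_ne k 0
    · rw [hf0, cornerCell_zero]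
    · refine hcorner _ k hk0 ?_
      simpa only [hfℓ k hk] using hℓ.pos _ (hmem (f k))
  have hfk : ∀ k ≠ -1, f k = k := by
    intro k hk
    rw [← hv.owner_eq (f k), hvf k hk, (isCell_cornerCell N).owner_eq]
  obtain rfl : i = -1 := by
    by_contra hne
    exact hf i hne (hfk i hne)
  refine ⟨funext fun j => ?_, rfl⟩
  obtain rfl | hj := eq_or_ne j (-1)
  · refine hcorner _ _ hzero_ne.symm ?_
    simpa [hzero] using hk
  · rw [← hvf j hj, hfk j hj]

-- Pivoting pairs off all doors but the one on the boundary.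
theorem IsLabelling.odd_card_doors (hN : 0 ≤ N) (hℓ : IsLabelling (N + 1) ℓ) :
    Odd #(doors (N + 1) ℓ) := by
  classical
  let corner : (Fin n → Fin n → ℤ) × Fin n := (cornerCell N, -1)
  have hcorner : corner ∈ doors (N + 1) ℓ :=
    mem_doors.mpr ⟨⟨isCell_cornerCell N, cornerCell_nonneg hN⟩, isDoor_cornerCell hN hℓ⟩
  have hpaired : Even #((doors (N + 1) ℓ).erase corner) := by
    rw [← ZMod.natCast_eq_zero_iff_even, card_eq_sum_ones, Nat.cast_sum]
    refine sum_involution (fun p _ => (pivot p.1 p.2, p.2)) (fun _ _ => by decide) ?_ ?_ ?_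
    · rintro ⟨v, i⟩ hmem - heq
      obtain ⟨⟨hv, -⟩, -⟩ := mem_doors.mp (mem_of_mem_erase hmem)
      exact hv.pivot_ne i (congrArg Prod.fst heq)
    · rintro ⟨v, i⟩ hmem
      obtain ⟨⟨hv, hnonneg⟩, hi⟩ := mem_doors.mp (mem_of_mem_erase hmem)
      refine mem_erase.mpr ⟨fun heq => ?_, mem_doors.mpr ⟨⟨hv.isCell_pivot i, ?_⟩, hi.isDoor_pivot⟩⟩
      · obtain ⟨hcell, rfl⟩ := Prod.mk.inj heq
        refine not_pivot_cornerCell_nonneg N (n := n) ?_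
        rwa [← hcell, pivot_pivot]
      · by_contra hpivot
        obtain ⟨rfl, rfl⟩ := hi.eq_cornerCell hℓ hv hnonneg hpivot
        exact ne_of_mem_erase hmem rfl
    · rintro ⟨v, i⟩ -
      simp [pivot_pivot]
  rw [← card_erase_add_one hcorner]
  exact hpaired.add_one

/-- **Sperner's lemma** for Kuhn's triangulation. -/
theorem IsLabelling.exists_isCell_surjective (hN : 0 ≤ N) (hℓ : IsLabelling (N + 1) ℓ) :
    ∃ v, IsCell (N + 1) v ∧ 0 ≤ v ∧ Function.Surjective fun j => ℓ (v j) := by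
  classical
  by_contra! h
  refine Nat.not_even_iff_odd.mpr (hℓ.odd_card_doors hN) ?_
  rw [doors, card_filter, sum_product]
  refine even_sum _ fun v hv => ?_
  obtain ⟨hv, hnonneg⟩ := (finite_setOf_isCell_nonneg (N + 1)).mem_toFinset.mp hv
  rw [← card_filter]
  exact even_card_of_not_surjective (h v hv hnonneg) fun i => mem_filter_univ i

theorem exists_bijective_label_of_nontrivial (hN : 0 ≤ N) {ℓ : Fin n → (Fin n → ℤ) → Fin n}
    (hℓ : ∀ i, ∀ x ∈ latticeSimplex (Fin n) N, 0 < x (ℓ i x)) :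
    ∃ w : Fin n → Fin n → ℤ, (∀ i, w i ∈ latticeSimplex (Fin n) N) ∧
      (∀ i j k, w i k ≤ w j k + 1) ∧ Function.Bijective fun i => ℓ i (w i) := by
  obtain ⟨ℓ', hℓ', heq⟩ := exists_isLabelling hN hℓ
  obtain ⟨v, hv, hnonneg, hsurj⟩ := hℓ'.exists_isCell_surjective hN
  have hmem := hv.mem_latticeSimplex hnonneg
  have hlast : ∀ i, 0 < v i (-1) := by
    obtain ⟨j, hj⟩ := hsurj (-1)
    have hvj : 0 < v j (-1) := by simpa only [hj] using hℓ'.pos _ (hmem j)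
    have hpos := hℓ (owner (v j)) _ (sub_single_mem_latticeSimplex (hmem j) hvj)
    simp only [← heq _ hvj.ne', hj, Pi.sub_apply, Pi.single_eq_same] at hpos
    intro i
    linarith [hv.apply_le_apply_add_one j i (-1)]
  refine ⟨fun i => v i - Pi.single (-1) 1,
    fun i => sub_single_mem_latticeSimplex (hmem i) (hlast i), fun i j k => ?_,
    Function.Surjective.bijective_of_finite ?_⟩
  · simp only [Pi.sub_apply]
    linarith [hv.apply_le_apply_add_one i j k]
  · convert hsurj with i
    rw [heq _ (hlast i).ne', hv.owner_eq]

end KuhnTriangulation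

section KKM

variable {n : ℕ} [NeZero n]

/-- The **rainbow Sperner lemma**. -/
theorem exists_bijective_label {N : ℤ} (hN : 0 ≤ N) {ℓ : Fin n → (Fin n → ℤ) → Fin n}
    (hℓ : ∀ i, ∀ x ∈ latticeSimplex (Fin n) N, 0 < x (ℓ i x)) :
    ∃ w : Fin n → Fin n → ℤ, (∀ i, w i ∈ latticeSimplex (Fin n) N) ∧
      (∀ i j k, w i k ≤ w j k + 1) ∧ Function.Bijective fun i => ℓ i (w i) := by
  obtain _ | _ := subsingleton_or_nontrivial (Fin n)
  · refine ⟨fun _ => Pi.single 0 N, fun _ => ⟨Pi.single_nonneg.mpr hN, by simp⟩, fun _ _ _ => ?_,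
      Function.injective_of_subsingleton _, fun k => ⟨k, Subsingleton.elim _ _⟩⟩
    exact le_add_of_nonneg_right zero_le_one
  · exact exists_bijective_label_of_nontrivial hN hℓ

theorem div_mem_stdSimplex {α : Type*} [Fintype α] {x : α → ℤ} {N : ℤ}
    (hx : x ∈ latticeSimplex α N) (hN : 0 < N) :
    (fun k => (x k / N : ℝ)) ∈ stdSimplex ℝ α := by
  have hN' : (0 : ℝ) < N := Int.cast_pos.mpr hN
  refine ⟨fun k => div_nonneg (Int.cast_nonneg (hx.1 k)) hN'.le, ?_⟩
  rw [← sum_div, ← Int.cast_sum, hx.2, div_self hN'.ne']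

theorem exists_perm_dist_le_and_mem {A : Fin n → Fin n → Set (Fin n → ℝ)}
    (hA : ∀ i, ∀ x ∈ stdSimplex ℝ (Fin n), ∃ k, 0 < x k ∧ x ∈ A i k) {N : ℤ} (hN : 0 < N) :
    ∃ (x : Fin n → Fin n → ℝ) (π : Equiv.Perm (Fin n)), (∀ i, x i ∈ stdSimplex ℝ (Fin n)) ∧
      (∀ i j, dist (x i) (x j) ≤ 1 / N) ∧ ∀ i, x i ∈ A i (π i) := by
  have hN' : (0 : ℝ) < N := Int.cast_pos.mpr hN
  have hlabel : ∀ i, ∀ x ∈ latticeSimplex (Fin n) N,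
      ∃ k, 0 < x k ∧ (fun l => (x l / N : ℝ)) ∈ A i k := by
    intro i x hx
    obtain ⟨k, hk, hxk⟩ := hA i _ (div_mem_stdSimplex hx hN)
    exact ⟨k, Int.cast_pos.mp ((div_pos_iff_of_pos_right hN').mp hk), hxk⟩
  choose! ℓ hpos hmem using hlabel
  obtain ⟨w, hw, hclose, hbij⟩ := exists_bijective_label hN.le hpos
  refine ⟨fun i k => w i k / N, Equiv.ofBijective _ hbij, fun i => div_mem_stdSimplex (hw i) hN,
    fun i j => (dist_pi_le_iff (by positivity)).mpr fun k => ?_, fun i => hmem i _ (hw i)⟩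
  have habs : |(w i k : ℝ) - w j k| ≤ 1 := by
    exact_mod_cast abs_sub_le_iff.mpr ⟨by linarith [hclose i j k], by linarith [hclose j i k]⟩
  rw [Real.dist_eq, ← sub_div, abs_div, abs_of_pos hN']
  gcongr

open Filter Topology in
/-- The **colourful KKM theorem** of Gale. -/
theorem exists_perm_forall_mem_of_isClosed {A : Fin n → Fin n → Set (Fin n → ℝ)}
    (hclosed : ∀ i k, IsClosed (A i k))
    (hA : ∀ i, ∀ x ∈ stdSimplex ℝ (Fin n), ∃ k, 0 < x k ∧ x ∈ A i k) :
    ∃ x ∈ stdSimplex ℝ (Fin n), ∃ π : Equiv.Perm (Fin n), ∀ i, x ∈ A i (π i) := by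
  choose x π hx hdist hmem using fun N : ℕ =>
    exists_perm_dist_le_and_mem hA (Int.natCast_succ_pos N)
  obtain ⟨x₀, hx₀, φ, hφ, hlim⟩ :=
    (isCompact_stdSimplex ℝ (Fin n)).tendsto_subseq fun N => hx N 0
  have hlim' : ∀ i, Tendsto (fun N => x (φ N) i) atTop (𝓝 x₀) := by
    intro i
    refine (tendsto_iff_of_dist ?_).mp hlim
    refine squeeze_zero (fun _ => dist_nonneg) (fun N => hdist (φ N) 0 i) ?_
    simpa [Function.comp_def] using
      (tendsto_one_div_add_atTop_nhds_zero_nat (𝕜 := ℝ)).comp hφ.tendsto_atTop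
  obtain ⟨σ, hσ⟩ : ∃ σ, ∃ᶠ N in atTop, π (φ N) = σ :=
    frequently_exists.mp (.of_forall fun N => ⟨_, rfl⟩)
  refine ⟨x₀, hx₀, σ, fun i => (hclosed i (σ i)).mem_of_frequently_of_tendsto ?_ (hlim' i)⟩
  refine hσ.mono fun N hN => ?_
  simpa only [hN] using hmem (φ N) i

end KKM

section Measure

open MeasureTheory

variable (μ : Measure ℝ) [IsLocallyFiniteMeasure μ] [NullSingletonClass μ]

theorem measure_Icc_eq_ofReal_intervalIntegral (s t : ℝ) :
    μ (Set.Icc s t) = ENNReal.ofReal (∫ _ in s..t, (1 : ℝ) ∂μ) := by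
  obtain h | h := le_total s t
  · rw [intervalIntegral.integral_of_le h, setIntegral_const, smul_eq_mul, mul_one,
      ofReal_measureReal measure_Ioc_lt_top.ne, measure_congr Ioc_ae_eq_Icc]
  · have hnull : μ (Set.Icc s t) = 0 :=
      (Set.subsingleton_Icc_of_ge h).measure_zero μ
    rw [hnull, eq_comm, ENNReal.ofReal_eq_zero, intervalIntegral.integral_of_ge h, neg_nonpos]
    exact integral_nonneg fun _ => zero_le_one

theorem continuous_measure_Icc : Continuous fun p : ℝ × ℝ => μ (Set.Icc p.1 p.2) := by
  have hint : ∀ s t, IntervalIntegrable (fun _ => (1 : ℝ)) μ s t := fun _ _ =>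
    intervalIntegrable_const
  have hprim := intervalIntegral.continuous_primitive hint 0
  have hsub : ∀ p : ℝ × ℝ, μ (Set.Icc p.1 p.2) =
      ENNReal.ofReal ((∫ _ in 0..p.2, (1 : ℝ) ∂μ) - ∫ _ in 0..p.1, (1 : ℝ) ∂μ) := fun p => by
    rw [measure_Icc_eq_ofReal_intervalIntegral μ,
      intervalIntegral.integral_interval_sub_left (hint 0 _) (hint 0 _)]
  simp only [hsub]
  exact ENNReal.continuous_ofReal.comp
    ((hprim.comp continuous_snd).sub (hprim.comp continuous_fst))

end Measure

section Cuts

theorem partialSum_last {M : Type*} [AddCommMonoid M] {n : ℕ} (x : Fin n → M) :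
    Fin.partialSum x (Fin.last n) = ∑ k, x k := by
  rw [Fin.partialSum, Fin.val_last, List.take_of_length_le (List.length_ofFn).le, List.sum_ofFn]

theorem monotone_partialSum {M : Type*} [AddMonoid M] [Preorder M] [AddLeftMono M] {n : ℕ}
    {x : Fin n → M} (hx : 0 ≤ x) : Monotone (Fin.partialSum x) := by
  refine Fin.monotone_iff_le_succ.mpr fun k => ?_
  rw [Fin.partialSum_succ]
  exact le_add_of_nonneg_right (hx k)

theorem continuous_partialSum {M : Type*} [AddMonoid M] [TopologicalSpace M] [ContinuousAdd M]
    {n : ℕ} (j : Fin (n + 1)) : Continuous fun x : Fin n → M => Fin.partialSum x j := by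
  induction j using Fin.induction with
  | zero => simpa only [Fin.partialSum_zero] using continuous_const
  | succ j ih =>
    simp only [Fin.partialSum_succ]
    fun_prop

/-- The `k`-th piece of the cake when the pieces have the lengths `x`. -/
def piece {n : ℕ} (x : Fin n → ℝ) (k : Fin n) : Set ℝ :=
  Set.Icc (Fin.partialSum x k.castSucc) (Fin.partialSum x k.succ)

open MeasureTheory

variable {n : ℕ} (μ : Measure ℝ)

theorem continuous_measure_piece [IsLocallyFiniteMeasure μ] [NullSingletonClass μ] (k : Fin n) :
    Continuous fun x => μ (piece x k) :=
  (continuous_measure_Icc μ).comp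
    ((continuous_partialSum k.castSucc).prodMk (continuous_partialSum k.succ))

/-- The divisions of the cake, given by the lengths of the pieces, of which an agent with
valuation `μ` likes the `k`-th piece best. -/
def preferenceSet (k : Fin n) : Set (Fin n → ℝ) := {x | ∀ l, μ (piece x l) ≤ μ (piece x k)}

theorem isClosed_preferenceSet [IsLocallyFiniteMeasure μ] [NullSingletonClass μ] (k : Fin n) :
    IsClosed (preferenceSet μ k) := by
  simp only [preferenceSet, Set.ofPred_forall]
  exact isClosed_iInter fun l =>
    isClosed_le (continuous_measure_piece μ l) (continuous_measure_piece μ k)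

theorem exists_pos_and_mem_preferenceSet [NullSingletonClass μ] {x : Fin n → ℝ}
    (hx : x ∈ stdSimplex ℝ (Fin n)) : ∃ k, 0 < x k ∧ x ∈ preferenceSet μ k := by
  obtain ⟨k₀, -, hk₀⟩ : ∃ k ∈ Finset.univ, 0 < x k :=
    Finset.exists_lt_of_sum_lt (f := fun _ => 0) (by simp [hx.2])
  obtain ⟨k, hk, hmax⟩ := ({k | 0 < x k} : Finset (Fin n)).exists_max_image
    (fun k => μ (piece x k)) ⟨k₀, by simpa using hk₀⟩
  refine ⟨k, by simpa using hk, fun l => ?_⟩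
  obtain hl | hl := (hx.1 l).eq_or_lt
  · simp [piece, Fin.partialSum_succ, ← hl]
  · exact hmax l (by simpa using hl)

end Cuts

theorem uniformVal_le_uniformVal {a b s t s' t' : ℝ} (hab : a ≤ b)
    (h : MeasureTheory.volume.restrict (Set.Icc a b) (Set.Icc s t) ≤
      MeasureTheory.volume.restrict (Set.Icc a b) (Set.Icc s' t')) :
    uniformVal a b s t ≤ uniformVal a b s' t' := by
  simp only [MeasureTheory.Measure.restrict_apply measurableSet_Icc] at h
  refine div_le_div_of_nonneg_right (ENNReal.toReal_mono ?_ h) (sub_nonneg.mpr hab)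
  exact MeasureTheory.measure_inter_ne_top_of_left_ne_top (by simp)

end CakeCutting

open MeasureTheory CakeCutting in
theorem contiguous_one_fourth_envy_free_exists_uniform_single_interval_general (n : ℕ) (hn : 0 < n)
    (μ : Fin n → Measure ℝ) [∀ i, IsLocallyFiniteMeasure (μ i)]
    [∀ i, NullSingletonClass (μ i)] :
    ∃ (y : Fin (n + 1) → ℝ) (π : Equiv.Perm (Fin n)),
      Monotone y ∧ y 0 = 0 ∧ y (Fin.last n) = 1 ∧
      ∀ i j : Fin n,
        μ i (Set.Icc (y (π j).castSucc) (y (π j).succ)) ≤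
          μ i (Set.Icc (y (π i).castSucc) (y (π i).succ)) := by
  have : NeZero n := ⟨hn.ne'⟩
  obtain ⟨x, hx, π, hπ⟩ :=
    exists_perm_forall_mem_of_isClosed (fun i k => isClosed_preferenceSet (μ i) k)
    fun i _ => exists_pos_and_mem_preferenceSet (μ i)
  exact ⟨Fin.partialSum x, π, monotone_partialSum hx.1, Fin.partialSum_zero x,
    (partialSum_last x).trans hx.2, fun i j => hπ i (π j)⟩

/-- For `n` agents each of whom has a uniform valuation over a single
subinterval `[a i, b i] ⊆ [0,1]`, there exists a contiguous `1/4`-envy-free allocation. -/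
theorem contiguous_one_fourth_envy_free_exists_uniform_single_interval
    (n : ℕ) (hn : 0 < n) (a b : Fin n → ℝ)
    (ha : ∀ i, 0 ≤ a i) (hab : ∀ i, a i < b i) (hb : ∀ i, b i ≤ 1) :
    ∃ (y : Fin (n + 1) → ℝ) (π : Equiv.Perm (Fin n)),
      Monotone y ∧ y 0 = 0 ∧ y (Fin.last n) = 1 ∧
      ∀ i j : Fin n,
        uniformVal (a i) (b i) (y (π i).castSucc) (y (π i).succ) ≥
          uniformVal (a i) (b i) (y (π j).castSucc) (y (π j).succ) - 1 / 4 := by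
  obtain ⟨y, π, hy, hy0, hy1, henvy⟩ :=
    contiguous_one_fourth_envy_free_exists_uniform_single_interval_general n hn
      fun i => MeasureTheory.volume.restrict (Set.Icc (a i) (b i))
  exact ⟨y, π, hy, hy0, hy1, fun i j => (sub_le_self _ (by norm_num)).trans
    (CakeCutting.uniformVal_le_uniformVal (hab i).le (henvy i j))⟩
end

section
/- Let v_1,…,v_n be normalized piecewise constant valuations on [0,1] such that all breakpoints of the densities and all values taken by the densities are rational numbers. Then there exists a contiguous exactly envy-free allocation in which all of the cut points y_1, …, y_{n−1} are rational. -/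
/-!
Parametrize divisions into `d + 1` pieces by the points of a grid of mesh `1 / p` in a `d`-cube.
In Kuhn's triangulation of the grid, let the coordinate sum modulo `d + 1` assign each vertex to
one of the `d + 1` agents, so that the vertices of every simplex belong to distinct agents. Label
each vertex by the piece its owner likes best. An empty piece is never the best one, which is
Sperner's boundary condition; hence the number of fully labelled simplices is odd, and such a
simplex is an envy-free division up to moving each cut point by `1 / p`. Compactness gives an
exactly envy-free division for continuous valuations.

To make the cut points lie in the subfield `K` generated by the data, apply to them a `K`-linear
map `φ : ℝ → K` with `φ 1 = 1`. Such maps exist arbitrarily close to the identity at any finite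
set of reals, so `φ` may be taken monotone on the cut points, the breakpoints and the values of
the pieces. On each step a cumulative valuation is an affine function with coefficients in `K` and
so commutes with `φ`: the new values of the pieces are the images of the old ones under `φ`, in
the same order.
-/

open Equiv Filter Topology

/-! ### Doors of a labelled simplex -/

section Door

variable {d : ℕ}

/-- A facet labelled by `m` is a door if its `d` vertices carry all the labels `1, …, d`. Fully
labelled simplices are counted through the doors among their facets. -/
def IsDoor (m : Fin d → Fin (d + 1)) : Prop := ∀ c : Fin d, ∃ i, m i = c.succ

lemma IsDoor.injective {m : Fin d → Fin (d + 1)} (hm : IsDoor m) : Function.Injective m := by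
  choose s hs using hm
  have hs_inj : Function.Injective s := fun a b hab =>
    Fin.succ_injective d <| by rw [← hs a, ← hs b, hab]
  have hs_surj := Finite.surjective_of_injective hs_inj
  refine hs_surj.forall₂.mpr fun a b hab => ?_
  rw [hs, hs] at hab
  rw [Fin.succ_injective d hab]

variable {l : Fin (d + 1) → Fin (d + 1)} {k k' : Fin (d + 1)}

lemma isDoor_comp_succAbove_iff :
    IsDoor (l ∘ k.succAbove) ↔ ∀ c : Fin d, ∃ i ≠ k, l i = c.succ := by
  refine forall_congr' fun c => ⟨?_, ?_⟩
  · rintro ⟨i, hi⟩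
    exact ⟨_, k.succAbove_ne i, hi⟩
  · rintro ⟨i, hik, hi⟩
    obtain ⟨j, rfl⟩ := Fin.exists_succAbove_eq hik
    exact ⟨j, hi⟩

lemma IsDoor.injOn_compl (h : IsDoor (l ∘ k.succAbove)) : Set.InjOn l {k}ᶜ := by
  intro i hi j hj hij
  obtain ⟨i, rfl⟩ := Fin.exists_succAbove_eq hi
  obtain ⟨j, rfl⟩ := Fin.exists_succAbove_eq hj
  rw [h.injective hij]

lemma isDoor_comp_succAbove_iff_eq_zero (hl : Function.Bijective l) :
    IsDoor (l ∘ k.succAbove) ↔ l k = 0 := by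
  rw [isDoor_comp_succAbove_iff]
  constructor
  · intro h
    by_contra hk
    obtain ⟨c, hc⟩ := Fin.exists_succ_eq_of_ne_zero hk
    obtain ⟨i, hik, hi⟩ := h c
    exact hik (hl.injective (hi.trans hc))
  · intro hk c
    obtain ⟨i, hi⟩ := hl.surjective c.succ
    refine ⟨i, ?_, hi⟩
    rintro rfl
    exact Fin.succ_ne_zero c (hi.symm.trans hk)

lemma IsDoor.exists_ne_of_not_surjective (h : IsDoor (l ∘ k.succAbove))
    (hl : ¬ Function.Surjective l) : ∃ k' ≠ k, l k' = l k := by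
  rw [isDoor_comp_succAbove_iff] at h
  have hk : l k ≠ 0 := fun hk => hl <| Fin.cases ⟨k, hk⟩ fun c => (h c).imp fun _ hi => hi.2
  obtain ⟨c, hc⟩ := Fin.exists_succ_eq_of_ne_zero hk
  rw [← hc]
  exact h c

lemma IsDoor.of_eq (h : IsDoor (l ∘ k.succAbove)) (hne : k' ≠ k) (heq : l k' = l k) :
    IsDoor (l ∘ k'.succAbove) := by
  rw [isDoor_comp_succAbove_iff] at h ⊢
  intro c
  obtain ⟨i, -, hi⟩ := h c
  by_cases hik : i = k'
  · exact ⟨k, hne.symm, by rw [← heq, ← hik, hi]⟩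
  · exact ⟨i, hik, hi⟩

open Classical in
lemma sum_isDoor_comp_succAbove (l : Fin (d + 1) → Fin (d + 1)) :
    (∑ k : Fin (d + 1), if IsDoor (l ∘ k.succAbove) then (1 : ZMod 2) else 0) =
      if Function.Surjective l then 1 else 0 := by
  by_cases hl : Function.Surjective l
  · have hbij : Function.Bijective l := Finite.surjective_iff_bijective.mp hl
    obtain ⟨k, hk⟩ := hl 0
    have hzero : ∀ k', l k' = 0 ↔ k' = k := fun k' => by rw [← hk, hbij.injective.eq_iff]
    simp [isDoor_comp_succAbove_iff_eq_zero hbij, hzero, hl]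
  · choose twin htwin_ne htwin_eq using fun (k : Fin (d + 1)) (h : IsDoor (l ∘ k.succAbove)) =>
      h.exists_ne_of_not_surjective hl
    have htwin (k : Fin (d + 1)) (h : IsDoor (l ∘ k.succAbove)) :
        IsDoor (l ∘ (twin k h).succAbove) :=
      h.of_eq (htwin_ne k h) (htwin_eq k h)
    rw [if_neg hl, ← Finset.sum_filter]
    refine Finset.sum_involution (fun k hk => twin k (Finset.mem_filter.mp hk).2)
      (fun _ _ => CharTwo.add_self_eq_zero 1) (fun k _ _ => htwin_ne k _)
      (fun _ _ => Finset.mem_filter.mpr ⟨Finset.mem_univ _, htwin _ _⟩) fun k hk => ?_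
    have h := (Finset.mem_filter.mp hk).2
    exact (htwin k h).injOn_compl (htwin_ne _ _) (htwin_ne k h).symm
      ((htwin_eq _ _).trans (htwin_eq k h))

end Door

/-! ### Sperner's lemma for Kuhn's triangulation -/

section Kuhn

variable {d p : ℕ}

/-- The `k`-th vertex of the simplex of Kuhn's triangulation given by the permutation `σ` in the
unit cube with lowest corner `v`. Vertex `0` is the highest corner `v + (1, …, 1)`, and passing from
vertex `k` to vertex `k + 1` lowers coordinate `σ k` by one. -/
def kuhnVertex (v : Fin d → ℕ) (σ : Perm (Fin d)) (k : Fin (d + 1)) : Fin d → ℕ :=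
  fun j => v j + if k ≤ (σ.symm j).castSucc then 1 else 0

lemma kuhnVertex_le_kuhnVertex_add_one (v : Fin d → ℕ) (σ : Perm (Fin d))
    (k l : Fin (d + 1)) (j : Fin d) : kuhnVertex v σ k j ≤ kuhnVertex v σ l j + 1 := by
  unfold kuhnVertex
  split_ifs <;> omega

lemma sum_kuhnVertex_add (v : Fin d → ℕ) (σ : Perm (Fin d)) (k : Fin (d + 1)) :
    ∑ j, kuhnVertex v σ k j + k = ∑ j, v j + d := by
  have hcard : (Finset.range d).filter (fun i => (k : ℕ) ≤ i) = Finset.Ico (k : ℕ) d := by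
    ext i
    simp only [Finset.mem_filter, Finset.mem_range, Finset.mem_Ico, and_comm]
  simp only [kuhnVertex, Finset.sum_add_distrib]
  rw [σ.symm.sum_comp (fun i => if k ≤ i.castSucc then 1 else 0)]
  simp only [Fin.le_def, Fin.val_castSucc]
  rw [Fin.sum_univ_eq_sum_range (fun i => if (k : ℕ) ≤ i then 1 else 0), ← Finset.card_filter,
    hcard, Nat.card_Ico]
  omega

lemma injective_ofNat_sum_kuhnVertex (v : Fin d → ℕ) (σ : Perm (Fin d)) :
    Function.Injective fun k => Fin.ofNat (d + 1) (∑ j, kuhnVertex v σ k j) := by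
  intro k l h
  have hsum : ∑ j, kuhnVertex v σ k j ≡ ∑ j, kuhnVertex v σ l j [MOD (d + 1)] :=
    congrArg Fin.val h
  have hadd : ∑ j, kuhnVertex v σ k j + k ≡ ∑ j, kuhnVertex v σ l j + l [MOD (d + 1)] := by
    rw [sum_kuhnVertex_add, sum_kuhnVertex_add]
  exact Fin.ext ((hsum.add_left_cancel hadd).eq_of_lt_of_lt k.2 l.2)

lemma kuhnVertex_mul_swap (v : Fin (d + 1) → ℕ) (σ : Perm (Fin (d + 1))) {k : Fin d}
    {i : Fin (d + 2)} (hi : i ≠ k.castSucc.succ) :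
    kuhnVertex v (σ * swap k.castSucc k.succ) i = kuhnVertex v σ i := by
  funext j
  have hsymm : (σ * swap k.castSucc k.succ).symm j = swap k.castSucc k.succ (σ.symm j) := by
    simp [Equiv.symm_apply_eq]
  unfold kuhnVertex
  rw [hsymm, swap_apply_def]
  congr 2
  grind

lemma kuhnVertex_castSucc (v : Fin (d + 1) → ℕ) (σ : Perm (Fin (d + 1))) (k : Fin (d + 1)) :
    kuhnVertex v σ k.castSucc =
      kuhnVertex (Function.update v (σ (Fin.last d)) (v (σ (Fin.last d)) + 1))
        (σ * (finRotate (d + 1))⁻¹) k.succ := by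
  funext j
  obtain ⟨i, rfl⟩ := σ.surjective j
  have hsymm : (σ * (finRotate (d + 1))⁻¹).symm (σ i) = finRotate (d + 1) i := by
    simp [Equiv.symm_apply_eq]
  unfold kuhnVertex
  rw [hsymm, Equiv.symm_apply_apply]
  induction i using Fin.lastCases with
  | last => simp [Fin.le_last]
  | cast i =>
    rw [Function.update_of_ne (σ.injective.ne (Fin.castSucc_lt_last i).ne)]
    congr 2
    simp [Fin.le_def]

lemma kuhnVertex_succ_apply_zero (v : Fin (d + 1) → ℕ) (σ : Perm (Fin (d + 1)))
    (k : Fin (d + 1)) : kuhnVertex v σ k.succ (σ 0) = v (σ 0) := by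
  simp [kuhnVertex]

lemma kuhnVertex_cons_decomposeFin (v : Fin d → ℕ) (σ : Perm (Fin d)) (k : Fin (d + 1)) :
    kuhnVertex (Fin.cons 0 v : Fin (d + 1) → ℕ) (Perm.decomposeFin.symm (0, σ)) k.succ =
      Fin.cons 0 (kuhnVertex v σ k) := by
  have hzero : (Perm.decomposeFin.symm (0, σ)).symm 0 = 0 := by
    simp [Equiv.symm_apply_eq]
  have hsucc (j : Fin d) : (Perm.decomposeFin.symm (0, σ)).symm j.succ = (σ.symm j).succ := by
    simp [Equiv.symm_apply_eq]
  funext j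
  induction j using Fin.cases with
  | zero => simp [kuhnVertex, hzero]
  | succ j => simp [kuhnVertex, hsucc, Fin.le_def]

open Classical in
/-- Whether the facet opposite to vertex `k` of the Kuhn simplex `(v, σ)` is a door, as a number
modulo `2`, so that facets counted twice cancel. -/
noncomputable def doorIndicator (L : (Fin d → ℕ) → Fin (d + 1)) (v : Fin d → ℕ)
    (σ : Perm (Fin d)) (k : Fin (d + 1)) : ZMod 2 :=
  if IsDoor ((L ∘ kuhnVertex v σ) ∘ k.succAbove) then 1 else 0

lemma doorIndicator_congr (L : (Fin d → ℕ) → Fin (d + 1)) {v v' : Fin d → ℕ} {σ σ' : Perm (Fin d)}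
    {k k' : Fin (d + 1)}
    (h : ∀ i, kuhnVertex v σ (k.succAbove i) = kuhnVertex v' σ' (k'.succAbove i)) :
    doorIndicator L v σ k = doorIndicator L v' σ' k' := by
  classical
  refine if_congr ?_ rfl rfl
  simp only [IsDoor, Function.comp_apply, h]

open Classical in
lemma sum_doorIndicator (L : (Fin d → ℕ) → Fin (d + 1)) (v : Fin d → ℕ) (σ : Perm (Fin d)) :
    ∑ k, doorIndicator L v σ k = if Function.Surjective (L ∘ kuhnVertex v σ) then 1 else 0 :=
  sum_isDoor_comp_succAbove _

section Succ

variable (L : (Fin (d + 1) → ℕ) → Fin (d + 2))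

lemma doorIndicator_last (v : Fin (d + 1) → ℕ) (σ : Perm (Fin (d + 1))) :
    doorIndicator L v σ (Fin.last (d + 1)) =
      doorIndicator L (Function.update v (σ (Fin.last d)) (v (σ (Fin.last d)) + 1))
        (σ * (finRotate (d + 1))⁻¹) 0 :=
  doorIndicator_congr L fun i => by
    rw [Fin.succAbove_last, Fin.succAbove_zero, kuhnVertex_castSucc]

lemma sum_doorIndicator_castSucc_succ (v : Fin (d + 1) → ℕ) (k : Fin d) :
    ∑ σ, doorIndicator L v σ k.castSucc.succ = 0 := by
  have hswap (σ : Perm (Fin (d + 1))) :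
      doorIndicator L v (σ * swap k.castSucc k.succ) k.castSucc.succ =
        doorIndicator L v σ k.castSucc.succ :=
    doorIndicator_congr L fun i => kuhnVertex_mul_swap v σ (Fin.succAbove_ne _ i)
  refine Finset.sum_involution (fun σ _ => σ * swap k.castSucc k.succ)
    (fun σ _ => ?_) (fun σ _ _ h => ?_) (fun _ _ => Finset.mem_univ _) (fun σ _ => ?_)
  · rw [hswap, CharTwo.add_self_eq_zero]
  · rw [mul_eq_left, swap_eq_one_iff] at h
    exact Fin.castSucc_lt_succ.ne h
  · rw [mul_assoc, swap_mul_self, mul_one]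

lemma sum_sum_doorIndicator (v : Fin (d + 1) → ℕ) :
    ∑ σ, ∑ k, doorIndicator L v σ k =
      ∑ σ, (doorIndicator L v σ 0 +
        doorIndicator L (Function.update v (σ 0) (v (σ 0) + 1)) σ 0) := by
  have hlast : ∑ σ, doorIndicator L v σ (Fin.last (d + 1)) =
      ∑ σ, doorIndicator L (Function.update v (σ 0) (v (σ 0) + 1)) σ 0 := by
    rw [← Equiv.sum_comp (Equiv.mulRight (finRotate (d + 1))⁻¹) fun σ =>
      doorIndicator L (Function.update v (σ 0) (v (σ 0) + 1)) σ 0]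
    have hrot : (finRotate (d + 1))⁻¹ 0 = Fin.last d := by
      rw [Perm.inv_eq_iff_eq, finRotate_last]
    refine Finset.sum_congr rfl fun σ _ => ?_
    rw [doorIndicator_last, Equiv.coe_mulRight, Perm.mul_apply, hrot]
  rw [Finset.sum_comm, Fin.sum_univ_succ, Fin.sum_univ_castSucc,
    Finset.sum_eq_zero fun k _ => sum_doorIndicator_castSucc_succ L v k, zero_add, Fin.succ_last,
    hlast, Finset.sum_add_distrib]

end Succ

lemma sum_range_add_succ_of_charTwo {R : Type*} [Ring R] [CharP R 2] (g : ℕ → R) (p : ℕ) :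
    ∑ a ∈ Finset.range p, (g a + g (a + 1)) = g 0 + g p := by
  simp only [← CharTwo.sub_eq_add, Finset.sum_range_sub']

lemma sum_add_update_eq_sum_insertNth {R : Type*} [Ring R] [CharP R 2] (m : Fin (d + 1))
    (G : (Fin (d + 1) → ℕ) → R) :
    ∑ v : Fin (d + 1) → Fin p, (G (fun j => v j) +
        G (Function.update (fun j => (v j : ℕ)) m (v m + 1))) =
      ∑ w : Fin d → Fin p, (G (m.insertNth 0 fun j => (w j : ℕ)) +
        G (m.insertNth p fun j => (w j : ℕ))) := by
  have hval (a : Fin p) (w : Fin d → Fin p) :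
      (fun j => ((m.insertNth a w : Fin (d + 1) → Fin p) j : ℕ)) =
        m.insertNth (a : ℕ) fun j => (w j : ℕ) := by
    funext j
    induction j using Fin.succAboveCases m <;> simp
  rw [← (Fin.insertNthEquiv (fun _ => Fin p) m).sum_comp, Fintype.sum_prod_type_right]
  refine Finset.sum_congr rfl fun w _ => ?_
  rw [← sum_range_add_succ_of_charTwo fun a => G (m.insertNth a fun j => (w j : ℕ)),
    Finset.sum_range]
  refine Finset.sum_congr rfl fun a _ => ?_
  simp only [Fin.insertNthEquiv_apply, hval, Fin.insertNth_apply_same, Fin.update_insertNth]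

open Classical in
lemma sum_surjective_eq_sum_boundary (L : (Fin (d + 1) → ℕ) → Fin (d + 2)) :
    (∑ v : Fin (d + 1) → Fin p, ∑ σ : Perm (Fin (d + 1)),
      if Function.Surjective (L ∘ kuhnVertex (fun j => v j) σ) then (1 : ZMod 2) else 0) =
    ∑ σ : Perm (Fin (d + 1)), ∑ w : Fin d → Fin p,
      (doorIndicator L ((σ 0).insertNth 0 fun j => (w j : ℕ)) σ 0 +
        doorIndicator L ((σ 0).insertNth p fun j => (w j : ℕ)) σ 0) := by
  simp only [← sum_doorIndicator, sum_sum_doorIndicator]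
  rw [Finset.sum_comm]
  exact Finset.sum_congr rfl fun σ _ =>
    sum_add_update_eq_sum_insertNth (σ 0) fun v => doorIndicator L v σ 0

/-- Sperner's boundary condition for labellings of the grid `{0, …, p}ᵈ`. Label `j + 1` is
attached to the coordinate `j` and label `0` to none: on the face `x j = 0` only labels from `j + 1`
on occur, and on the face `x j = p` label `j + 1` does not occur. -/
structure IsKuhnLabelling (p : ℕ) (L : (Fin d → ℕ) → Fin (d + 1)) : Prop where
  succ_le_of_eq_zero : ∀ x j, x j = 0 → j.succ ≤ L x
  ne_succ_of_eq : ∀ x j, x j = p → L x ≠ j.succ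

/-- The labelling of the face `x 0 = 0` by labels lowered by one. A Kuhn labelling never takes the
label `0` on this face, where `Fin.predAbove 0` would leave it at `0`. -/
def bottomFaceLabel (L : (Fin (d + 1) → ℕ) → Fin (d + 2)) (x : Fin d → ℕ) : Fin (d + 1) :=
  Fin.predAbove 0 (L (Fin.cons 0 x))

namespace IsKuhnLabelling

variable {L : (Fin (d + 1) → ℕ) → Fin (d + 2)}

lemma succ_bottomFaceLabel (hL : IsKuhnLabelling p L) (x : Fin d → ℕ) :
    (bottomFaceLabel L x).succ = L (Fin.cons 0 x) := by
  have hone : Fin.succ 0 ≤ L (Fin.cons 0 x) := hL.succ_le_of_eq_zero _ 0 (Fin.cons_zero _ _)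
  obtain ⟨a, ha⟩ := Fin.exists_succ_eq_of_ne_zero ((Fin.succ_pos 0).trans_le hone).ne'
  rw [bottomFaceLabel, ← ha, Fin.predAbove_zero_succ]

lemma isKuhnLabelling_bottomFaceLabel (hL : IsKuhnLabelling p L) :
    IsKuhnLabelling p (bottomFaceLabel L) where
  succ_le_of_eq_zero x j hj := by
    rw [← Fin.succ_le_succ_iff, hL.succ_bottomFaceLabel]
    exact hL.succ_le_of_eq_zero _ j.succ ((Fin.cons_succ _ _ _).trans hj)
  ne_succ_of_eq x j hj := by
    rw [ne_eq, ← Fin.succ_inj, hL.succ_bottomFaceLabel]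
    exact hL.ne_succ_of_eq _ j.succ ((Fin.cons_succ _ _ _).trans hj)

lemma doorIndicator_zero_of_eq (hL : IsKuhnLabelling p L) {v : Fin (d + 1) → ℕ}
    {σ : Perm (Fin (d + 1))} (hv : v (σ 0) = p) : doorIndicator L v σ 0 = 0 := by
  refine if_neg fun hdoor => ?_
  obtain ⟨k, hk⟩ := hdoor (σ 0)
  exact hL.ne_succ_of_eq _ (σ 0) ((kuhnVertex_succ_apply_zero v σ k).trans hv) hk

lemma doorIndicator_zero_of_eq_zero (hL : IsKuhnLabelling p L) {v : Fin (d + 1) → ℕ}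
    {σ : Perm (Fin (d + 1))} (hv : v (σ 0) = 0) (hσ : σ 0 ≠ 0) : doorIndicator L v σ 0 = 0 := by
  refine if_neg fun hdoor => ?_
  obtain ⟨k, hk⟩ := hdoor 0
  have hle : (σ 0).succ ≤ Fin.succ 0 := hk ▸
    hL.succ_le_of_eq_zero _ (σ 0) ((kuhnVertex_succ_apply_zero v σ k).trans hv)
  exact hσ (Fin.le_zero_iff.mp (Fin.succ_le_succ_iff.mp hle))

open Classical in
lemma doorIndicator_cons_decomposeFin (hL : IsKuhnLabelling p L) (v : Fin d → ℕ)
    (τ : Perm (Fin d)) :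
    doorIndicator L (Fin.cons 0 v) (Perm.decomposeFin.symm (0, τ)) 0 =
      if Function.Surjective (bottomFaceLabel L ∘ kuhnVertex v τ) then 1 else 0 := by
  have hlabel (k : Fin (d + 1)) :
      L (kuhnVertex (Fin.cons 0 v : Fin (d + 1) → ℕ) (Perm.decomposeFin.symm (0, τ)) k.succ) =
        (bottomFaceLabel L (kuhnVertex v τ k)).succ := by
    rw [kuhnVertex_cons_decomposeFin, hL.succ_bottomFaceLabel]
  refine if_congr ?_ rfl rfl
  simp only [IsDoor, Function.Surjective, Function.comp_apply, Fin.succAbove_zero, hlabel,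
    Fin.succ_inj]

open Classical in
lemma sum_boundary_eq_sum_bottom (hL : IsKuhnLabelling p L) :
    ∑ σ : Perm (Fin (d + 1)), ∑ w : Fin d → Fin p,
      (doorIndicator L ((σ 0).insertNth 0 fun j => (w j : ℕ)) σ 0 +
        doorIndicator L ((σ 0).insertNth p fun j => (w j : ℕ)) σ 0) =
    ∑ w : Fin d → Fin p, ∑ τ : Perm (Fin d),
      if Function.Surjective (bottomFaceLabel L ∘ kuhnVertex (fun j => w j) τ)
        then (1 : ZMod 2) else 0 := by
  have htop (σ : Perm (Fin (d + 1))) (w : Fin d → Fin p) :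
      doorIndicator L ((σ 0).insertNth p fun j => (w j : ℕ)) σ 0 = 0 :=
    hL.doorIndicator_zero_of_eq (Fin.insertNth_apply_same _ _ _)
  simp only [htop, add_zero, ← hL.doorIndicator_cons_decomposeFin]
  rw [← Perm.decomposeFin.symm.sum_comp, Fintype.sum_prod_type, Fintype.sum_eq_single 0,
    Finset.sum_comm]
  · simp only [Perm.decomposeFin_symm_apply_zero, Fin.insertNth_zero']
  · refine fun m hm => Finset.sum_eq_zero fun τ _ => Finset.sum_eq_zero fun w _ => ?_
    rw [Perm.decomposeFin_symm_apply_zero]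
    refine hL.doorIndicator_zero_of_eq_zero ?_ ?_
    · rw [Perm.decomposeFin_symm_apply_zero, Fin.insertNth_apply_same]
    · rwa [Perm.decomposeFin_symm_apply_zero]

end IsKuhnLabelling

open Classical in
theorem IsKuhnLabelling.sum_surjective_eq_one {L : (Fin d → ℕ) → Fin (d + 1)}
    (hL : IsKuhnLabelling p L) :
    (∑ v : Fin d → Fin p, ∑ σ : Perm (Fin d),
      if Function.Surjective (L ∘ kuhnVertex (fun j => v j) σ) then (1 : ZMod 2) else 0) = 1 := by
  induction d with
  | zero =>
    rw [Fintype.sum_unique, Fintype.sum_unique]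
    exact if_pos fun c => ⟨0, Subsingleton.elim (α := Fin 1) _ _⟩
  | succ d ih =>
    rw [sum_surjective_eq_sum_boundary, hL.sum_boundary_eq_sum_bottom,
      ih hL.isKuhnLabelling_bottomFaceLabel]

theorem exists_close_perm_labels {L : Fin (d + 1) → (Fin d → ℕ) → Fin (d + 1)}
    (hL : ∀ i, IsKuhnLabelling p (L i)) :
    ∃ (x : Fin (d + 1) → Fin d → ℕ) (π : Perm (Fin (d + 1))),
      (∀ i i' j, x i j ≤ x i' j + 1) ∧ ∀ i, L i (x i) = π i := by
  classical
  let owner (x : Fin d → ℕ) : Fin (d + 1) := Fin.ofNat (d + 1) (∑ j, x j)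
  have hparity := IsKuhnLabelling.sum_surjective_eq_one (p := p) (L := fun x => L (owner x) x)
    ⟨fun x => (hL (owner x)).succ_le_of_eq_zero x, fun x => (hL (owner x)).ne_succ_of_eq x⟩
  obtain ⟨v, -, hv⟩ := Finset.exists_ne_zero_of_sum_ne_zero (hparity.trans_ne one_ne_zero)
  obtain ⟨σ, -, hσ⟩ := Finset.exists_ne_zero_of_sum_ne_zero hv
  have hsurj := (ite_ne_right_iff.mp hσ).1
  let vertex := kuhnVertex (fun j => (v j : ℕ)) σ
  let ownerPerm : Perm (Fin (d + 1)) := Equiv.ofBijective (owner ∘ vertex)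
    (Finite.injective_iff_bijective.mp (injective_ofNat_sum_kuhnVertex _ σ))
  let labelPerm : Perm (Fin (d + 1)) :=
    Equiv.ofBijective _ (Finite.surjective_iff_bijective.mp hsurj)
  refine ⟨vertex ∘ ownerPerm.symm, ownerPerm.symm.trans labelPerm,
    fun i i' => kuhnVertex_le_kuhnVertex_add_one _ σ _ _,
    ownerPerm.surjective.forall.mpr fun k => ?_⟩
  rw [Function.comp_apply, Equiv.trans_apply, Equiv.symm_apply_apply]
  rfl

end Kuhn

/-! ### Envy-free divisions for continuous valuations -/

section Division

/-- The points `y 0 ≤ ⋯ ≤ y n` cut the interval `[0, a]` into `n` (possibly empty) pieces; the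
`k`-th piece is `[y k.castSucc, y k.succ]`. -/
structure IsDivision {α : Type*} [Preorder α] [Zero α] {n : ℕ} (a : α) (y : Fin (n + 1) → α) :
    Prop where
  monotone : Monotone y
  zero : y 0 = 0
  last : y (Fin.last n) = a

/-- The value of the `k`-th piece of the division `y` for the valuation whose cumulative
distribution is `F`, i.e. which gives `F t` to `[0, t]`. -/
def pieceValue {n : ℕ} (F : ℝ → ℝ) (y : Fin (n + 1) → ℝ) (k : Fin n) : ℝ :=
  F (y k.succ) - F (y k.castSucc)

lemma IsDivision.mem_Icc {α : Type*} [Preorder α] [Zero α] {n : ℕ} {a : α}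
    {y : Fin (n + 1) → α} (hy : IsDivision a y) (k : Fin (n + 1)) : y k ∈ Set.Icc 0 a :=
  ⟨hy.zero.ge.trans (hy.monotone k.zero_le), (hy.monotone k.le_last).trans hy.last.le⟩

lemma IsDivision.natCast_div {n p : ℕ} (hp : 0 < p) {y : Fin (n + 1) → ℕ} (hy : IsDivision p y) :
    IsDivision (1 : ℝ) fun k => (y k : ℝ) / p where
  monotone _ _ hkl := div_le_div_of_nonneg_right (Nat.cast_le.mpr (hy.monotone hkl)) p.cast_nonneg
  zero := by rw [hy.zero, Nat.cast_zero, zero_div]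
  last := by rw [hy.last, div_self (Nat.cast_ne_zero.mpr hp.ne')]

lemma isCompact_setOf_isDivision (n : ℕ) :
    IsCompact {y : Fin (n + 1) → ℝ | IsDivision 1 y} := by
  have hclosed : IsClosed {y : Fin (n + 1) → ℝ | IsDivision 1 y} := by
    have heq : {y : Fin (n + 1) → ℝ | IsDivision 1 y} =
        {y | Monotone y} ∩ {y | y 0 = 0} ∩ {y | y (Fin.last n) = 1} :=
      Set.ext fun y => ⟨fun h => ⟨⟨h.monotone, h.zero⟩, h.last⟩, fun h => ⟨h.1.1, h.1.2, h.2⟩⟩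
    rw [heq]
    exact (isClosed_monotone.inter (isClosed_eq (continuous_apply _) continuous_const)).inter
      (isClosed_eq (continuous_apply _) continuous_const)
  exact (isCompact_Icc (a := (0 : Fin (n + 1) → ℝ)) (b := 1)).of_isClosed_subset hclosed
    fun y hy => ⟨fun k => (hy.mem_Icc k).1, fun k => (hy.mem_Icc k).2⟩

lemma exists_not_castSucc_and_succ {n : ℕ} {P : Fin (n + 1) → Prop} (h0 : ¬ P 0)
    (hlast : P (Fin.last n)) : ∃ k : Fin n, ¬ P k.castSucc ∧ P k.succ := by
  by_contra! h
  exact Fin.induction h0 h (Fin.last n) hlast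

lemma exists_pieceValue_pos {n : ℕ} {F : ℝ → ℝ} (hF : F 0 < F 1) {y : Fin (n + 1) → ℝ}
    (hy : IsDivision 1 y) : ∃ k, 0 < pieceValue F y k := by
  obtain ⟨k, hk, hk'⟩ := exists_not_castSucc_and_succ (P := fun k => F 0 < F (y k))
    (by rw [hy.zero]; exact lt_irrefl _) (by rwa [hy.last])
  exact ⟨k, sub_pos.mpr ((not_lt.mp hk).trans_lt hk')⟩

end Division

section SuffixMinCuts

variable {d p : ℕ} {x x' : Fin d → ℕ}

/-- The division of `[0, p]` whose inner cut points are the suffix minima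
`min (x k, …, x (d - 1), p)`. Taking minima makes every point of the
cube `{0, …, p}ᵈ`, monotone or not, describe a division. -/
def suffixMinCuts (p : ℕ) (x : Fin d → ℕ) : Fin (d + 2) → ℕ :=
  Fin.cons 0 fun k : Fin (d + 1) =>
    (Finset.Ici k).inf' Finset.nonempty_Ici (Fin.snoc x p : Fin (d + 1) → ℕ)

lemma suffixMinCuts_succ_le {k i : Fin (d + 1)} (hki : k ≤ i) :
    suffixMinCuts p x k.succ ≤ (Fin.snoc x p : Fin (d + 1) → ℕ) i :=
  Finset.inf'_le _ (Finset.mem_Ici.mpr hki)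

lemma le_suffixMinCuts_succ {k : Fin (d + 1)} {a : ℕ}
    (h : ∀ i, k ≤ i → a ≤ (Fin.snoc x p : Fin (d + 1) → ℕ) i) : a ≤ suffixMinCuts p x k.succ :=
  Finset.le_inf' Finset.nonempty_Ici _ fun i hi => h i (Finset.mem_Ici.mp hi)

lemma isDivision_suffixMinCuts (p : ℕ) (x : Fin d → ℕ) : IsDivision p (suffixMinCuts p x) where
  monotone := by
    refine Fin.monotone_iff_le_succ.mpr (Fin.cases (Nat.zero_le _) fun k => ?_)
    rw [← Fin.succ_castSucc]
    exact le_suffixMinCuts_succ fun i hi =>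
      suffixMinCuts_succ_le (Fin.castSucc_le_succ k |>.trans hi)
  zero := rfl
  last := by
    rw [← Fin.succ_last]
    refine le_antisymm ((suffixMinCuts_succ_le le_rfl).trans_eq (Fin.snoc_last _ _)) ?_
    refine le_suffixMinCuts_succ fun i hi => ?_
    rw [Fin.last_le_iff.mp hi, Fin.snoc_last]

lemma suffixMinCuts_eq_zero {j : Fin d} (hj : x j = 0) {k : Fin (d + 2)}
    (hk : k ≤ j.castSucc.succ) : suffixMinCuts p x k = 0 := by
  have hle : suffixMinCuts p x j.castSucc.succ ≤ 0 :=
    (suffixMinCuts_succ_le le_rfl).trans_eq ((Fin.snoc_castSucc _ _ _).trans hj)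
  exact Nat.le_zero.mp (((isDivision_suffixMinCuts p x).monotone hk).trans hle)

lemma suffixMinCuts_succ_succ_eq {j : Fin d} (hj : x j = p) :
    suffixMinCuts p x j.succ.succ = suffixMinCuts p x j.succ.castSucc := by
  refine le_antisymm ?_ ((isDivision_suffixMinCuts p x).monotone Fin.castSucc_lt_succ.le)
  rw [← Fin.succ_castSucc]
  refine le_suffixMinCuts_succ fun i hi => ?_
  rcases hi.eq_or_lt with rfl | hlt
  · rw [Fin.snoc_castSucc, hj]
    exact (suffixMinCuts_succ_le (Fin.le_last _)).trans_eq (Fin.snoc_last _ _)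
  · exact suffixMinCuts_succ_le (Fin.castSucc_lt_iff_succ_le.mp hlt)

lemma suffixMinCuts_le_add_one (h : ∀ j, x j ≤ x' j + 1) (k : Fin (d + 2)) :
    suffixMinCuts p x k ≤ suffixMinCuts p x' k + 1 := by
  induction k using Fin.cases with
  | zero => exact Nat.zero_le _
  | succ k =>
    refine Nat.sub_le_iff_le_add.mp (le_suffixMinCuts_succ fun i hi => ?_)
    refine Nat.sub_le_iff_le_add.mpr ((suffixMinCuts_succ_le hi).trans ?_)
    induction i using Fin.lastCases with
    | last => simp only [Fin.snoc_last, Nat.le_succ]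
    | cast i => simpa only [Fin.snoc_castSucc] using h i

lemma isKuhnLabelling_of_suffixMinCuts_ne {L : (Fin d → ℕ) → Fin (d + 1)}
    (hL : ∀ x, suffixMinCuts p x (L x).succ ≠ suffixMinCuts p x (L x).castSucc) :
    IsKuhnLabelling p L where
  succ_le_of_eq_zero x j hj := by
    by_contra! hlt
    have hle : L x ≤ j.castSucc := Fin.le_castSucc_iff.mpr hlt
    refine hL x ?_
    rw [suffixMinCuts_eq_zero hj (Fin.succ_le_succ_iff.mpr hle),
      suffixMinCuts_eq_zero hj (Fin.castSucc_lt_succ.le.trans (Fin.succ_le_succ_iff.mpr hle))]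
  ne_succ_of_eq x j hj h := hL x (by rw [h, suffixMinCuts_succ_succ_eq hj])

/-- The division of `[0, 1]` obtained from `suffixMinCuts p x` by rescaling. -/
noncomputable def gridDivision (p : ℕ) (x : Fin d → ℕ) (k : Fin (d + 2)) : ℝ :=
  suffixMinCuts p x k / p

lemma isDivision_gridDivision (hp : 0 < p) (x : Fin d → ℕ) : IsDivision 1 (gridDivision p x) :=
  (isDivision_suffixMinCuts p x).natCast_div hp

lemma dist_gridDivision_le (hxx' : ∀ j, x j ≤ x' j + 1) (hx'x : ∀ j, x' j ≤ x j + 1) :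
    dist (gridDivision p x) (gridDivision p x') ≤ 1 / p := by
  refine (dist_pi_le_iff (by positivity)).mpr fun k => ?_
  have hle : (suffixMinCuts p x k : ℝ) ≤ suffixMinCuts p x' k + 1 := by
    exact_mod_cast suffixMinCuts_le_add_one hxx' k
  have hge : (suffixMinCuts p x' k : ℝ) ≤ suffixMinCuts p x k + 1 := by
    exact_mod_cast suffixMinCuts_le_add_one hx'x k
  rw [Real.dist_eq, gridDivision, gridDivision, ← sub_div, abs_div, Nat.abs_cast]
  gcongr
  exact abs_sub_le_iff.mpr ⟨by linarith, by linarith⟩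

end SuffixMinCuts

section EnvyFree

variable {d : ℕ} {F : Fin (d + 1) → ℝ → ℝ}

theorem exists_close_divisions (hF : ∀ i, F i 0 < F i 1) {p : ℕ} (hp : 0 < p) :
    ∃ (y : Fin (d + 1) → Fin (d + 2) → ℝ) (π : Perm (Fin (d + 1))),
      (∀ i, IsDivision 1 (y i)) ∧ (∀ i j, dist (y i) (y j) ≤ 1 / p) ∧
      ∀ i k, pieceValue (F i) (y i) k ≤ pieceValue (F i) (y i) (π i) := by
  choose best hbest using fun (i : Fin (d + 1)) (x : Fin d → ℕ) =>
    Finite.exists_max (pieceValue (F i) (gridDivision p x))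
  have hlabelling (i : Fin (d + 1)) : IsKuhnLabelling p (best i) := by
    refine isKuhnLabelling_of_suffixMinCuts_ne fun x heq => ?_
    obtain ⟨k, hk⟩ := exists_pieceValue_pos (hF i) (isDivision_gridDivision hp x)
    refine (hk.trans_le (hbest i x k)).ne' ?_
    rw [pieceValue, gridDivision, gridDivision, heq, sub_self]
  obtain ⟨x, π, hclose, hπ⟩ := exists_close_perm_labels hlabelling
  exact ⟨fun i => gridDivision p (x i), π, fun i => isDivision_gridDivision hp (x i),
    fun i j => dist_gridDivision_le (hclose i j) (hclose j i), fun i k => hπ i ▸ hbest i (x i) k⟩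

lemma exists_common_limit {α ι X : Type*} [PseudoMetricSpace X] [Nonempty ι] {s : Set X}
    (hs : IsCompact s) (U : Ultrafilter α) {z : α → ι → X} (hz : ∀ a i, z a i ∈ s)
    (hclose : ∀ i j, Tendsto (fun a => dist (z a i) (z a j)) U (𝓝 0)) :
    ∃ x ∈ s, ∀ i, Tendsto (fun a => z a i) U (𝓝 x) := by
  obtain ⟨i₀⟩ := ‹Nonempty ι›
  obtain ⟨x, hxs, hx⟩ := hs.ultrafilter_le_nhds (U.map fun a => z a i₀)
    (le_principal_iff.mpr (mem_map.mpr (Eventually.of_forall fun a => hz a i₀)))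
  exact ⟨x, hxs, fun i => (tendsto_iff_of_dist (hclose i₀ i)).mp hx⟩

lemma exists_eventually_eq {α β : Type*} [Finite β] (U : Ultrafilter α) (g : α → β) :
    ∃ b, ∀ᶠ a in (U : Filter α), g a = b := by
  obtain ⟨b, hb⟩ := Ultrafilter.eq_pure_of_finite (U.map g)
  have hmem : {b} ∈ U.map g := hb ▸ Set.mem_singleton b
  exact ⟨b, hmem⟩

lemma tendsto_pieceValue {α : Type*} {l : Filter α} {n : ℕ} {G : ℝ → ℝ}
    (hG : ContinuousOn G (Set.Icc 0 1)) {z : α → Fin (n + 1) → ℝ} (hz : ∀ a, IsDivision 1 (z a))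
    {y : Fin (n + 1) → ℝ} (hy : IsDivision 1 y) (hlim : Tendsto z l (𝓝 y)) (k : Fin n) :
    Tendsto (fun a => pieceValue G (z a) k) l (𝓝 (pieceValue G y k)) := by
  have hcut (j : Fin (n + 1)) : Tendsto (fun a => G (z a j)) l (𝓝 (G (y j))) :=
    (hG _ (hy.mem_Icc j)).tendsto.comp (tendsto_nhdsWithin_iff.mpr
      ⟨(tendsto_pi_nhds.mp hlim) j, Eventually.of_forall fun a => (hz a).mem_Icc j⟩)
  exact (hcut _).sub (hcut _)

theorem exists_envyFree (hFc : ∀ i, ContinuousOn (F i) (Set.Icc 0 1)) (hF : ∀ i, F i 0 < F i 1) :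
    ∃ (y : Fin (d + 2) → ℝ) (π : Perm (Fin (d + 1))), IsDivision 1 y ∧
      ∀ i k, pieceValue (F i) y k ≤ pieceValue (F i) y (π i) := by
  choose z π hz hclose henvy using fun m : ℕ => exists_close_divisions hF m.succ_pos
  let U : Ultrafilter ℕ := hyperfilter ℕ
  have hdist (i j : Fin (d + 1)) : Tendsto (fun m => dist (z m i) (z m j)) U (𝓝 0) := by
    refine squeeze_zero (fun _ => dist_nonneg) (fun m => hclose m i j) ?_
    simp only [Nat.cast_succ]
    exact tendsto_one_div_add_atTop_nhds_zero_nat.mono_left Nat.hyperfilter_le_atTop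
  obtain ⟨y, hy, hlim⟩ := exists_common_limit (isCompact_setOf_isDivision (d + 1)) U hz hdist
  obtain ⟨ρ, hρ⟩ := exists_eventually_eq U π
  have htendsto (i k : Fin (d + 1)) := tendsto_pieceValue (hFc i) (fun m => hz m i) hy (hlim i) k
  refine ⟨y, ρ, hy, fun i k => le_of_tendsto_of_tendsto (htendsto i k) (htendsto i (ρ i)) ?_⟩
  filter_upwards [hρ] with m hm
  exact hm ▸ henvy m i k

end EnvyFree

/-! ### Linear retractions onto a subfield -/

section Retraction

variable (K : Subfield ℝ)

lemma exists_linear_retraction_tendsto :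
    ∃ φ : ℕ → ℝ →ₗ[K] K, (∀ m, φ m 1 = 1) ∧
      ∀ x, Tendsto (fun m => (φ m x : ℝ)) atTop (𝓝 x) := by
  have hli : LinearIndepOn K id ({1} : Set ℝ) := LinearIndepOn.singleton one_ne_zero
  let b := Module.Basis.extend hli
  have hone : (1 : ℝ) ∈ hli.extend (Set.subset_univ _) := hli.subset_extend _ rfl
  have happrox (t : ℝ) : ∃ q : ℕ → K, Tendsto (fun m => (q m : ℝ)) atTop (𝓝 t) ∧
      (t = 1 → ∀ m, q m = 1) := by
    by_cases ht : t = 1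
    · exact ⟨fun _ => 1, by simp [ht], fun _ _ => rfl⟩
    · obtain ⟨q, -, -, hq⟩ := Real.exists_seq_rat_strictMono_tendsto t
      exact ⟨fun m => (q m : K), by simpa using hq, fun h => absurd h ht⟩
  choose q hq hq_one using happrox
  refine ⟨fun m => b.constr K fun i => q i m, fun m => ?_, fun x => ?_⟩
  · have hb : b ⟨1, hone⟩ = 1 := Module.Basis.extend_apply_self hli _
    exact (congrArg _ hb.symm).trans ((b.constr_basis K _ _).trans (hq_one _ rfl m))
  · have hx : (b.repr x).sum (fun i a => (a : ℝ) * i) = x := by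
      conv_rhs => rw [← b.linearCombination_repr x, Finsupp.linearCombination_apply]
      refine Finsupp.sum_congr fun i _ => ?_
      rw [Module.Basis.extend_apply_self, Subfield.smul_def, smul_eq_mul]
    conv => arg 3; rw [← hx]
    simp only [Module.Basis.constr_apply, Finsupp.sum, AddSubmonoidClass.coe_finsetSum,
      smul_eq_mul, Subfield.coe_mul]
    exact tendsto_finsetSum _ fun i _ => (hq i).const_mul _

lemma exists_linear_retraction_strictMonoOn {S : Set ℝ} (hS : S.Finite) :
    ∃ φ : ℝ →ₗ[K] K, φ 1 = 1 ∧ StrictMonoOn φ S := by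
  obtain ⟨φ, hφ_one, hφ⟩ := exists_linear_retraction_tendsto K
  have hlt : ∀ᶠ m in atTop, ∀ x ∈ S, ∀ y ∈ S, x < y → φ m x < φ m y := by
    rw [hS.eventually_all]
    intro x _
    rw [hS.eventually_all]
    intro y _
    by_cases hxy : x < y
    · filter_upwards [(hφ x).eventually_lt (hφ y) hxy] with m hm _ using hm
    · exact Eventually.of_forall fun m h => absurd h hxy
  obtain ⟨m, hm⟩ := hlt.exists
  exact ⟨φ m, hφ_one m, fun x hx y hy hxy => hm x hx y hy hxy⟩

variable {K}

lemma coe_map_of_mem {φ : ℝ →ₗ[K] K} (hφ : φ 1 = 1) {a : ℝ} (ha : a ∈ K) : (φ a : ℝ) = a := by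
  have h := φ.map_smul ⟨a, ha⟩ 1
  rw [hφ, Subfield.smul_def, smul_eq_mul, mul_one, smul_eq_mul, mul_one] at h
  rw [h]

lemma coe_map_mul_of_mem (φ : ℝ →ₗ[K] K) {a : ℝ} (ha : a ∈ K) (x : ℝ) :
    (φ (a * x) : ℝ) = a * φ x :=
  congrArg Subtype.val (φ.map_smul ⟨a, ha⟩ x)

end Retraction

/-! ### Step functions over a subfield -/

section StepFunction

open MeasureTheory

/-- The function `f` is constant with value `h j` on the `j`-th open piece of the division `c` of
`[0, 1]`; its values at the breakpoints are unconstrained. -/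
structure IsStepFunction {p : ℕ} (f : ℝ → ℝ) (c : Fin (p + 1) → ℝ) (h : Fin p → ℝ) : Prop where
  isDivision : IsDivision 1 c
  eqOn : ∀ j, Set.EqOn f (fun _ => h j) (Set.Ioo (c j.castSucc) (c j.succ))

namespace IsStepFunction

variable {p : ℕ} {f : ℝ → ℝ} {c : Fin (p + 1) → ℝ} {h : Fin p → ℝ}

lemma eqOn_uIoo (hf : IsStepFunction f c h) {j : Fin p} {a b : ℝ} (ha : c j.castSucc ≤ a)
    (hab : a ≤ b) (hb : b ≤ c j.succ) : Set.EqOn f (fun _ => h j) (Set.uIoo a b) := by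
  rw [Set.uIoo_of_le hab]
  exact (hf.eqOn j).mono (Set.Ioo_subset_Ioo ha hb)

lemma integral_eq_mul (hf : IsStepFunction f c h) {j : Fin p} {a b : ℝ} (ha : c j.castSucc ≤ a)
    (hab : a ≤ b) (hb : b ≤ c j.succ) : ∫ x in a..b, f x = h j * (b - a) := by
  rw [intervalIntegral.integral_congr_uIoo (hf.eqOn_uIoo ha hab hb),
    intervalIntegral.integral_const, smul_eq_mul, mul_comm]

lemma intervalIntegrable_zero_cut (hf : IsStepFunction f c h) (k : Fin (p + 1)) :
    IntervalIntegrable f volume 0 (c k) := by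
  induction k using Fin.induction with
  | zero => rw [hf.isDivision.zero]
  | succ j ih =>
    exact ih.trans <| intervalIntegrable_const.congr_uIoo
      (hf.eqOn_uIoo le_rfl (hf.isDivision.monotone Fin.castSucc_lt_succ.le) le_rfl).symm

lemma intervalIntegrable (hf : IsStepFunction f c h) {a b : ℝ} (ha : a ∈ Set.Icc (0 : ℝ) 1)
    (hb : b ∈ Set.Icc (0 : ℝ) 1) : IntervalIntegrable f volume a b := by
  have hint := hf.isDivision.last ▸ hf.intervalIntegrable_zero_cut (Fin.last p)
  rw [← Set.uIcc_of_le zero_le_one] at ha hb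
  exact hint.mono_set (Set.uIcc_subset_uIcc ha hb)

lemma integral_zero_eq (hf : IsStepFunction f c h) {j : Fin p} {t : ℝ}
    (ht : t ∈ Set.Icc (c j.castSucc) (c j.succ)) :
    ∫ x in (0 : ℝ)..t, f x = (∫ x in (0 : ℝ)..c j.castSucc, f x) + h j * (t - c j.castSucc) := by
  have hcut := hf.isDivision.mem_Icc j.castSucc
  have ht_mem : t ∈ Set.Icc (0 : ℝ) 1 :=
    ⟨hcut.1.trans ht.1, ht.2.trans (hf.isDivision.mem_Icc j.succ).2⟩
  rw [← hf.integral_eq_mul le_rfl ht.1 ht.2, intervalIntegral.integral_add_adjacent_intervals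
    (hf.intervalIntegrable_zero_cut _) (hf.intervalIntegrable hcut ht_mem)]

lemma integral_zero_cut_mem {K : Subfield ℝ} (hf : IsStepFunction f c h) (hc : ∀ k, c k ∈ K)
    (hh : ∀ j, h j ∈ K) (k : Fin (p + 1)) : ∫ x in (0 : ℝ)..c k, f x ∈ K := by
  induction k using Fin.induction with
  | zero => rw [hf.isDivision.zero, intervalIntegral.integral_same]; exact K.zero_mem
  | succ j ih =>
    rw [hf.integral_zero_eq ⟨hf.isDivision.monotone Fin.castSucc_lt_succ.le, le_rfl⟩]
    exact K.add_mem ih (K.mul_mem (hh j) (K.sub_mem (hc _) (hc _)))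

lemma exists_mem_Icc (hf : IsStepFunction f c h) {t : ℝ} (ht : t ∈ Set.Icc (0 : ℝ) 1) :
    ∃ j : Fin p, t ∈ Set.Icc (c j.castSucc) (c j.succ) := by
  rcases ht.1.eq_or_lt with rfl | hpos
  · obtain ⟨j, hj, hj'⟩ := exists_not_castSucc_and_succ (P := fun k => 0 < c k)
      hf.isDivision.zero.not_gt (hf.isDivision.last.symm ▸ zero_lt_one)
    exact ⟨j, not_lt.mp hj, hj'.le⟩
  · obtain ⟨j, hj, hj'⟩ := exists_not_castSucc_and_succ (P := fun k => t ≤ c k)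
      (hf.isDivision.zero.symm ▸ hpos.not_ge) (hf.isDivision.last.symm ▸ ht.2)
    exact ⟨j, (not_le.mp hj).le, hj'⟩

lemma integral_map_eq {K : Subfield ℝ} (hf : IsStepFunction f c h) (hc : ∀ k, c k ∈ K)
    (hh : ∀ j, h j ∈ K) {φ : ℝ →ₗ[K] K} (hφ : φ 1 = 1) {t : ℝ} (ht : t ∈ Set.Icc (0 : ℝ) 1)
    (hmono : MonotoneOn φ (insert t (Set.range c))) :
    ∫ x in (0 : ℝ)..φ t, f x = φ (∫ x in (0 : ℝ)..t, f x) := by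
  obtain ⟨j, hj⟩ := hf.exists_mem_Icc ht
  have hc_mem (k : Fin (p + 1)) : c k ∈ insert t (Set.range c) := .inr ⟨k, rfl⟩
  have hφt : (φ t : ℝ) ∈ Set.Icc (c j.castSucc) (c j.succ) := by
    rw [← coe_map_of_mem hφ (hc j.castSucc), ← coe_map_of_mem hφ (hc j.succ)]
    exact ⟨hmono (hc_mem _) (.inl rfl) hj.1, hmono (.inl rfl) (hc_mem _) hj.2⟩
  rw [hf.integral_zero_eq hφt, hf.integral_zero_eq hj, map_add, Subfield.coe_add,
    coe_map_of_mem hφ (hf.integral_zero_cut_mem hc hh _), coe_map_mul_of_mem φ (hh j), map_sub,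
    Subfield.coe_sub, coe_map_of_mem hφ (hc _)]

end IsStepFunction

/-- The function `f` is piecewise constant on `[0, 1]` with breakpoints and step values in `K`. -/
def IsPiecewiseConstantOver (K : Subfield ℝ) (f : ℝ → ℝ) : Prop :=
  ∃ (p : ℕ) (c : Fin (p + 1) → ℝ) (h : Fin p → ℝ),
    IsStepFunction f c h ∧ (∀ k, c k ∈ K) ∧ ∀ j, h j ∈ K

namespace IsPiecewiseConstantOver

variable {K : Subfield ℝ} {f : ℝ → ℝ}

lemma intervalIntegrable (hf : IsPiecewiseConstantOver K f) {a b : ℝ}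
    (ha : a ∈ Set.Icc (0 : ℝ) 1) (hb : b ∈ Set.Icc (0 : ℝ) 1) :
    IntervalIntegrable f volume a b :=
  let ⟨_, _, _, hstep, _⟩ := hf
  hstep.intervalIntegrable ha hb

lemma continuousOn_integral (hf : IsPiecewiseConstantOver K f) :
    ContinuousOn (fun t => ∫ x in (0 : ℝ)..t, f x) (Set.Icc 0 1) := by
  have hint := hf.intervalIntegrable (Set.left_mem_Icc.mpr zero_le_one)
    (Set.right_mem_Icc.mpr zero_le_one)
  rw [← Set.uIcc_of_le zero_le_one]
  exact intervalIntegral.continuousOn_primitive_interval' hint Set.left_mem_uIcc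

lemma pieceValue_integral (hf : IsPiecewiseConstantOver K f) {n : ℕ} {y : Fin (n + 1) → ℝ}
    (hy : IsDivision 1 y) (k : Fin n) :
    pieceValue (fun t => ∫ x in (0 : ℝ)..t, f x) y k = ∫ x in y k.castSucc..y k.succ, f x :=
  have hint (j : Fin (n + 1)) :=
    hf.intervalIntegrable (Set.left_mem_Icc.mpr zero_le_one) (hy.mem_Icc j)
  intervalIntegral.integral_interval_sub_left (hint _) (hint _)

lemma exists_finite_integral_map_eq (hf : IsPiecewiseConstantOver K f) :
    ∃ S : Set ℝ, S.Finite ∧ ∀ φ : ℝ →ₗ[K] K, φ 1 = 1 → ∀ t ∈ Set.Icc (0 : ℝ) 1,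
      MonotoneOn φ (insert t S) → ∫ x in (0 : ℝ)..φ t, f x = φ (∫ x in (0 : ℝ)..t, f x) := by
  obtain ⟨p, c, h, hstep, hc, hh⟩ := hf
  exact ⟨Set.range c, Set.finite_range c, fun φ hφ t ht hmono =>
    hstep.integral_map_eq hc hh hφ ht hmono⟩

lemma of_rat {p : ℕ} {c : Fin (p + 1) → ℚ} {h : Fin p → ℚ} (hc : Monotone c) (hc0 : c 0 = 0)
    (hc1 : c (Fin.last p) = 1)
    (hf : ∀ (j : Fin p) (x : ℝ), (c j.castSucc : ℝ) < x → x < (c j.succ : ℝ) → f x = (h j : ℝ)) :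
    IsPiecewiseConstantOver K f :=
  ⟨p, fun k => c k, fun j => h j,
    ⟨⟨fun _ _ hkl => Rat.cast_le.mpr (hc hkl), by simp [hc0], by simp [hc1]⟩,
      fun j x hx => hf j x hx.1 hx.2⟩,
    fun _ => SubfieldClass.ratCast_mem K _, fun _ => SubfieldClass.ratCast_mem K _⟩

end IsPiecewiseConstantOver

end StepFunction

theorem rational_envy_free_exists_piecewise_constant_general {K : Subfield ℝ} {n : ℕ}
    (hn : 0 < n) {f : Fin n → ℝ → ℝ} (hf : ∀ i, IsPiecewiseConstantOver K (f i))
    (hpos : ∀ i, 0 < ∫ x in (0 : ℝ)..1, f i x) :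
    ∃ (y : Fin (n + 1) → ℝ) (π : Perm (Fin n)), IsDivision 1 y ∧ (∀ k, y k ∈ K) ∧
      ∀ i k : Fin n, ∫ x in y k.castSucc..y k.succ, f i x ≤
        ∫ x in y (π i).castSucc..y (π i).succ, f i x := by
  obtain ⟨d, rfl⟩ := Nat.exists_eq_add_one.mpr hn
  let F (i : Fin (d + 1)) (t : ℝ) : ℝ := ∫ x in (0 : ℝ)..t, f i x
  obtain ⟨y, π, hy, henvy⟩ := exists_envyFree (F := F) (fun i => (hf i).continuousOn_integral)
    (fun i => by simpa [F] using hpos i)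
  choose S hS hSmap using fun i => (hf i).exists_finite_integral_map_eq
  let value (ik : Fin (d + 1) × Fin (d + 1)) : ℝ := pieceValue (F ik.1) y ik.2
  obtain ⟨φ, hφ, hmono⟩ := exists_linear_retraction_strictMonoOn K
    (((Set.finite_iUnion hS).union (Set.finite_range y)).union (Set.finite_range value))
  replace hmono := hmono.monotoneOn
  let z (k : Fin (d + 2)) : ℝ := φ (y k)
  have hz : IsDivision 1 z :=
    ⟨fun k l hkl => hmono (.inl (.inr ⟨k, rfl⟩)) (.inl (.inr ⟨l, rfl⟩)) (hy.monotone hkl),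
      by simp [z, hy.zero], by simp [z, hy.last, hφ]⟩
  have hFz (i : Fin (d + 1)) (k : Fin (d + 2)) : F i (z k) = φ (F i (y k)) :=
    hSmap i φ hφ (y k) (hy.mem_Icc k) <| hmono.mono <| Set.insert_subset (.inl (.inr ⟨k, rfl⟩))
      fun _ hs => .inl (.inl (Set.mem_iUnion_of_mem i hs))
  have hvalue (i k : Fin (d + 1)) : ∫ x in z k.castSucc..z k.succ, f i x = φ (value (i, k)) := by
    rw [← (hf i).pieceValue_integral hz]
    change F i (z k.succ) - F i (z k.castSucc) = _
    rw [hFz, hFz, ← Subfield.coe_sub, ← map_sub]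
    rfl
  refine ⟨z, π, hz, fun k => (φ (y k)).2, fun i k => ?_⟩
  rw [hvalue, hvalue]
  exact hmono (.inr ⟨(i, k), rfl⟩) (.inr ⟨(i, π i), rfl⟩) (henvy i k)

/-- For normalized piecewise constant valuations on `[0,1]` with rational
breakpoints and rational step values, there exists a contiguous exactly envy-free allocation
in which all cut points are rational. -/
theorem rational_envy_free_exists_piecewise_constant
    (n : ℕ) (hn : 0 < n) (f : Fin n → ℝ → ℝ)
    (hnn : ∀ i x, 0 ≤ f i x)
    (hpc : ∀ i : Fin n, ∃ (p : ℕ) (c : Fin (p + 1) → ℚ) (h : Fin p → ℚ),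
      Monotone c ∧ c 0 = 0 ∧ c (Fin.last p) = 1 ∧ (∀ j, 0 ≤ h j) ∧
      (∀ (j : Fin p) (x : ℝ),
        (c j.castSucc : ℝ) < x → x < (c j.succ : ℝ) → f i x = (h j : ℝ)))
    (hnorm : ∀ i, (∫ x in (0 : ℝ)..1, f i x) = 1) :
    ∃ (y : Fin (n + 1) → ℝ) (π : Equiv.Perm (Fin n)),
      Monotone y ∧ y 0 = 0 ∧ y (Fin.last n) = 1 ∧
      (∀ k : Fin (n + 1), ∃ q : ℚ, y k = (q : ℝ)) ∧
      (∀ i j : Fin n,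
        (∫ x in (y (π i).castSucc)..(y (π i).succ), f i x) ≥
          (∫ x in (y (π j).castSucc)..(y (π j).succ), f i x)) := by
  have hover (i : Fin n) : IsPiecewiseConstantOver (Rat.castHom ℝ).fieldRange (f i) :=
    let ⟨_, _, _, hc, hc0, hc1, _, hf⟩ := hpc i
    .of_rat hc hc0 hc1 hf
  obtain ⟨y, π, hy, hrat, henvy⟩ := rational_envy_free_exists_piecewise_constant_general hn hover
    fun i => zero_lt_one.trans_eq (hnorm i).symm
  exact ⟨y, π, hy.monotone, hy.zero, hy.last, fun k => (hrat k).imp fun _ hq => hq.symm,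
    fun i j => henvy i (π j)⟩
end

section
/- Let φ be a 3-SAT formula with clauses C_1,…,C_m (each a disjunction of 3 literals) over variables x_1,…,x_n. Construct the following discrete instance with agents C_i^1, C_i^2, C_i^3 for each clause C_i (C_i^k associated with the k-th literal ℓ(C_i^k) of C_i), agents L_j and R_j for each variable x_j, and 5 fresh agents for each Isolation-Gadget. The items, from left to right, are: for i = 1,…,m the Clause-Gadget of C_i, consisting of 27 items made of three repetitions of (3 items valued only by C_i^1, then 3 items valued only by C_i^2, then 3 items valued only by C_i^3); then for j = 1,…,n the Variable-Gadget of x_j, consisting of 13 items valued only by L_j, then 4 items each valued by exactly the clause agents A with ℓ(A) = x_j, then 4 items each valued by exactly the clause agents A with ℓ(A) = ¬x_j, then 13 items valued only by R_j; with an Isolation-Gadget — 13 items each valued by exactly its 5 fresh agents — inserted between every two consecutive gadgets. (Every agent values exactly 13 items and there are 8m+7n−5 agents.) Then for every ε with 0 ≤ ε < 1/13: this instance admits a contiguous ε-envy-free allocation if and only if φ is satisfiable. -/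
/-- `owner` is a contiguous allocation of the items `Fin M` (items numbered from left to
right) to the agents of type `A`: each agent's set of items is a (possibly empty) set of
consecutive items. -/
def ContigAlloc {M : ℕ} {A : Type*} (owner : Fin M → A) : Prop :=
  ∀ (a : A) (t₁ t₂ t₃ : Fin M), t₁ ≤ t₂ → t₂ ≤ t₃ →
    owner t₁ = a → owner t₃ = a → owner t₂ = a

open Classical in
/-- The (normalized) value that agent `a` assigns to the bundle received by agent `b`
under the allocation `owner`, where `V a` is the set of items valued by agent `a`:
`|A_b ∩ V_a| / |V_a|`. -/
noncomputable def discVal {M : ℕ} {A : Type*} (V : A → Finset (Fin M))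
    (owner : Fin M → A) (a b : A) : ℝ :=
  (((V a).filter fun t => owner t = b).card : ℝ) / ((V a).card : ℝ)

/-- Satisfiability of the 3-SAT formula `φ` (`φ i k = (j, pol)` means the `k`-th literal
of clause `i` is `x_j` if `pol = true` and `¬ x_j` if `pol = false`). -/
def SatFormula (m n : ℕ) (φ : Fin m → Fin 3 → Fin n × Bool) : Prop :=
  ∃ a : Fin n → Bool, ∀ i : Fin m, ∃ k : Fin 3, a (φ i k).1 = (φ i k).2

/-- Item index at which the Variable-Gadget of variable `j` starts. -/
def varGadgetStart (m : ℕ) (j : ℕ) : ℕ := 40 * m + 47 * j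

/-- Item index at which the `g`-th Isolation-Gadget starts. -/
def isoGadgetStart (m : ℕ) (g : ℕ) : ℕ :=
  if g < m then 40 * g + 27 else 40 * m + 47 * (g - m) + 34

/-- Valued sets of the discrete instance built from the 3-SAT formula `φ`: clause agents
`Sum.inl (i, k)`, variable agents `Sum.inr (Sum.inl (j, true)) = L_j` and
`Sum.inr (Sum.inl (j, false)) = R_j`, and the 5 agents of each Isolation-Gadget
`Sum.inr (Sum.inr (g, _))`. Every agent values exactly 13 items. -/
def satV (m n : ℕ) (φ : Fin m → Fin 3 → Fin n × Bool) :
    ((Fin m × Fin 3) ⊕ (Fin n × Bool) ⊕ (Fin (m + n - 1) × Fin 5)) →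
      Finset (Fin (40 * m + 47 * n - 13))
  | .inl (i, k) => Finset.univ.filter fun t =>
      (40 * i.val ≤ t.val ∧ t.val < 40 * i.val + 27 ∧
        ((t.val - 40 * i.val) % 9) / 3 = k.val) ∨
      (varGadgetStart m (φ i k).1.val + (if (φ i k).2 then 13 else 17) ≤ t.val ∧
        t.val < varGadgetStart m (φ i k).1.val + (if (φ i k).2 then 17 else 21))
  | .inr (.inl (j, true)) => Finset.univ.filter fun t =>
      varGadgetStart m j.val ≤ t.val ∧ t.val < varGadgetStart m j.val + 13
  | .inr (.inl (j, false)) => Finset.univ.filter fun t =>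
      varGadgetStart m j.val + 21 ≤ t.val ∧ t.val < varGadgetStart m j.val + 34
  | .inr (.inr (g, _)) => Finset.univ.filter fun t =>
      isoGadgetStart m g.val ≤ t.val ∧ t.val < isoGadgetStart m g.val + 13

/-!
With `ε < 1/13` and 13 valued items per agent, envy-freeness compares numbers of items. In an
Isolation-Gadget, 13 < 5 · 3 leaves one of the five agents with at most two of its items; as she
envies nobody, every bundle has at most two of them. Then 13 > 5 · 2 + 2 forces two further bundles
to reach into the gadget, one over each end, so no bundle extends across the gadget.

Hence a Clause-Gadget is shared among its three clause agents and a Variable-Gadget between `L_j`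
and `R_j`, one of which gets all four items of one of the two literals of `x_j`. Call that literal
false. A clause agent with a false literal needs four of the items she values in her
Clause-Gadget, which spread over at least ten consecutive items; as `27 < 3 · 10`, not all three
literals of a clause are false. Conversely, if one literal of each clause is true, cutting each
Variable-Gadget in the middle of the items of its true literal leaves the agent of that literal
satisfied with three items of the Clause-Gadget, and the two others can have six each.
-/

open Finset

section EnvyFree

variable {M : ℕ} {A : Type*} {V : A → Finset (Fin M)} {owner : Fin M → A}

theorem ContigAlloc.owner_eq (h : ContigAlloc owner) {t₁ t₂ t₃ : Fin M}
    (h₁₂ : t₁ ≤ t₂) (h₂₃ : t₂ ≤ t₃) (h₁₃ : owner t₁ = owner t₃) : owner t₂ = owner t₃ :=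
  h (owner t₃) t₁ t₂ t₃ h₁₂ h₂₃ h₁₃ rfl

/-- An Isolation-Gadget with agents `G` and items `Icc p q`. The sizes are such that, in an
envy-free allocation, no bundle contains more than `k` of the items for some `k`, while `k` items
to each agent of `G` and to one outsider do not exhaust the gadget. -/
structure IsIsolationGadget (V : A → Finset (Fin M)) (G : Finset A) (p q : Fin M) : Prop where
  eq_Icc : ∀ a ∈ G, V a = Icc p q
  disjoint : ∀ a ∉ G, Disjoint (V a) (Icc p q)
  exists_bound : ∃ k, #(Icc p q) < #G * (k + 1) ∧ (#G + 1) * k < #(Icc p q)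

theorem IsIsolationGadget.left_le_right {G : Finset A} {p q : Fin M}
    (hI : IsIsolationGadget V G p q) : p ≤ q := by
  obtain ⟨k, -, hk⟩ := hI.exists_bound
  exact nonempty_Icc.1 (card_pos.1 (Nat.zero_lt_of_lt hk))

variable [DecidableEq A]

/-- The unnormalized value that agent `a` assigns to the bundle of agent `b`. -/
def itemCount (V : A → Finset (Fin M)) (owner : Fin M → A) (a b : A) : ℕ :=
  #{t ∈ V a | owner t = b}

/-- A contiguous allocation in which no agent counts more of her valued items in another
bundle than in her own. -/
structure IsContigEnvyFree (V : A → Finset (Fin M)) (owner : Fin M → A) : Prop where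
  contig : ContigAlloc owner
  itemCount_le : ∀ a b, itemCount V owner a b ≤ itemCount V owner a a

theorem discVal_eq_itemCount_div (a b : A) :
    discVal V owner a b = itemCount V owner a b / #(V a) := by
  simp only [discVal, itemCount]
  congr!

theorem discVal_sub_le_iff {ε : ℝ} {a : A} (hε₀ : 0 ≤ ε) (hε : ε * #(V a) < 1) (b : A) :
    discVal V owner a b - ε ≤ discVal V owner a a ↔
      itemCount V owner a b ≤ itemCount V owner a a := by
  simp only [discVal_eq_itemCount_div]
  rcases (V a).eq_empty_or_nonempty with hV | hV
  · simp [itemCount, hV, hε₀]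
  have hpos : (0 : ℝ) < #(V a) := by exact_mod_cast hV.card_pos
  rw [sub_le_iff_le_add, div_add' _ _ _ hpos.ne', div_le_div_iff_of_pos_right hpos]
  constructor
  · intro h
    have : (itemCount V owner a b : ℝ) < itemCount V owner a a + 1 := by linarith
    exact Nat.lt_succ_iff.mp (by exact_mod_cast this)
  · intro h
    have : (itemCount V owner a b : ℝ) ≤ itemCount V owner a a := by exact_mod_cast h
    linarith [mul_nonneg hε₀ hpos.le]

theorem contigAlloc_and_discVal_sub_le_iff {ε : ℝ} (hε₀ : 0 ≤ ε) (hε : ∀ a, ε * #(V a) < 1) :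
    (ContigAlloc owner ∧ ∀ a b, discVal V owner a a ≥ discVal V owner a b - ε) ↔
      IsContigEnvyFree V owner := by
  simp only [ge_iff_le, discVal_sub_le_iff hε₀ (hε _)]
  exact ⟨fun h => ⟨h.1, h.2⟩, fun h => ⟨h.1, h.2⟩⟩

theorem card_le_itemCount {s : Finset (Fin M)} {a b : A}
    (h : ∀ t ∈ s, t ∈ V a ∧ owner t = b) : #s ≤ itemCount V owner a b :=
  card_le_card fun t ht => mem_filter.2 (h t ht)

theorem itemCount_le_card {s : Finset (Fin M)} {a b : A}
    (h : ∀ t ∈ V a, owner t = b → t ∈ s) : itemCount V owner a b ≤ #s :=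
  card_le_card fun t ht => h t (mem_filter.1 ht).1 (mem_filter.1 ht).2

theorem IsContigEnvyFree.exists_mem_owner_eq (H : IsContigEnvyFree V owner) {a : A}
    (ha : (V a).Nonempty) : ∃ t ∈ V a, owner t = a := by
  obtain ⟨t, ht⟩ := ha
  have hpos : 0 < itemCount V owner a (owner t) :=
    card_pos.2 ⟨t, mem_filter.2 ⟨ht, rfl⟩⟩
  simpa [itemCount, filter_nonempty_iff] using
    card_pos.1 (hpos.trans_le (H.itemCount_le a (owner t)))

theorem exists_isContigEnvyFree_of_card_inter_le {B : A → Finset (Fin M)}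
    (hconn : ∀ a, (B a : Set (Fin M)).OrdConnected) (hB : ∀ t, ∃! a, t ∈ B a)
    (hle : ∀ a b, #(V a ∩ B b) ≤ #(V a ∩ B a)) : ∃ owner, IsContigEnvyFree V owner := by
  choose owner hmem huniq using hB
  have howner (t : Fin M) (a : A) : owner t = a ↔ t ∈ B a :=
    ⟨fun h => h ▸ hmem t, fun h => (huniq t a h).symm⟩
  have hcount (a b : A) : itemCount V owner a b = #(V a ∩ B b) := by
    simp only [itemCount, howner, filter_mem_eq_inter]
  refine ⟨owner, ⟨fun a t₁ t₂ t₃ h₁₂ h₂₃ h₁ h₃ => ?_, fun a b => ?_⟩⟩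
  · rw [howner] at h₁ h₃ ⊢
    exact (hconn a).out h₁ h₃ ⟨h₁₂, h₂₃⟩
  · simpa only [hcount] using hle a b

namespace IsIsolationGadget

variable {G : Finset A} {p q : Fin M}

theorem exists_owner_notMem_ne (hI : IsIsolationGadget V G p q)
    (H : IsContigEnvyFree V owner) (b : A) :
    ∃ t ∈ Icc p q, owner t ∉ G ∧ owner t ≠ b := by
  obtain ⟨k, hk, hk'⟩ := hI.exists_bound
  obtain ⟨a, haG, ha⟩ := exists_card_fiber_lt_of_card_lt_mul (f := owner) hk
  rw [← hI.eq_Icc a haG] at ha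
  have hle (c : A) : #{t ∈ Icc p q | owner t = c} ≤ k := by
    rw [← hI.eq_Icc a haG]
    exact (H.itemCount_le a c).trans (Nat.lt_succ_iff.1 ha)
  by_contra! h
  have hmaps : ∀ t ∈ Icc p q, owner t ∈ insert b G := fun t ht => by
    by_cases hG : owner t ∈ G
    · exact mem_insert_of_mem hG
    · exact h t ht hG ▸ mem_insert_self _ _
  obtain ⟨c, -, hc⟩ := exists_lt_card_fiber_of_mul_lt_card_of_maps_to hmaps
    ((Nat.mul_le_mul_right k (card_insert_le b G)).trans_lt hk')
  exact (hle c).not_gt hc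

/-- An outsider holds a valued item, which lies outside the gadget, so her bundle sticks out of
the gadget on one side. -/
theorem owner_eq_left_or_right (hI : IsIsolationGadget V G p q) (H : IsContigEnvyFree V owner)
    (hV : ∀ a, (V a).Nonempty) {t : Fin M} (ht : t ∈ Icc p q) (hG : owner t ∉ G) :
    owner t = owner p ∨ owner t = owner q := by
  obtain ⟨hpt, htq⟩ := mem_Icc.1 ht
  obtain ⟨u, hu, hut⟩ := H.exists_mem_owner_eq (hV (owner t))
  have hout : u ∉ Icc p q := disjoint_left.1 (hI.disjoint _ hG) hu
  rcases lt_or_ge u p with hup | hpu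
  · exact .inl (H.contig.owner_eq hup.le hpt hut).symm
  · have hqu : q ≤ u := not_lt.1 fun h => hout (mem_Icc.2 ⟨hpu, h.le⟩)
    exact .inr (hut.symm.trans (H.contig.owner_eq htq hqu hut.symm).symm)

theorem owner_left_notMem (hI : IsIsolationGadget V G p q) (H : IsContigEnvyFree V owner)
    (hV : ∀ a, (V a).Nonempty) : owner p ∉ G := by
  obtain ⟨t, ht, hG, hne⟩ := hI.exists_owner_notMem_ne H (owner q)
  rwa [← (hI.owner_eq_left_or_right H hV ht hG).resolve_right hne]

theorem owner_right_notMem_ne (hI : IsIsolationGadget V G p q) (H : IsContigEnvyFree V owner)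
    (hV : ∀ a, (V a).Nonempty) : owner q ∉ G ∧ owner q ≠ owner p := by
  obtain ⟨t, ht, hG, hne⟩ := hI.exists_owner_notMem_ne H (owner p)
  rw [← (hI.owner_eq_left_or_right H hV ht hG).resolve_left hne]
  exact ⟨hG, hne⟩

theorem lt_left_of_mem (hI : IsIsolationGadget V G p q) (H : IsContigEnvyFree V owner)
    (hV : ∀ a, (V a).Nonempty) {t u : Fin M} (ht : t < p) (hut : owner u = owner t)
    (hu : u ∈ V (owner t)) : u < p := by
  by_contra! hpu
  have hp : owner p = owner t := (H.contig.owner_eq ht.le hpu hut.symm).trans hut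
  have hout : u ∉ Icc p q :=
    disjoint_left.1 (hI.disjoint _ (hp ▸ hI.owner_left_notMem H hV)) hu
  have hqu : q ≤ u := not_lt.1 fun h => hout (mem_Icc.2 ⟨hpu, h.le⟩)
  exact (hI.owner_right_notMem_ne H hV).2
    ((H.contig.owner_eq (ht.le.trans hI.left_le_right) hqu hut.symm).trans (hut.trans hp.symm))

theorem right_lt_of_mem (hI : IsIsolationGadget V G p q) (H : IsContigEnvyFree V owner)
    (hV : ∀ a, (V a).Nonempty) {t u : Fin M} (ht : q < t) (hut : owner u = owner t)
    (hu : u ∈ V (owner t)) : q < u := by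
  by_contra! huq
  have hq : owner q = owner t := H.contig.owner_eq huq ht.le hut
  have hout : u ∉ Icc p q :=
    disjoint_left.1 (hI.disjoint _ (hq ▸ (hI.owner_right_notMem_ne H hV).1)) hu
  have hup : u ≤ p := not_lt.1 fun h => hout (mem_Icc.2 ⟨h.le, huq⟩)
  exact (hI.owner_right_notMem_ne H hV).2
    (hq.trans (H.contig.owner_eq hup (hI.left_le_right.trans ht.le) hut).symm)

end IsIsolationGadget

end EnvyFree

section Window

/-- The block of `w` consecutive items starting at item `s`. -/
def window (M s w : ℕ) : Finset (Fin M) := {t | s ≤ t.val ∧ t.val < s + w}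

variable {M s w : ℕ}

@[simp]
theorem mem_window {t : Fin M} : t ∈ window M s w ↔ s ≤ t.val ∧ t.val < s + w := by
  simp [window]

theorem card_filter_window (h : s + w ≤ M) (P : ℕ → Prop) [DecidablePred P] :
    #{t ∈ window M s w | P (t.val - s)} = #{r ∈ range w | P r} := by
  refine card_bij (fun t _ => t.val - s) ?_ ?_ ?_
  · simp only [mem_filter, mem_window, mem_range]
    rintro t ⟨_, ht⟩
    exact ⟨by omega, ht⟩
  · simp only [mem_filter, mem_window, Fin.ext_iff]
    omega
  · simp only [mem_filter, mem_window, mem_range]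
    rintro r ⟨hr, hPr⟩
    exact ⟨⟨s + r, by omega⟩, by simpa using ⟨hr, hPr⟩, by simp⟩

theorem card_window (h : s + w ≤ M) : #(window M s w) = w := by
  simpa using card_filter_window h (fun _ => True)

theorem card_window_le : #(window M s w) ≤ w := by
  have hmaps : Set.MapsTo Fin.val (window M s w : Set (Fin M)) (Ico s (s + w)) := fun t ht => by
    simpa using ht
  simpa using card_le_card_of_injOn Fin.val hmaps Fin.val_injective.injOn

end Window

section Reduction

/-- The agents of the instance built from a formula with `m` clauses and `n` variables. -/
abbrev SatAgent (m n : ℕ) : Type :=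
  (Fin m × Fin 3) ⊕ (Fin n × Bool) ⊕ (Fin (m + n - 1) × Fin 5)

/-- The items of the instance built from a formula with `m` clauses and `n` variables. -/
abbrev SatItem (m n : ℕ) : Type := Fin (40 * m + 47 * n - 13)

variable {m n : ℕ}

/-- The nine items of the Clause-Gadget of clause `i` valued by its `k`-th agent. -/
def clauseItems (m n : ℕ) (i : Fin m) (k : Fin 3) : Finset (SatItem m n) :=
  {t ∈ window _ (40 * i.val) 27 | (t.val - 40 * i.val) % 9 / 3 = k.val}

/-- The four items valued by exactly the clause agents with literal `l`. -/
def literalItems (m : ℕ) (l : Fin n × Bool) : Finset (SatItem m n) :=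
  window _ (varGadgetStart m l.1.val + if l.2 then 13 else 17) 4

theorem satV_clause (φ : Fin m → Fin 3 → Fin n × Bool) (i : Fin m) (k : Fin 3) :
    satV m n φ (.inl (i, k)) = clauseItems m n i k ∪ literalItems m (φ i k) := by
  ext t
  cases h : (φ i k).2 <;> simp [satV, clauseItems, literalItems, h, and_assoc, add_assoc]

theorem satV_left (φ : Fin m → Fin 3 → Fin n × Bool) (j : Fin n) :
    satV m n φ (.inr (.inl (j, true))) = window _ (varGadgetStart m j.val) 13 := rfl

theorem satV_right (φ : Fin m → Fin 3 → Fin n × Bool) (j : Fin n) :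
    satV m n φ (.inr (.inl (j, false))) = window _ (varGadgetStart m j.val + 21) 13 := rfl

theorem satV_iso (φ : Fin m → Fin 3 → Fin n × Bool) (g : Fin (m + n - 1)) (k : Fin 5) :
    satV m n φ (.inr (.inr (g, k))) = window _ (isoGadgetStart m g.val) 13 := rfl

theorem varGadgetStart_add_le (m : ℕ) (j : Fin n) :
    varGadgetStart m j.val + 34 ≤ 40 * m + 47 * n - 13 := by
  simp only [varGadgetStart]
  omega

theorem isoGadgetStart_add_lt (g : Fin (m + n - 1)) :
    isoGadgetStart m g.val + 13 < 40 * m + 47 * n - 13 := by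
  simp only [isoGadgetStart]
  split_ifs <;> omega

theorem clauseGadget_add_le (hn : 0 < n) (i : Fin m) :
    40 * i.val + 27 ≤ 40 * m + 47 * n - 13 := by
  omega

theorem card_clauseItems (hn : 0 < n) (i : Fin m) (k : Fin 3) :
    #(clauseItems m n i k) = 9 := by
  rw [clauseItems, card_filter_window (clauseGadget_add_le hn i) fun r => r % 9 / 3 = k.val]
  revert k
  decide

theorem card_literalItems (l : Fin n × Bool) : #(literalItems m l) = 4 := by
  have := varGadgetStart_add_le m l.1
  refine card_window ?_
  split_ifs <;> omega

theorem card_satV (φ : Fin m → Fin 3 → Fin n × Bool) (a : SatAgent m n) :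
    #(satV m n φ a) = 13 := by
  rcases a with ⟨i, k⟩ | ⟨j, _ | _⟩ | ⟨g, _⟩
  · have hdisj : Disjoint (clauseItems m n i k) (literalItems m (φ i k)) := by
      refine disjoint_left.2 fun t h₁ h₂ => ?_
      simp only [clauseItems, literalItems, varGadgetStart, mem_filter, mem_window] at h₁ h₂
      omega
    rw [satV_clause, card_union_of_disjoint hdisj, card_clauseItems (φ i k).1.pos,
      card_literalItems]
  · rw [satV_right]
    exact card_window (varGadgetStart_add_le m j)
  · exact card_window ((varGadgetStart_add_le m j).trans' (by omega))
  · exact card_window (isoGadgetStart_add_lt g).le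

theorem satV_nonempty (φ : Fin m → Fin 3 → Fin n × Bool) (a : SatAgent m n) :
    (satV m n φ a).Nonempty :=
  card_pos.1 (by simp [card_satV])

/-- The fresh agents of the `g`-th Isolation-Gadget. -/
def isoAgents (g : Fin (m + n - 1)) : Finset (SatAgent m n) :=
  univ.image fun k : Fin 5 => .inr (.inr (g, k))

@[simp]
theorem mem_isoAgents {g : Fin (m + n - 1)} {a : SatAgent m n} :
    a ∈ isoAgents g ↔ ∃ k, .inr (.inr (g, k)) = a := by
  simp [isoAgents]

theorem isIsolationGadget_satV (φ : Fin m → Fin 3 → Fin n × Bool) (g : Fin (m + n - 1)) :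
    IsIsolationGadget (satV m n φ) (isoAgents g)
      ⟨isoGadgetStart m g.val, (Nat.le_add_right _ 13).trans_lt (isoGadgetStart_add_lt g)⟩
      ⟨isoGadgetStart m g.val + 12, (Nat.le_succ _).trans_lt (isoGadgetStart_add_lt g)⟩ where
  eq_Icc a ha := by
    obtain ⟨k, rfl⟩ := mem_isoAgents.1 ha
    ext t
    simp only [satV_iso, mem_window, mem_Icc, Fin.le_def]
    omega
  disjoint a ha := by
    refine disjoint_left.2 fun t h₁ h₂ => ?_
    simp only [mem_Icc, Fin.le_def] at h₂
    have := g.isLt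
    rcases a with ⟨i, k⟩ | ⟨j, _ | _⟩ | ⟨g', k⟩
    · simp only [satV_clause, clauseItems, literalItems, varGadgetStart, isoGadgetStart, mem_union,
        mem_filter, mem_window] at h₁ h₂
      grind
    · simp only [satV_right, varGadgetStart, isoGadgetStart, mem_window] at h₁ h₂
      grind
    · simp only [satV_left, varGadgetStart, isoGadgetStart, mem_window] at h₁ h₂
      grind
    · have hg : g' ≠ g := by
        rintro rfl
        exact ha (by simp)
      simp only [satV_iso, isoGadgetStart, mem_window] at h₁ h₂
      grind
  exists_bound := by
    refine ⟨2, ?_⟩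
    have hcard : #(isoAgents g) = 5 := by
      rw [isoAgents, card_image_of_injective _ fun k l h => by simpa using h]
      simp
    simp only [hcard, Fin.card_Icc]
    omega

/-! ### From an envy-free allocation to a satisfying assignment -/

theorem exists_eq_clause_of_mem_satV {φ : Fin m → Fin 3 → Fin n × Bool} {a : SatAgent m n}
    {t : SatItem m n} {i : Fin m} (hta : t ∈ satV m n φ a) (ht : t ∈ window _ (40 * i.val) 27) :
    ∃ k, a = .inl (i, k) := by
  simp only [mem_window] at ht
  rcases a with ⟨i', k⟩ | ⟨j, _ | _⟩ | ⟨g, k⟩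
  · obtain rfl : i' = i := by
      simp only [satV_clause, clauseItems, literalItems, varGadgetStart, mem_union, mem_filter,
        mem_window] at hta
      omega
    exact ⟨k, rfl⟩
  all_goals
    simp only [satV_left, satV_right, satV_iso, varGadgetStart, isoGadgetStart, mem_window] at hta
    grind

theorem exists_eq_clause_or_var_of_mem_satV {φ : Fin m → Fin 3 → Fin n × Bool}
    {a : SatAgent m n} {t : SatItem m n} {j : Fin n} (hta : t ∈ satV m n φ a)
    (ht : t ∈ window _ (varGadgetStart m j.val) 34) :
    (∃ i k, a = .inl (i, k)) ∨ ∃ c, a = .inr (.inl (j, c)) := by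
  simp only [varGadgetStart, mem_window] at ht
  rcases a with ⟨i, k⟩ | ⟨j', c⟩ | ⟨g, k⟩
  · exact .inl ⟨i, k, rfl⟩
  · obtain rfl : j' = j := by
      cases c <;> simp only [satV_left, satV_right, varGadgetStart, mem_window] at hta <;> omega
    exact .inr ⟨c, rfl⟩
  · simp only [satV_iso, isoGadgetStart, mem_window] at hta
    grind

namespace IsContigEnvyFree

variable {φ : Fin m → Fin 3 → Fin n × Bool} {owner : SatItem m n → SatAgent m n}

theorem lt_isoGadgetStart_of_mem (H : IsContigEnvyFree (satV m n φ) owner) {t u : SatItem m n}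
    (hut : owner u = owner t) (hu : u ∈ satV m n φ (owner t)) {g : ℕ} (hg : g < m + n - 1)
    (ht : t.val < isoGadgetStart m g) : u.val < isoGadgetStart m g :=
  (isIsolationGadget_satV φ ⟨g, hg⟩).lt_left_of_mem H (satV_nonempty φ) ht hut hu

theorem isoGadgetStart_add_le_of_mem (H : IsContigEnvyFree (satV m n φ) owner)
    {t u : SatItem m n} (hut : owner u = owner t) (hu : u ∈ satV m n φ (owner t)) {g : ℕ}
    (hg : g < m + n - 1) (ht : isoGadgetStart m g + 13 ≤ t.val) :
    isoGadgetStart m g + 13 ≤ u.val :=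
  (isIsolationGadget_satV φ ⟨g, hg⟩).right_lt_of_mem H (satV_nonempty φ) ht hut hu

theorem exists_owner_eq_clause (H : IsContigEnvyFree (satV m n φ) owner) {i : Fin m}
    {t : SatItem m n} (ht : t ∈ window _ (40 * i.val) 27) : ∃ k, owner t = .inl (i, k) := by
  obtain ⟨u, hu, hut⟩ := H.exists_mem_owner_eq (satV_nonempty φ (owner t))
  have hn : 0 < n := (φ i 0).1.pos
  have hright := H.lt_isoGadgetStart_of_mem hut hu (g := i.val) (by have := i.isLt; omega)
  have hleft := H.isoGadgetStart_add_le_of_mem hut hu (g := i.val - 1) (by have := i.isLt; omega)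
  refine exists_eq_clause_of_mem_satV hu ?_
  simp only [mem_window, isoGadgetStart] at ht hleft hright ⊢
  grind

theorem owner_ne_of_mem_clauseItems (H : IsContigEnvyFree (satV m n φ) owner) {i : Fin m}
    {k : Fin 3} {t u : SatItem m n} (ht : owner t = .inl (i, k)) (hmt : 40 * m ≤ t.val)
    (hu : u ∈ clauseItems m n i k) : owner u ≠ .inl (i, k) := fun hou => by
  have huV : u ∈ satV m n φ (owner t) := by
    rw [ht, satV_clause]
    exact mem_union_left _ hu
  have hm : 0 < m := i.pos
  have hn : 0 < n := (φ i k).1.pos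
  have := H.isoGadgetStart_add_le_of_mem (hou.trans ht.symm) huV (g := m - 1) (by omega)
  simp only [clauseItems, mem_filter, mem_window, isoGadgetStart] at hu this
  grind

/-- An agent of clause `i` with an item right of the Clause-Gadgets would get at most her four
literal items, and would envy one of the other two agents, who share the nine items she values in
the Clause-Gadget. -/
theorem lt_of_owner_eq_clause (H : IsContigEnvyFree (satV m n φ) owner) {i : Fin m} {k : Fin 3}
    {t : SatItem m n} (ht : owner t = .inl (i, k)) : t.val < 40 * m := by
  by_contra! hmt
  have hne {u : SatItem m n} := H.owner_ne_of_mem_clauseItems (u := u) ht hmt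
  have hfour : itemCount (satV m n φ) owner (.inl (i, k)) (.inl (i, k)) ≤ 4 := by
    refine (itemCount_le_card fun u hu hou => ?_).trans_eq (card_literalItems (φ i k))
    rw [satV_clause, mem_union] at hu
    exact hu.resolve_left fun hu => hne hu hou
  have hmaps : ∀ u ∈ clauseItems m n i k,
      owner u ∈ (univ.erase k).image fun l => (.inl (i, l) : SatAgent m n) := fun u hu => by
    obtain ⟨l, hl⟩ := H.exists_owner_eq_clause (mem_filter.1 hu).1
    have hlk : l ≠ k := fun h => hne hu (h ▸ hl)
    exact mem_image.2 ⟨l, by simpa using hlk, hl.symm⟩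
  have hcard : #((univ.erase k).image fun l => (.inl (i, l) : SatAgent m n)) * 4 <
      #(clauseItems m n i k) := by
    rw [card_clauseItems (φ i k).1.pos]
    have := card_image_le (s := univ.erase k) (f := fun l => (.inl (i, l) : SatAgent m n))
    simp only [mem_univ, card_erase_of_mem, card_univ, Fintype.card_fin] at this
    omega
  obtain ⟨b, -, hb⟩ := exists_lt_card_fiber_of_mul_lt_card_of_maps_to hmaps hcard
  have hsub : {u ∈ clauseItems m n i k | owner u = b} ⊆
      {u ∈ satV m n φ (.inl (i, k)) | owner u = b} :=
    filter_subset_filter _ (satV_clause φ i k ▸ subset_union_left)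
  exact ((hb.trans_le (card_le_card hsub)).trans_le (H.itemCount_le _ b)).not_ge hfour

theorem exists_owner_eq_var (H : IsContigEnvyFree (satV m n φ) owner) {j : Fin n}
    {t : SatItem m n} (ht : t ∈ window _ (varGadgetStart m j.val) 34) :
    ∃ c, owner t = .inr (.inl (j, c)) := by
  obtain ⟨u, hu, hut⟩ := H.exists_mem_owner_eq (satV_nonempty φ (owner t))
  have hright := H.lt_isoGadgetStart_of_mem hut hu (g := m + j.val)
  have hleft := H.isoGadgetStart_add_le_of_mem hut hu (g := m + j.val - 1)
  have hu' : u ∈ window _ (varGadgetStart m j.val) 34 := by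
    simp only [mem_window, isoGadgetStart, varGadgetStart] at ht hleft hright ⊢
    grind
  refine (exists_eq_clause_or_var_of_mem_satV hu hu').resolve_left ?_
  rintro ⟨i, k, hik⟩
  have := H.lt_of_owner_eq_clause hik
  simp only [mem_window, varGadgetStart] at ht
  omega

theorem exists_forall_literalItems_owner_eq (H : IsContigEnvyFree (satV m n φ) owner) (j : Fin n) :
    ∃ c b, ∀ t ∈ literalItems m (j, c), owner t = b := by
  have hj := varGadgetStart_add_le m j
  let mid : SatItem m n := ⟨varGadgetStart m j.val + 16, by omega⟩
  obtain ⟨c, hmid⟩ := H.exists_owner_eq_var (j := j) (t := mid) (by simp [mid])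
  obtain ⟨u, hu, hou⟩ := H.exists_mem_owner_eq (satV_nonempty φ (.inr (.inl (j, c))))
  refine ⟨c, .inr (.inl (j, c)), fun t ht => ?_⟩
  cases c
  · simp only [satV_right, literalItems, mem_window] at hu ht
    have hmt : mid ≤ t := Fin.le_def.2 (by simp only [mid]; grind)
    have htu : t ≤ u := Fin.le_def.2 (by grind)
    exact (H.contig.owner_eq hmt htu (hmid.trans hou.symm)).trans hou
  · simp only [satV_left, literalItems, mem_window] at hu ht
    have hmt : t ≤ mid := Fin.le_def.2 (by simp only [mid]; grind)
    have htu : u ≤ t := Fin.le_def.2 (by grind)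
    exact (H.contig.owner_eq htu hmt (hou.trans hmid.symm)).trans hmid

theorem ten_le_card_filter_owner_eq_clause (H : IsContigEnvyFree (satV m n φ) owner)
    {i : Fin m} {k : Fin 3} (h : 4 ≤ itemCount (satV m n φ) owner (.inl (i, k)) (.inl (i, k))) :
    10 ≤ #{t ∈ window (40 * m + 47 * n - 13) (40 * i.val) 27 | owner t = .inl (i, k)} := by
  have hV : ∀ t ∈ ({t ∈ satV m n φ (.inl (i, k)) | owner t = .inl (i, k)} : Finset _),
      t ∈ clauseItems m n i k ∧ owner t = .inl (i, k) := by
    intro t ht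
    simp only [satV_clause, mem_filter, mem_union] at ht
    have := H.lt_of_owner_eq_clause ht.2
    refine ⟨ht.1.resolve_right fun hlit => ?_, ht.2⟩
    simp only [literalItems, varGadgetStart, mem_window] at hlit
    omega
  -- Two of four such items are congruent modulo 9, hence at distance at least 9.
  obtain ⟨u, hu, v, hv, hne, huv⟩ := exists_ne_map_eq_of_card_lt_of_maps_to
    (t := Ico (3 * k.val) (3 * k.val + 3)) (f := fun t : SatItem m n => (t.val - 40 * i.val) % 9)
    (by simpa [itemCount, Nat.succ_le_iff] using h) fun t ht => by
      have := (mem_filter.1 (hV t ht).1).2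
      simp only [coe_Ico, Set.mem_Ico]
      omega
  wlog huv' : u < v generalizing u v
  · exact this v hv u hu hne.symm huv.symm (lt_of_le_of_ne (not_lt.1 huv') hne.symm)
  obtain ⟨hu, hou⟩ := hV u hu
  obtain ⟨hv, hov⟩ := hV v hv
  simp only [clauseItems, mem_filter, mem_window] at hu hv
  have hsub : Icc u v ⊆ {t ∈ window _ (40 * i.val) 27 | owner t = .inl (i, k)} := fun t ht => by
    obtain ⟨hut, htv⟩ := mem_Icc.1 ht
    refine mem_filter.2 ⟨mem_window.2 ?_,
      (H.contig.owner_eq hut htv (hou.trans hov.symm)).trans hov⟩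
    rw [Fin.le_def] at hut htv
    omega
  refine le_trans ?_ (card_le_card hsub)
  rw [Fin.card_Icc]
  rw [Fin.lt_def] at huv'
  omega

theorem satFormula (H : IsContigEnvyFree (satV m n φ) owner) : SatFormula m n φ := by
  choose c b hcb using H.exists_forall_literalItems_owner_eq
  refine ⟨fun j => !c j, fun i => ?_⟩
  by_contra! hfalse
  have hten (k : Fin 3) :
      10 ≤ #{t ∈ window (40 * m + 47 * n - 13) (40 * i.val) 27 | owner t = .inl (i, k)} := by
    have hlit : φ i k = ((φ i k).1, c (φ i k).1) := by
      have := hfalse k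
      grind
    refine H.ten_le_card_filter_owner_eq_clause (le_trans ?_ (H.itemCount_le _ (b (φ i k).1)))
    rw [← card_literalItems (m := m) (φ i k)]
    refine card_le_itemCount fun t ht => ⟨?_, hcb _ t (hlit ▸ ht)⟩
    exact satV_clause φ i k ▸ mem_union_right _ ht
  have hcard : #(window (40 * m + 47 * n - 13) (40 * i.val) 27) <
      #(univ.image fun k : Fin 3 => (.inl (i, k) : SatAgent m n)) * 10 := by
    rw [card_image_of_injective _ fun k l h => by simpa using h]
    exact card_window_le.trans_lt (by simp)
  obtain ⟨a, ha, hlt⟩ := exists_card_fiber_lt_of_card_lt_mul (f := owner) hcard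
  obtain ⟨k, -, rfl⟩ := mem_image.1 ha
  exact (hten k).not_gt hlt

end IsContigEnvyFree

/-! ### From a satisfying assignment to an envy-free allocation -/

/-- Where the three bundles of a Clause-Gadget are cut when its literal `κ` is true: agent `κ` gets
one block of three items she values and the two others get two blocks each. The offsets count from
the item preceding the gadget, the last one of an Isolation-Gadget, which the first agent gets
too. -/
def clauseCut (κ : Fin 3) : ℕ → ℕ
  | 0 => 0
  | 1 => if κ = 0 then 4 else 13
  | 2 => if κ = 2 then 25 else 16
  | _ => 30

/-- The bundles of an envy-free allocation, given a satisfying assignment `α` and a true literal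
`κ i` of each clause `i`. Of an Isolation-Gadget, its agents get two items each, the preceding
bundle the first two items and the following one the last item. -/
def satBundle (κ : Fin m → Fin 3) (α : Fin n → Bool) : SatAgent m n → Finset (SatItem m n)
  | .inl (i, k) =>
    {t | 40 * i.val + clauseCut (κ i) k.val ≤ t.val + 1 ∧
      t.val + 1 < 40 * i.val + clauseCut (κ i) (k.val + 1)}
  | .inr (.inl (j, true)) =>
    {t | varGadgetStart m j.val ≤ t.val + 1 ∧
      t.val < varGadgetStart m j.val + if α j then 15 else 19}
  | .inr (.inl (j, false)) =>
    {t | (varGadgetStart m j.val + if α j then 15 else 19) ≤ t.val ∧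
      t.val < varGadgetStart m j.val + 36}
  | .inr (.inr (g, k)) => window _ (isoGadgetStart m g.val + 2 + 2 * k.val) 2

theorem clauseCut_succ_le (κ k : Fin 3) : clauseCut κ (k.val + 1) ≤ 30 := by
  revert κ k
  decide

theorem exists_clauseCut_le_lt (κ : Fin 3) {s : ℕ} (hs : s < 30) :
    ∃ k : Fin 3, clauseCut κ k.val ≤ s ∧ s < clauseCut κ (k.val + 1) := by
  rcases lt_or_ge s (clauseCut κ 1) with h | h
  · exact ⟨0, Nat.zero_le _, h⟩
  rcases lt_or_ge s (clauseCut κ 2) with h' | h'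
  · exact ⟨1, h, h'⟩
  · exact ⟨2, h', hs⟩

theorem clauseCut_mono (κ : Fin 3) : Monotone (clauseCut κ) := by
  refine monotone_nat_of_le_succ fun k => ?_
  match k with
  | 0 | 1 | 2 => revert κ; decide
  | _ + 3 => exact le_rfl

theorem eq_of_clauseCut_le_lt {κ k l : Fin 3} {s : ℕ}
    (hk : clauseCut κ k.val ≤ s) (hk' : s < clauseCut κ (k.val + 1))
    (hl : clauseCut κ l.val ≤ s) (hl' : s < clauseCut κ (l.val + 1)) : k = l := by
  have h₁ := (clauseCut_mono κ).reflect_lt (hk.trans_lt hl')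
  have h₂ := (clauseCut_mono κ).reflect_lt (hl.trans_lt hk')
  omega

section Bundles

variable {κ : Fin m → Fin 3} {α : Fin n → Bool}

theorem ordConnected_satBundle (a : SatAgent m n) :
    Set.OrdConnected (satBundle κ α a : Set (SatItem m n)) := by
  refine ⟨fun t ht u hu v hv => ?_⟩
  rw [Set.mem_Icc, Fin.le_def, Fin.le_def] at hv
  rcases a with ⟨i, k⟩ | ⟨j, _ | _⟩ | ⟨g, k⟩ <;>
    simp only [satBundle, coe_filter, mem_univ, true_and, Set.mem_ofPred_eq, mem_coe, mem_window]
      at ht hu ⊢ <;> omega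

theorem exists_mem_satBundle (κ : Fin m → Fin 3) (α : Fin n → Bool) (t : SatItem m n) :
    ∃ a, t ∈ satBundle κ α a := by
  have ht := t.isLt
  rcases lt_or_ge (t.val + 1) (40 * m) with h | h
  · have hi : (t.val + 1) / 40 < m := by omega
    rcases lt_or_ge ((t.val + 1) % 40) 30 with hr | hr
    · obtain ⟨k, hk, hk'⟩ := exists_clauseCut_le_lt (κ ⟨(t.val + 1) / 40, hi⟩) hr
      refine ⟨.inl (⟨(t.val + 1) / 40, hi⟩, k), ?_⟩
      simp only [satBundle, mem_filter_univ]
      omega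
    · refine ⟨.inr (.inr (⟨(t.val + 1) / 40, by omega⟩,
        ⟨((t.val + 1) % 40 - 30) / 2, by omega⟩)), ?_⟩
      simp only [satBundle, isoGadgetStart, hi, if_true, mem_window]
      omega
  · rcases lt_or_ge ((t.val + 1 - 40 * m) % 47) 37 with hr | hr
    · let j : Fin n := ⟨(t.val + 1 - 40 * m) / 47, by omega⟩
      rcases lt_or_ge t.val (varGadgetStart m j.val + if α j then 15 else 19) with hcut | hcut
      · refine ⟨.inr (.inl (j, true)), mem_filter_univ _ |>.2 ⟨?_, hcut⟩⟩
        simp only [varGadgetStart, j]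
        omega
      · refine ⟨.inr (.inl (j, false)), mem_filter_univ _ |>.2 ⟨hcut, ?_⟩⟩
        simp only [varGadgetStart, j]
        omega
    · refine ⟨.inr (.inr (⟨m + (t.val + 1 - 40 * m) / 47, by omega⟩,
        ⟨((t.val + 1 - 40 * m) % 47 - 37) / 2, by omega⟩)), ?_⟩
      simp only [satBundle, isoGadgetStart, mem_window]
      grind

theorem eq_of_mem_satBundle {a b : SatAgent m n} {t : SatItem m n} (ha : t ∈ satBundle κ α a)
    (hb : t ∈ satBundle κ α b) : a = b := by
  rcases a with ⟨i, k⟩ | ⟨j, _ | _⟩ | ⟨g, k⟩ <;>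
    rcases b with ⟨i', k'⟩ | ⟨j', _ | _⟩ | ⟨g', k'⟩ <;>
    simp only [satBundle, mem_filter_univ, mem_window, varGadgetStart, isoGadgetStart] at ha hb
  · obtain rfl : i = i' := by grind [clauseCut_succ_le]
    rw [eq_of_clauseCut_le_lt (κ := κ i) (k := k) (l := k') (s := t.val + 1 - 40 * i.val)
      (by omega) (by omega) (by omega) (by omega)]
  all_goals grind [clauseCut_succ_le]

theorem card_satV_iso_inter_satBundle_le (φ : Fin m → Fin 3 → Fin n × Bool)
    (g : Fin (m + n - 1)) (k : Fin 5) (b : SatAgent m n) :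
    #(satV m n φ (.inr (.inr (g, k))) ∩ satBundle κ α b) ≤ 2 := by
  suffices ∃ p, satV m n φ (.inr (.inr (g, k))) ∩ satBundle κ α b ⊆ window _ p 2 from
    this.elim fun p hp => (card_le_card hp).trans card_window_le
  simp only [subset_iff, mem_inter, satV_iso, mem_window]
  rcases b with ⟨i, l⟩ | ⟨j, _ | _⟩ | ⟨g', l⟩ <;>
    simp only [satBundle, mem_filter_univ, mem_window]
  · refine ⟨isoGadgetStart m g.val + if g.val = i.val then 0 else 12, fun t ht => ?_⟩
    simp only [isoGadgetStart] at ht ⊢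
    grind [clauseCut_succ_le]
  · refine ⟨isoGadgetStart m g.val, fun t ht => ?_⟩
    simp only [isoGadgetStart, varGadgetStart] at ht ⊢
    grind
  · refine ⟨isoGadgetStart m g.val + 12, fun t ht => ?_⟩
    simp only [isoGadgetStart, varGadgetStart] at ht ⊢
    grind
  · exact ⟨_, fun t ht => ht.2⟩

theorem two_le_card_satV_iso_inter_satBundle (φ : Fin m → Fin 3 → Fin n × Bool)
    (g : Fin (m + n - 1)) (k : Fin 5) :
    2 ≤ #(satV m n φ (.inr (.inr (g, k))) ∩ satBundle κ α (.inr (.inr (g, k)))) := by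
  have hg := isoGadgetStart_add_lt g
  refine (card_window (by omega)).ge.trans
    (card_le_card fun t ht => mem_inter.2 ⟨mem_window.2 ?_, ht⟩)
  rw [mem_window] at ht
  omega

theorem satV_var_subset_satBundle (φ : Fin m → Fin 3 → Fin n × Bool) (v : Fin n × Bool) :
    satV m n φ (.inr (.inl v)) ⊆ satBundle κ α (.inr (.inl v)) := by
  intro t ht
  rcases v with ⟨j, _ | _⟩ <;>
    simp only [satV_left, satV_right, satBundle, mem_filter_univ, mem_window] at ht ⊢ <;> grind

theorem card_satV_clause_inter_satBundle_var_le (φ : Fin m → Fin 3 → Fin n × Bool) (i : Fin m)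
    (k : Fin 3) (v : Fin n × Bool) :
    #(satV m n φ (.inl (i, k)) ∩ satBundle κ α (.inr (.inl v))) ≤ 4 := by
  refine (card_le_card fun t ht => ?_).trans_eq (card_literalItems (φ i k))
  rw [mem_inter, satV_clause, mem_union] at ht
  refine ht.1.resolve_left fun hcl => ?_
  simp only [clauseItems, mem_filter, mem_window] at hcl
  rcases v with ⟨j, _ | _⟩ <;>
    simp only [satBundle, varGadgetStart] at ht <;> grind

theorem card_satV_clause_inter_satBundle_var_le_two {φ : Fin m → Fin 3 → Fin n × Bool}
    {i : Fin m} {k : Fin 3} (h : α (φ i k).1 = (φ i k).2) (v : Fin n × Bool) :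
    #(satV m n φ (.inl (i, k)) ∩ satBundle κ α (.inr (.inl v))) ≤ 2 := by
  refine (card_le_card (t := window _ (varGadgetStart m (φ i k).1.val +
    (if (φ i k).2 then 13 else 17) + if v.2 then 0 else 2) 2) fun t ht => ?_).trans card_window_le
  rcases v with ⟨j, _ | _⟩ <;>
    simp only [satV_clause, clauseItems, literalItems, satBundle, mem_inter, mem_union, mem_filter,
      mem_window, varGadgetStart] at ht ⊢ <;> grind

theorem satV_clause_inter_satBundle_iso (φ : Fin m → Fin 3 → Fin n × Bool) (i : Fin m)
    (k : Fin 3) (g : Fin (m + n - 1)) (l : Fin 5) :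
    satV m n φ (.inl (i, k)) ∩ satBundle κ α (.inr (.inr (g, l))) = ∅ := by
  refine eq_empty_of_forall_notMem fun t ht => ?_
  simp only [satV_clause, clauseItems, literalItems, satBundle, mem_inter, mem_union, mem_filter,
    mem_window, varGadgetStart, isoGadgetStart] at ht
  grind

/-- The items of a Clause-Gadget with true literal `κ` that agent `k` values in the bundle of
agent `l`, counted from the start of the gadget. -/
def clauseShare (κ k l : Fin 3) : Finset ℕ :=
  {r ∈ range 27 | r % 9 / 3 = k.val ∧ clauseCut κ l.val ≤ r + 1 ∧
    r + 1 < clauseCut κ (l.val + 1)}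

theorem card_clauseShare_le (κ k l : Fin 3) : #(clauseShare κ k l) ≤ #(clauseShare κ k k) := by
  revert κ k l
  decide

theorem two_le_card_clauseShare (κ k : Fin 3) : 2 ≤ #(clauseShare κ k k) := by
  revert κ k
  decide

theorem four_le_card_clauseShare {κ k : Fin 3} (h : k ≠ κ) : 4 ≤ #(clauseShare κ k k) := by
  revert κ k
  decide

theorem card_satV_clause_inter_satBundle_clause (φ : Fin m → Fin 3 → Fin n × Bool) (i : Fin m)
    (k l : Fin 3) :
    #(satV m n φ (.inl (i, k)) ∩ satBundle κ α (.inl (i, l))) = #(clauseShare (κ i) k l) := by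
  have := clauseCut_succ_le (κ i) l
  rw [clauseShare, ← card_filter_window (clauseGadget_add_le (φ i k).1.pos i)]
  congr 1
  ext t
  simp only [satV_clause, clauseItems, literalItems, satBundle, mem_inter, mem_union, mem_filter,
    mem_univ, true_and, mem_window, varGadgetStart]
  omega

theorem satV_clause_inter_satBundle_clause_of_ne (φ : Fin m → Fin 3 → Fin n × Bool)
    {i i' : Fin m} (h : i' ≠ i) (k l : Fin 3) :
    satV m n φ (.inl (i, k)) ∩ satBundle κ α (.inl (i', l)) = ∅ := by
  have := clauseCut_succ_le (κ i') l
  refine eq_empty_of_forall_notMem fun t ht => ?_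
  simp only [satV_clause, clauseItems, literalItems, satBundle, mem_inter, mem_union, mem_filter,
    mem_univ, true_and, mem_window, varGadgetStart] at ht
  omega

theorem card_satV_clause_inter_satBundle_le {φ : Fin m → Fin 3 → Fin n × Bool}
    (hκ : ∀ i, α (φ i (κ i)).1 = (φ i (κ i)).2) (i : Fin m) (k : Fin 3) (b : SatAgent m n) :
    #(satV m n φ (.inl (i, k)) ∩ satBundle κ α b) ≤ #(clauseShare (κ i) k k) := by
  rcases b with ⟨i', l⟩ | v | ⟨g, l⟩
  · rcases eq_or_ne i' i with rfl | hi
    · rw [card_satV_clause_inter_satBundle_clause]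
      exact card_clauseShare_le _ k l
    · simp [satV_clause_inter_satBundle_clause_of_ne φ hi]
  · rcases eq_or_ne k (κ i) with rfl | hk
    · exact (card_satV_clause_inter_satBundle_var_le_two (hκ i) v).trans
        (two_le_card_clauseShare _ _)
    · exact (card_satV_clause_inter_satBundle_var_le φ i k v).trans (four_le_card_clauseShare hk)
  · simp [satV_clause_inter_satBundle_iso]

theorem card_satV_inter_satBundle_le {φ : Fin m → Fin 3 → Fin n × Bool}
    (hκ : ∀ i, α (φ i (κ i)).1 = (φ i (κ i)).2) (a b : SatAgent m n) :
    #(satV m n φ a ∩ satBundle κ α b) ≤ #(satV m n φ a ∩ satBundle κ α a) := by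
  rcases a with ⟨i, k⟩ | v | ⟨g, k⟩
  · rw [card_satV_clause_inter_satBundle_clause]
    exact card_satV_clause_inter_satBundle_le hκ i k b
  · rw [inter_eq_left.2 (satV_var_subset_satBundle φ v)]
    exact card_le_card inter_subset_left
  · exact (card_satV_iso_inter_satBundle_le φ g k b).trans
      (two_le_card_satV_iso_inter_satBundle φ g k)

end Bundles

theorem SatFormula.exists_isContigEnvyFree {φ : Fin m → Fin 3 → Fin n × Bool}
    (h : SatFormula m n φ) : ∃ owner, IsContigEnvyFree (satV m n φ) owner := by
  obtain ⟨α, hα⟩ := h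
  choose κ hκ using hα
  exact exists_isContigEnvyFree_of_card_inter_le (B := satBundle κ α) ordConnected_satBundle
    (fun t => existsUnique_of_exists_of_unique (exists_mem_satBundle κ α t)
      fun _ _ => eq_of_mem_satBundle)
    (card_satV_inter_satBundle_le hκ)

end Reduction

/-- For every `0 ≤ ε < 1/13`, the discrete instance constructed from
the 3-SAT formula `φ` admits a contiguous `ε`-envy-free allocation if and only if `φ`
is satisfiable. -/
theorem approx_envy_free_iff_satisfiable
    (m n : ℕ) (hm : 0 < m) (hn : 0 < n)
    (φ : Fin m → Fin 3 → Fin n × Bool)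
    (ε : ℝ) (hε0 : 0 ≤ ε) (hε : ε < 1 / 13) :
    (∃ owner : Fin (40 * m + 47 * n - 13) →
        ((Fin m × Fin 3) ⊕ (Fin n × Bool) ⊕ (Fin (m + n - 1) × Fin 5)),
      ContigAlloc owner ∧
      ∀ a b, discVal (satV m n φ) owner a a ≥ discVal (satV m n φ) owner a b - ε) ↔
    SatFormula m n φ := by
  have hε13 (a : SatAgent m n) : ε * #(satV m n φ a) < 1 := by
    rw [card_satV]
    push_cast
    linarith
  simp only [contigAlloc_and_discVal_sub_le_iff hε0 hε13]
  exact ⟨fun ⟨_, H⟩ => H.satFormula, SatFormula.exists_isContigEnvyFree⟩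
end

section
/- Let φ be a 3-SAT formula with m clauses and n variables, let R be the discrete instance constructed from φ as described, and let R' be obtained from R by appending on the right 6m+4n+14 new items and introducing 3m+2n+7 new agents, each new agent valuing exactly the 6m+4n+14 new items, where in addition every clause agent C_i^k also values all the new items except the rightmost six, and every agent X_j and X̄_j also values all the new items except the rightmost four (so in R' there are 6m+4n+7 agents and every agent values exactly 6m+4n+14 items). Then the following are equivalent: (i) φ is satisfiable; (ii) R' admits a contiguous envy-free allocation; (iii) R' admits a contiguous proportional allocation; (iv) R' admits a contiguous equitable allocation. -/
/-- Agents of the discrete instance `R` built from `φ`: clause agents `C_i^k = Sum.inl (i,k)`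
and variable agents `X_j = Sum.inr (j, true)`, `X̄_j = Sum.inr (j, false)`. -/
abbrev RAgent (m n : ℕ) := (Fin m × Fin 3) ⊕ (Fin n × Bool)

/-- Number of clause-literal occurrences of the positive literal `x_j` in `φ`. -/
def posOcc (m n : ℕ) (φ : Fin m → Fin 3 → Fin n × Bool) (j : Fin n) : ℕ :=
  (Finset.univ.filter fun p : Fin m × Fin 3 => φ p.1 p.2 = (j, true)).card

/-- Number of clause-literal occurrences of the variable `x_j` (positive or negative). -/
def occCount (m n : ℕ) (φ : Fin m → Fin 3 → Fin n × Bool) (j : Fin n) : ℕ :=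
  (Finset.univ.filter fun p : Fin m × Fin 3 => (φ p.1 p.2).1 = j).card

/-- Item index at which the Variable-Gadget of variable `x_j` starts (the Variable-Gadget
of `x_j` has `5 + 2 * occCount` items and the gadgets follow the `4m` clause items). -/
def varStartR (m n : ℕ) (φ : Fin m → Fin 3 → Fin n × Bool) (j : Fin n) : ℕ :=
  4 * m + ∑ j' ∈ Finset.univ.filter (fun j' : Fin n => j' < j), (5 + 2 * occCount m n φ j')

/-- Rank (from the left) of the clause-literal occurrence `p` among the occurrences of the
same literal, ordering occurrences by clause index and then literal position. -/
def litRank (m n : ℕ) (φ : Fin m → Fin 3 → Fin n × Bool) (p : Fin m × Fin 3) : ℕ :=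
  (Finset.univ.filter fun p' : Fin m × Fin 3 =>
    φ p'.1 p'.2 = φ p.1 p.2 ∧ 3 * p'.1.val + p'.2.val < 3 * p.1.val + p.2.val).card

/-- Index of the first of the two items valued only by the clause agent `p` inside the
Variable-Gadget of its literal's variable. -/
def pairStart (m n : ℕ) (φ : Fin m → Fin 3 → Fin n × Bool) (p : Fin m × Fin 3) : ℕ :=
  if (φ p.1 p.2).2 then
    varStartR m n φ (φ p.1 p.2).1 + 3 + 2 * litRank m n φ p
  else
    varStartR m n φ (φ p.1 p.2).1 + 4 + 2 * posOcc m n φ (φ p.1 p.2).1 + 2 * litRank m n φ p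

/-- Valued sets of the instance `R` built from `φ` (with `4m` clause items followed by the
Variable-Gadgets, `10m + 5n` items in total): clause agent `C_i^k` values the 4 items of the
Clause-Gadget of `C_i` and its 2 items inside the Variable-Gadget of its literal's variable;
`X_j` values the items at offsets `0, 1, 2, 3 + 2·posOcc` of the Variable-Gadget of `x_j`,
and `X̄_j` those at offsets `0, 1, 3 + 2·posOcc, 4 + 2·occCount`. -/
def RV (m n : ℕ) (φ : Fin m → Fin 3 → Fin n × Bool) :
    RAgent m n → Finset (Fin (10 * m + 5 * n))
  | .inl p => Finset.univ.filter fun t =>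
      (4 * p.1.val ≤ t.val ∧ t.val < 4 * p.1.val + 4) ∨
      t.val = pairStart m n φ p ∨ t.val = pairStart m n φ p + 1
  | .inr (j, true) => Finset.univ.filter fun t =>
      t.val = varStartR m n φ j ∨ t.val = varStartR m n φ j + 1 ∨
      t.val = varStartR m n φ j + 2 ∨
      t.val = varStartR m n φ j + 3 + 2 * posOcc m n φ j
  | .inr (j, false) => Finset.univ.filter fun t =>
      t.val = varStartR m n φ j ∨ t.val = varStartR m n φ j + 1 ∨
      t.val = varStartR m n φ j + 3 + 2 * posOcc m n φ j ∨
      t.val = varStartR m n φ j + 4 + 2 * occCount m n φ j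

/-- Agents of the extended instance `R'`: the agents of `R` together with the
`3m + 2n + 7` agents of the Special-Gadget. -/
abbrev RAgent' (m n : ℕ) := RAgent m n ⊕ Fin (3 * m + 2 * n + 7)

/-- Valued sets of the extended instance `R'`: `6m + 4n + 14` new items are appended on
the right of the `10m + 5n` items of `R`; every Special-Gadget agent values exactly the
new items, every clause agent additionally values all new items except the rightmost six,
and every variable agent additionally values all new items except the rightmost four. -/
def RV' (m n : ℕ) (φ : Fin m → Fin 3 → Fin n × Bool) :
    RAgent' m n → Finset (Fin (10 * m + 5 * n + (6 * m + 4 * n + 14)))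
  | .inl (.inl p) => Finset.univ.filter fun t =>
      (4 * p.1.val ≤ t.val ∧ t.val < 4 * p.1.val + 4) ∨
      t.val = pairStart m n φ p ∨ t.val = pairStart m n φ p + 1 ∨
      (10 * m + 5 * n ≤ t.val ∧ t.val < 10 * m + 5 * n + (6 * m + 4 * n + 8))
  | .inl (.inr (j, true)) => Finset.univ.filter fun t =>
      t.val = varStartR m n φ j ∨ t.val = varStartR m n φ j + 1 ∨
      t.val = varStartR m n φ j + 2 ∨
      t.val = varStartR m n φ j + 3 + 2 * posOcc m n φ j ∨
      (10 * m + 5 * n ≤ t.val ∧ t.val < 10 * m + 5 * n + (6 * m + 4 * n + 10))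
  | .inl (.inr (j, false)) => Finset.univ.filter fun t =>
      t.val = varStartR m n φ j ∨ t.val = varStartR m n φ j + 1 ∨
      t.val = varStartR m n φ j + 3 + 2 * posOcc m n φ j ∨
      t.val = varStartR m n φ j + 4 + 2 * occCount m n φ j ∨
      (10 * m + 5 * n ≤ t.val ∧ t.val < 10 * m + 5 * n + (6 * m + 4 * n + 10))
  | .inr _ => Finset.univ.filter fun t => 10 * m + 5 * n ≤ t.val

/-!
There are `6m + 4n + 7` agents and everybody values `6m + 4n + 14` items, so each of the three
fairness notions forces every agent to receive at least two of the items she values: by pigeonhole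
some bundle holds two of them, and for equitability one uses the `6m + 4n + 8` items valued by
everybody. The Special-Gadget agents then use up all the new items, and every agent of `R` gets two
valued items inside `R`. In the Variable-Gadget of `x_j`, serving both `X_j` and `X̄_j` blocks the
items of the positive occurrences of `x_j` or those of the negative ones, while a Clause-Gadget
can serve only two of its three agents, so the third one is served at a literal that an assignment
can make true.

Conversely, given a satisfying assignment, serve one true literal of each clause in its
Variable-Gadget. Everybody can then be assigned a private interval with two valued items at its
ends, and cutting the line to the left of each of these intervals gives an allocation where every
agent gets exactly two valued items and sees at most two of them in any other bundle. Such an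
allocation is fair in all three senses.
-/

section OwnedCount

open Finset

variable {α A : Type*} {S T : Finset α} {owner : α → A} {b : A}

open Classical in
/-- The number of items of `S` in the bundle of `b`. With `S` the set of items that `a` values,
this is the value of that bundle to `a` before normalization. -/
noncomputable def ownedCount (S : Finset α) (owner : α → A) (b : A) : ℕ :=
  #{t ∈ S | owner t = b}

lemma ownedCount_mono (h : S ⊆ T) : ownedCount S owner b ≤ ownedCount T owner b := by
  classical exact card_le_card (filter_subset_filter _ h)

lemma two_le_ownedCount_iff :
    2 ≤ ownedCount S owner b ↔ ∃ t₁ ∈ S, ∃ t₂ ∈ S, t₁ ≠ t₂ ∧ owner t₁ = b ∧ owner t₂ = b := by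
  rw [ownedCount, Nat.succ_le_iff, one_lt_card]
  simp only [mem_filter]
  grind

lemma exists_lt_lt_of_two_lt_ownedCount [LinearOrder α] (h : 2 < ownedCount S owner b) :
    ∃ t₁ ∈ S, ∃ t₂ ∈ S, ∃ t₃ ∈ S, t₁ < t₂ ∧ t₂ < t₃ ∧ owner t₁ = b ∧ owner t₃ = b := by
  classical
  have hmem := fun i => mem_filter.1 (orderEmbOfCardLe_mem _ h i)
  have hmono := (orderEmbOfCardLe _ h).strictMono
  exact ⟨_, (hmem 0).1, _, (hmem 1).1, _, (hmem 2).1, hmono (by decide), hmono (by decide),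
    (hmem 0).2, (hmem 2).2⟩

lemma exists_two_le_ownedCount [Fintype A] (owner : α → A) (h : Fintype.card A < #S) :
    ∃ b, 2 ≤ ownedCount S owner b := by
  obtain ⟨t₁, h₁, t₂, h₂, hne, heq⟩ :=
    exists_ne_map_eq_of_card_lt_of_maps_to (t := univ) h (f := owner) (by simp)
  exact ⟨owner t₂, two_le_ownedCount_iff.2 ⟨t₁, h₁, t₂, h₂, hne, heq, rfl⟩⟩

lemma exists_owner_eq_of_card_le {ι : Type*} [Fintype ι] {f : ι → A} (hf : f.Injective) {k : ℕ}
    (hk : ∀ i, k ≤ ownedCount S owner (f i)) (hS : #S ≤ Fintype.card ι * k) {t : α} (ht : t ∈ S) :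
    ∃ i, owner t = f i := by
  classical
  have hsum : Fintype.card ι * k ≤ #{t ∈ S | owner t ∈ univ.map ⟨f, hf⟩} := by
    rw [← sum_card_fiberwise_eq_card_filter, sum_map, ← card_univ, ← smul_eq_mul]
    exact card_nsmul_le_sum _ _ _ fun i _ => hk i
  have hall := card_filter_eq_iff.1 ((card_filter_le _ _).antisymm (hS.trans hsum)) t ht
  obtain ⟨i, -, hi⟩ := mem_map.1 hall
  exact ⟨i, hi.symm⟩

end OwnedCount

section Fairness

open Finset

variable {M : ℕ} {A : Type*} {V : A → Finset (Fin M)} {owner : Fin M → A}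

lemma discVal_eq_ownedCount_div (a b : A) :
    discVal V owner a b = (ownedCount (V a) owner b : ℝ) / #(V a) :=
  rfl

lemma discVal_le_discVal_iff {a a' b b' : A} (hcard : #(V a) = #(V a')) (hpos : 0 < #(V a)) :
    discVal V owner a b ≤ discVal V owner a' b' ↔
      ownedCount (V a) owner b ≤ ownedCount (V a') owner b' := by
  rw [discVal_eq_ownedCount_div, discVal_eq_ownedCount_div, ← hcard,
    div_le_div_iff_of_pos_right (by exact_mod_cast hpos), Nat.cast_le]

/-- Every agent receives exactly two of the items she values, and no bundle holds more than two of
them. When all agents value equally many items, such an allocation is fair in all three senses. -/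
def IsBalanced (V : A → Finset (Fin M)) (owner : Fin M → A) : Prop :=
  ∀ a, ownedCount (V a) owner a = 2 ∧ ∀ b, ownedCount (V a) owner b ≤ 2

lemma IsBalanced.envyFree (h : IsBalanced V owner) (a b : A) :
    discVal V owner a a ≥ discVal V owner a b := by
  rw [discVal_eq_ownedCount_div, discVal_eq_ownedCount_div, (h a).1]
  gcongr
  exact (h a).2 b

lemma IsBalanced.equitable (h : IsBalanced V owner) (hcard : ∀ a b, #(V a) = #(V b)) (a b : A) :
    discVal V owner a a = discVal V owner b b := by
  rw [discVal_eq_ownedCount_div, discVal_eq_ownedCount_div, (h a).1, (h b).1, hcard a b]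

variable [Fintype A]

lemma one_div_card_le_discVal_iff {a : A} (hlt : Fintype.card A < #(V a))
    (hle : #(V a) ≤ Fintype.card A * 2) :
    discVal V owner a a ≥ 1 / (Fintype.card A : ℝ) ↔ 2 ≤ ownedCount (V a) owner a := by
  have hA : 0 < Fintype.card A := Fintype.card_pos_iff.2 ⟨a⟩
  rw [ge_iff_le, discVal_eq_ownedCount_div, div_le_div_iff₀ (by exact_mod_cast hA)
    (by exact_mod_cast hA.trans hlt), one_mul, mul_comm]
  norm_cast
  constructor
  · intro h
    exact (Nat.lt_mul_iff_one_lt_right hA).1 (hlt.trans_le h)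
  · intro h
    exact hle.trans (Nat.mul_le_mul_left _ h)

lemma two_le_ownedCount_of_envyFree {a : A} (hlt : Fintype.card A < #(V a))
    (h : ∀ b, discVal V owner a a ≥ discVal V owner a b) : 2 ≤ ownedCount (V a) owner a := by
  obtain ⟨b, hb⟩ := exists_two_le_ownedCount owner hlt
  exact hb.trans ((discVal_le_discVal_iff rfl (by omega)).1 (h b))

lemma two_le_ownedCount_of_equitable {S : Finset (Fin M)} (hS : ∀ a, S ⊆ V a)
    (hlt : Fintype.card A < #S) (hcard : ∀ a b, #(V a) = #(V b))
    (h : ∀ a b, discVal V owner a a = discVal V owner b b) (a : A) :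
    2 ≤ ownedCount (V a) owner a := by
  obtain ⟨b, hb⟩ := exists_two_le_ownedCount owner hlt
  have hpos : 0 < #(V b) := (Nat.zero_le _).trans_lt (hlt.trans_le (card_le_card (hS b)))
  exact (hb.trans (ownedCount_mono (hS b))).trans
    ((discVal_le_discVal_iff (hcard b a) hpos).1 (h b a).le)

end Fairness

section Contiguity

open Finset

variable {M : ℕ} {A : Type*} {owner : Fin M → A}

/-- The agent `a` owns the item at position `t`; positions beyond the line are owned by nobody. -/
def Owns (owner : Fin M → A) (a : A) (t : ℕ) : Prop :=
  ∃ h : t < M, owner ⟨t, h⟩ = a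

lemma Owns.unique {a b : A} {t : ℕ} (ha : Owns owner a t) (hb : Owns owner b t) : a = b :=
  ha.choose_spec.symm.trans hb.choose_spec

lemma ContigAlloc.exists_owns_of_two_le (hc : ContigAlloc owner) {S : Finset (Fin M)} {a : A}
    (h : 2 ≤ ownedCount S owner a) :
    ∃ t₁ ∈ S, ∃ t₂ ∈ S, t₁.val < t₂.val ∧ ∀ t, t₁.val ≤ t → t ≤ t₂.val → Owns owner a t := by
  have key : ∀ t₁ t₂ : Fin M, owner t₁ = a → owner t₂ = a →
      ∀ t, t₁.val ≤ t → t ≤ t₂.val → Owns owner a t := fun t₁ t₂ o₁ o₂ t h₁ h₂ =>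
    ⟨h₂.trans_lt t₂.isLt, hc a t₁ _ t₂ (Fin.le_def.2 h₁) (Fin.le_def.2 h₂) o₁ o₂⟩
  obtain ⟨t₁, h₁, t₂, h₂, hne, o₁, o₂⟩ := two_le_ownedCount_iff.1 h
  rcases hne.lt_or_gt with hlt | hlt
  · exact ⟨t₁, h₁, t₂, h₂, hlt, key t₁ t₂ o₁ o₂⟩
  · exact ⟨t₂, h₂, t₁, h₁, hlt, key t₂ t₁ o₂ o₁⟩

/-- The allocation obtained by cutting the line immediately to the left of the positions
`start a`: each item goes to the agent with the last cut before it. -/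
def IsCutAlloc (start : A → ℕ) (owner : Fin M → A) : Prop :=
  ∀ t, start (owner t) ≤ t.val ∧ ∀ c, start c ≤ t.val → start c ≤ start (owner t)

variable {start : A → ℕ}

lemma exists_isCutAlloc [Finite A] (h₀ : ∃ a, start a = 0) :
    ∃ owner : Fin M → A, IsCutAlloc start owner := by
  have := Fintype.ofFinite A
  obtain ⟨a₀, ha₀⟩ := h₀
  have hmax (t : Fin M) : ∃ a, start a ≤ t.val ∧ ∀ c, start c ≤ t.val → start c ≤ start a := by
    simpa using (univ.filter fun a => start a ≤ t.val).exists_max_image start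
      ⟨a₀, by simp [ha₀]⟩
  choose owner howner using hmax
  exact ⟨owner, howner⟩

namespace IsCutAlloc

lemma contigAlloc (h : IsCutAlloc start owner) (hinj : start.Injective) : ContigAlloc owner := by
  rintro a t₁ t₂ t₃ h₁₂ h₂₃ rfl h₃
  have hle : start (owner t₁) ≤ start (owner t₂) := (h t₂).2 _ ((h t₁).1.trans h₁₂)
  have hge : start (owner t₂) ≤ start (owner t₁) := h₃ ▸ (h t₃).2 _ ((h t₂).1.trans h₂₃)
  exact hinj (hge.antisymm hle)

lemma owner_eq (h : IsCutAlloc start owner) {a : A} {t : Fin M} (hle : start a ≤ t.val)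
    (hother : ∀ c, c ≠ a → start c < start a ∨ t.val < start c) : owner t = a := by
  by_contra hne
  rcases hother _ hne with hlt | hlt
  · exact hlt.not_ge ((h t).2 a hle)
  · exact hlt.not_ge (h t).1

lemma ownedCount_le_two (h : IsCutAlloc start owner) {S : Finset (Fin M)}
    (hsep : ∀ t₁ ∈ S, ∀ t₂ ∈ S, ∀ t₃ ∈ S, t₁ < t₂ → t₂ < t₃ →
      ∃ c, t₁.val < start c ∧ start c ≤ t₃.val) (b : A) :
    ownedCount S owner b ≤ 2 := by
  by_contra! hcard
  obtain ⟨t₁, h₁, t₂, h₂, t₃, h₃, h₁₂, h₂₃, rfl, o₃⟩ := exists_lt_lt_of_two_lt_ownedCount hcard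
  obtain ⟨c, hc₁, hc₃⟩ := hsep t₁ h₁ t₂ h₂ t₃ h₃ h₁₂ h₂₃
  have hle : start c ≤ start (owner t₁) := o₃ ▸ (h t₃).2 c hc₃
  exact (hle.trans (h t₁).1).not_gt hc₁

end IsCutAlloc

/-- Cut the line to the left of every `I a`: then `a` receives all of `I a`, and by `hsep` no bundle
contains three of the items that `a` values. -/
lemma exists_contigAlloc_isBalanced [Finite A] {V : A → Finset (Fin M)} {I : A → ℕ × ℕ}
    (h₀ : ∃ a, (I a).1 = 0) (hlt : ∀ a, (I a).1 < (I a).2)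
    (hdisj : ∀ a b, a ≠ b → (I a).2 < (I b).1 ∨ (I b).2 < (I a).1)
    (hends : ∀ a, ∃ s ∈ V a, ∃ e ∈ V a, s.val = (I a).1 ∧ e.val = (I a).2)
    (hsep : ∀ a, ∀ t₁ ∈ V a, ∀ t₂ ∈ V a, ∀ t₃ ∈ V a, t₁ < t₂ → t₂ < t₃ →
      ∃ c, t₁.val < (I c).1 ∧ (I c).1 ≤ t₃.val) :
    ∃ owner : Fin M → A, ContigAlloc owner ∧ IsBalanced V owner := by
  obtain ⟨owner, howner⟩ := exists_isCutAlloc (M := M) (start := fun a => (I a).1) h₀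
  have hinj : Function.Injective fun a => (I a).1 := fun a b (hab : (I a).1 = (I b).1) => by
    by_contra hne
    have hab := hdisj a b hne
    have ha := hlt a
    have hb := hlt b
    omega
  have hcore (a : A) (t : Fin M) (hs : (I a).1 ≤ t.val) (he : t.val ≤ (I a).2) : owner t = a :=
    howner.owner_eq hs fun c hc => by
      have hca := hdisj c a hc
      have hcc := hlt c
      omega
  refine ⟨owner, howner.contigAlloc hinj, fun a => ?_⟩
  have hle := howner.ownedCount_le_two (hsep a)
  refine ⟨(hle a).antisymm (two_le_ownedCount_iff.2 ?_), hle⟩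
  obtain ⟨s, hs, e, he, hs', he'⟩ := hends a
  have ha := hlt a
  exact ⟨s, hs, e, he, Fin.ne_of_val_ne (by omega), hcore a s (by omega) (by omega),
    hcore a e (by omega) (by omega)⟩

end Contiguity

section Layout

open Finset

variable {m n : ℕ} (φ : Fin m → Fin 3 → Fin n × Bool)

/-- The item of the Variable-Gadget of `x_j` that separates the items of the positive
occurrences of `x_j` from those of the negative ones. -/
def midItem (j : Fin n) : ℕ :=
  varStartR m n φ j + 3 + 2 * posOcc m n φ j

/-- The last item of the Variable-Gadget of `x_j`. -/
def lastItem (j : Fin n) : ℕ :=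
  varStartR m n φ j + 4 + 2 * occCount m n φ j

lemma sum_occCount : ∑ j, occCount m n φ j = 3 * m := by
  simp only [occCount]
  rw [← card_eq_sum_card_fiberwise (by simp)]
  simp [mul_comm]

lemma posOcc_add_card_neg (j : Fin n) :
    posOcc m n φ j + #{p : Fin m × Fin 3 | φ p.1 p.2 = (j, false)} = occCount m n φ j := by
  unfold occCount posOcc
  rw [← card_union_of_disjoint (by simp +contextual [disjoint_left])]
  congr 1
  ext p
  rcases h : φ p.1 p.2 with ⟨j', _ | _⟩ <;> simp [h]

lemma le_varStartR (j : Fin n) : 4 * m ≤ varStartR m n φ j :=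
  Nat.le_add_right _ _

lemma varStartR_add_three_le_midItem (j : Fin n) : varStartR m n φ j + 3 ≤ midItem φ j :=
  Nat.le_add_right _ _

lemma midItem_lt_lastItem (j : Fin n) : midItem φ j < lastItem φ j := by
  have hocc := posOcc_add_card_neg φ j
  simp only [midItem, lastItem]
  omega

lemma lastItem_add_one_eq (j : Fin n) :
    lastItem φ j + 1 =
      4 * m + ∑ i ∈ insert j ({i | i < j} : Finset (Fin n)), (5 + 2 * occCount m n φ i) := by
  rw [sum_insert (by simp)]
  simp only [lastItem, varStartR]
  omega

lemma lastItem_lt_varStartR {j j' : Fin n} (h : j < j') : lastItem φ j < varStartR m n φ j' := by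
  rw [← Nat.succ_le_iff, Nat.succ_eq_add_one, lastItem_add_one_eq, varStartR]
  gcongr
  intro i hi
  simp only [mem_insert, mem_filter, mem_univ, true_and] at hi ⊢
  exact hi.elim (fun hij => hij ▸ h) fun hij => hij.trans h

lemma lastItem_lt (j : Fin n) : lastItem φ j < 10 * m + 5 * n := by
  have htotal : ∑ i, (5 + 2 * occCount m n φ i) = n * 5 + 2 * (3 * m) := by
    simp [sum_add_distrib, ← mul_sum, sum_occCount]
  have hle : ∑ i ∈ insert j ({i | i < j} : Finset (Fin n)), (5 + 2 * occCount m n φ i) ≤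
      ∑ i, (5 + 2 * occCount m n φ i) := sum_le_sum_of_subset (subset_univ _)
  have hend := lastItem_add_one_eq φ j
  omega

lemma litRank_lt_card (p : Fin m × Fin 3) :
    litRank m n φ p < #{p' : Fin m × Fin 3 | φ p'.1 p'.2 = φ p.1 p.2} := by
  refine card_lt_card ((ssubset_iff_of_subset ?_).2 ⟨p, by simp, by simp⟩)
  exact monotone_filter_right _ fun _ _ h => h.1

lemma litRank_lt_litRank {p p' : Fin m × Fin 3} (hφ : φ p.1 p.2 = φ p'.1 p'.2)
    (h : 3 * p.1.val + p.2.val < 3 * p'.1.val + p'.2.val) :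
    litRank m n φ p < litRank m n φ p' := by
  refine card_lt_card ((ssubset_iff_of_subset ?_).2 ⟨p, by simp [hφ, h], by simp⟩)
  exact monotone_filter_right _ fun _ _ hq => ⟨hq.1.trans hφ, hq.2.trans h⟩

lemma litRank_ne {p p' : Fin m × Fin 3} (hφ : φ p.1 p.2 = φ p'.1 p'.2) (h : p ≠ p') :
    litRank m n φ p ≠ litRank m n φ p' := by
  rcases lt_trichotomy (3 * p.1.val + p.2.val) (3 * p'.1.val + p'.2.val) with hlt | heq | hlt
  · exact (litRank_lt_litRank φ hφ hlt).ne
  · exact absurd (Prod.ext (Fin.ext (by omega)) (Fin.ext (by omega))) h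
  · exact (litRank_lt_litRank φ hφ.symm hlt).ne'

variable {φ}

lemma pairStart_mem_of_pos {p : Fin m × Fin 3} {j : Fin n} (h : φ p.1 p.2 = (j, true)) :
    varStartR m n φ j + 3 ≤ pairStart m n φ p ∧ pairStart m n φ p + 1 < midItem φ j := by
  have hr := litRank_lt_card φ p
  simp only [h] at hr
  simp only [pairStart, midItem, h, if_true, posOcc]
  omega

lemma pairStart_mem_of_neg {p : Fin m × Fin 3} {j : Fin n} (h : φ p.1 p.2 = (j, false)) :
    midItem φ j < pairStart m n φ p ∧ pairStart m n φ p + 1 < lastItem φ j := by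
  have hr := litRank_lt_card φ p
  simp only [h] at hr
  have hocc := posOcc_add_card_neg φ j
  simp only [pairStart, midItem, lastItem, h, Bool.false_eq_true, if_false]
  omega

lemma pairStart_mem {p : Fin m × Fin 3} {j : Fin n} (h : (φ p.1 p.2).1 = j) :
    varStartR m n φ j + 3 ≤ pairStart m n φ p ∧ pairStart m n φ p + 1 < lastItem φ j := by
  have hmid := varStartR_add_three_le_midItem φ j
  have hlast := midItem_lt_lastItem φ j
  cases hb : (φ p.1 p.2).2
  · have hneg := pairStart_mem_of_neg (Prod.ext h hb)
    omega
  · have hpos := pairStart_mem_of_pos (Prod.ext h hb)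
    omega

variable (φ)

lemma le_pairStart (p : Fin m × Fin 3) : 4 * m + 3 ≤ pairStart m n φ p :=
  (Nat.add_le_add_right (le_varStartR φ _) 3).trans (pairStart_mem rfl).1

lemma pairStart_add_one_lt (p : Fin m × Fin 3) : pairStart m n φ p + 1 < 10 * m + 5 * n :=
  (pairStart_mem rfl).2.trans (lastItem_lt φ _)

lemma pairStart_disjoint {p p' : Fin m × Fin 3} (h : p ≠ p') :
    pairStart m n φ p + 1 < pairStart m n φ p' ∨ pairStart m n φ p' + 1 < pairStart m n φ p := by
  rcases lt_trichotomy (φ p.1 p.2).1 (φ p'.1 p'.2).1 with hlt | heq | hlt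
  · have hgadget := lastItem_lt_varStartR φ hlt
    have hpair := pairStart_mem (φ := φ) (p := p) rfl
    have hpair' := pairStart_mem (φ := φ) (p := p') rfl
    omega
  · cases hb : (φ p.1 p.2).2 <;> cases hb' : (φ p'.1 p'.2).2
    case false.true =>
      have hneg := pairStart_mem_of_neg (Prod.ext heq hb)
      have hpos := pairStart_mem_of_pos (Prod.ext rfl hb')
      omega
    case true.false =>
      have hpos := pairStart_mem_of_pos (Prod.ext heq hb)
      have hneg := pairStart_mem_of_neg (Prod.ext rfl hb')
      omega
    all_goals
      have hφ : φ p.1 p.2 = φ p'.1 p'.2 := Prod.ext heq (hb.trans hb'.symm)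
      have hrank := litRank_ne φ hφ h
      simp only [pairStart, hφ]
      split_ifs <;> omega
  · have hgadget := lastItem_lt_varStartR φ hlt
    have hpair := pairStart_mem (φ := φ) (p := p) rfl
    have hpair' := pairStart_mem (φ := φ) (p := p') rfl
    omega

end Layout

section Instance

open Finset

lemma card_eq_card_castAdd_add_card_natAdd {a b : ℕ} (S : Finset (Fin (a + b))) :
    #S = #{t | Fin.castAdd b t ∈ S} + #{u | Fin.natAdd a u ∈ S} := by
  have h := Fin.sum_univ_add fun t : Fin (a + b) => if t ∈ S then 1 else 0
  simpa only [← card_filter, filter_univ_mem] using h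

variable {m n : ℕ} (φ : Fin m → Fin 3 → Fin n × Bool)

lemma mem_RV_clause {p : Fin m × Fin 3} {t : Fin (10 * m + 5 * n)} :
    t ∈ RV m n φ (.inl p) ↔ (4 * p.1.val ≤ t.val ∧ t.val < 4 * p.1.val + 4) ∨
      t.val = pairStart m n φ p ∨ t.val = pairStart m n φ p + 1 := by
  simp [RV]

lemma mem_RV_pos {j : Fin n} {t : Fin (10 * m + 5 * n)} :
    t ∈ RV m n φ (.inr (j, true)) ↔ t.val = varStartR m n φ j ∨ t.val = varStartR m n φ j + 1 ∨
      t.val = varStartR m n φ j + 2 ∨ t.val = midItem φ j := by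
  simp [RV, midItem]

lemma mem_RV_neg {j : Fin n} {t : Fin (10 * m + 5 * n)} :
    t ∈ RV m n φ (.inr (j, false)) ↔ t.val = varStartR m n φ j ∨ t.val = varStartR m n φ j + 1 ∨
      t.val = midItem φ j ∨ t.val = lastItem φ j := by
  simp [RV, midItem, lastItem]

lemma card_RV_clause (p : Fin m × Fin 3) : #(RV m n φ (.inl p)) = 6 := by
  have hpair := le_pairStart φ p
  have hlt := pairStart_add_one_lt φ p
  have hp := p.1.isLt
  have hdisj : Disjoint (Ico (4 * p.1.val) (4 * p.1.val + 4))
      (Ico (pairStart m n φ p) (pairStart m n φ p + 2)) := by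
    refine disjoint_left.2 fun t ht ht' => ?_
    rw [mem_Ico] at ht ht'
    omega
  have heq : RV m n φ (.inl p) = attachFin (Ico (4 * p.1.val) (4 * p.1.val + 4) ∪
      Ico (pairStart m n φ p) (pairStart m n φ p + 2)) (by grind) := by
    ext t
    simp only [mem_RV_clause, mem_attachFin, mem_union, mem_Ico]
    omega
  rw [heq, card_attachFin, card_union_of_disjoint hdisj]
  simp

lemma card_RV_var (v : Fin n × Bool) : #(RV m n φ (.inr v)) = 4 := by
  rcases v with ⟨j, b⟩
  have hmid := varStartR_add_three_le_midItem φ j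
  have hlast := midItem_lt_lastItem φ j
  have hlt := lastItem_lt φ j
  cases b
  · have heq : RV m n φ (.inr (j, false)) = attachFin {varStartR m n φ j, varStartR m n φ j + 1,
        midItem φ j, lastItem φ j} (by grind) := by
      ext t
      simp [mem_RV_neg]
    rw [heq, card_attachFin]
    grind
  · have heq : RV m n φ (.inr (j, true)) = attachFin {varStartR m n φ j, varStartR m n φ j + 1,
        varStartR m n φ j + 2, midItem φ j} (by grind) := by
      ext t
      simp [mem_RV_pos]
    rw [heq, card_attachFin]
    grind

/-- The number of new items that an agent of `R` values in the extended instance; these are the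
leftmost ones. -/
def newValued : RAgent m n → ℕ
  | .inl _ => 6 * m + 4 * n + 8
  | .inr _ => 6 * m + 4 * n + 10

lemma castAdd_mem_RV' {r : RAgent m n} {t : Fin (10 * m + 5 * n)} :
    Fin.castAdd _ t ∈ RV' m n φ (.inl r) ↔ t ∈ RV m n φ r := by
  have ht := t.isLt
  rcases r with p | ⟨j, _ | _⟩ <;>
    simp only [RV', RV, mem_filter, mem_univ, true_and, Fin.val_castAdd] <;>
    omega

lemma natAdd_mem_RV' {r : RAgent m n} {u : Fin (6 * m + 4 * n + 14)} :
    Fin.natAdd _ u ∈ RV' m n φ (.inl r) ↔ u.val < newValued r := by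
  rcases r with p | ⟨j, b⟩
  · have hlt := pairStart_add_one_lt φ p
    have hp := p.1.isLt
    simp only [RV', newValued, mem_filter, mem_univ, true_and, Fin.val_natAdd]
    omega
  · have hmid := midItem_lt_lastItem φ j
    have hlast := lastItem_lt φ j
    simp only [midItem, lastItem] at hmid hlast
    cases b <;> simp only [RV', newValued, mem_filter, mem_univ, true_and, Fin.val_natAdd] <;>
      omega

lemma mem_RV'_special {s : Fin (3 * m + 2 * n + 7)}
    {t : Fin (10 * m + 5 * n + (6 * m + 4 * n + 14))} :
    t ∈ RV' m n φ (.inr s) ↔ 10 * m + 5 * n ≤ t.val := by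
  simp [RV']

lemma card_RV' (a : RAgent' m n) : #(RV' m n φ a) = 6 * m + 4 * n + 14 := by
  rw [card_eq_card_castAdd_add_card_natAdd]
  rcases a with r | s
  · simp only [castAdd_mem_RV', natAdd_mem_RV', filter_univ_mem, Fin.card_filter_val_lt]
    rcases r with p | v
    · rw [card_RV_clause, newValued]
      omega
    · rw [card_RV_var, newValued]
      omega
  · simp [mem_RV'_special]

lemma card_RAgent' : Fintype.card (RAgent' m n) = 6 * m + 4 * n + 7 := by
  simp only [Fintype.card_sum, Fintype.card_prod, Fintype.card_fin, Fintype.card_bool]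
  omega

/-- The new items valued by all the agents of the extended instance: all but the last six. -/
def commonNewItems (m n : ℕ) : Finset (Fin (10 * m + 5 * n + (6 * m + 4 * n + 14))) :=
  {t | 10 * m + 5 * n ≤ t.val ∧ t.val < 10 * m + 5 * n + (6 * m + 4 * n + 8)}

lemma card_commonNewItems : #(commonNewItems m n) = 6 * m + 4 * n + 8 := by
  rw [card_eq_card_castAdd_add_card_natAdd]
  simp [commonNewItems, Fin.card_filter_val_lt, filter_false_of_mem, not_le_of_gt]

lemma commonNewItems_subset_RV' (a : RAgent' m n) : commonNewItems m n ⊆ RV' m n φ a := by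
  intro t ht
  simp only [commonNewItems, mem_filter, mem_univ, true_and] at ht
  rcases a with (p | ⟨j, _ | _⟩) | s <;>
    simp only [RV', mem_filter, mem_univ, true_and] <;>
    omega

end Instance

section Satisfiability

open Finset

variable {m n : ℕ} {φ : Fin m → Fin 3 → Fin n × Bool}

section Restriction

variable {A : Type*} {owner : Fin (10 * m + 5 * n) → A} {f : RAgent m n → A}

lemma owns_midItem_block (hf : f.Injective) (hc : ContigAlloc owner)
    (h : ∀ r, 2 ≤ ownedCount (RV m n φ r) owner (f r)) (j : Fin n) :
    (∀ t, varStartR m n φ j + 2 ≤ t → t ≤ midItem φ j → Owns owner (f (.inr (j, true))) t) ∨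
      ∀ t, midItem φ j ≤ t → t ≤ lastItem φ j → Owns owner (f (.inr (j, false))) t := by
  have hmid := varStartR_add_three_le_midItem φ j
  have hlast := midItem_lt_lastItem φ j
  obtain ⟨s₁, hs₁, s₂, hs₂, hs, hpos⟩ := hc.exists_owns_of_two_le (h (.inr (j, true)))
  obtain ⟨t₁, ht₁, t₂, ht₂, ht, hneg⟩ := hc.exists_owns_of_two_le (h (.inr (j, false)))
  rw [mem_RV_pos] at hs₁ hs₂
  rw [mem_RV_neg] at ht₁ ht₂
  by_cases hend : s₂.val = midItem φ j
  · exact .inl fun t h₁ h₂ => hpos t (by omega) (by omega)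
  have hsecond : Owns owner (f (.inr (j, true))) (varStartR m n φ j + 1) :=
    hpos _ (by omega) (by omega)
  have hstart : t₁.val = midItem φ j := by
    by_contra hne
    simpa using hf (hsecond.unique (hneg _ (by omega) (by omega)))
  exact .inr fun t h₁ h₂ => hneg t (by omega) (by omega)

lemma exists_assignment_of_owns_pairStart (hf : f.Injective) (hc : ContigAlloc owner)
    (h : ∀ r, 2 ≤ ownedCount (RV m n φ r) owner (f r)) :
    ∃ x : Fin n → Bool, ∀ p : Fin m × Fin 3,
      Owns owner (f (.inl p)) (pairStart m n φ p) → x (φ p.1 p.2).1 = (φ p.1 p.2).2 := by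
  have hblock (j : Fin n) : ∃ b : Bool, ∀ p : Fin m × Fin 3, (φ p.1 p.2).1 = j →
      Owns owner (f (.inl p)) (pairStart m n φ p) → b = (φ p.1 p.2).2 := by
    rcases owns_midItem_block hf hc h j with hown | hown
    · refine ⟨false, fun p hp hpair => ?_⟩
      by_contra hne
      have hmem := pairStart_mem_of_pos (Prod.ext hp (by simpa using Ne.symm hne))
      simpa using hf (hpair.unique (hown _ (by omega) (by omega)))
    · refine ⟨true, fun p hp hpair => ?_⟩
      by_contra hne
      have hmem := pairStart_mem_of_neg (Prod.ext hp (by simpa using Ne.symm hne))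
      simpa using hf (hpair.unique (hown _ (by omega) (by omega)))
  choose x hx using hblock
  exact ⟨x, fun p => hx _ p rfl⟩

/-- A clause agent not owning the first item of her pair must own one of the two middle items of the
Clause-Gadget, which cannot be the case for all three agents of the clause. -/
lemma exists_owns_pairStart (hf : f.Injective) (hc : ContigAlloc owner)
    (h : ∀ r, 2 ≤ ownedCount (RV m n φ r) owner (f r)) (i : Fin m) :
    ∃ k, Owns owner (f (.inl (i, k))) (pairStart m n φ (i, k)) := by
  by_contra! hno
  have hmiddle (k : Fin 3) : ∃ o : Fin 2, Owns owner (f (.inl (i, k))) (4 * i.val + 1 + o) := by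
    obtain ⟨t₁, ht₁, t₂, ht₂, hlt, hown⟩ := hc.exists_owns_of_two_le (h (.inl (i, k)))
    rw [mem_RV_clause] at ht₁ ht₂
    have hout : ¬ (t₁.val ≤ pairStart m n φ (i, k) ∧ pairStart m n φ (i, k) ≤ t₂.val) :=
      fun hmem => hno k (hown _ hmem.1 hmem.2)
    have hpair := le_pairStart φ (i, k)
    have hi := i.isLt
    dsimp only at ht₁ ht₂
    by_cases hfirst : t₁.val ≤ 4 * i.val + 1
    · exact ⟨0, hown _ (by simpa using hfirst) (by simp; omega)⟩
    · exact ⟨1, hown _ (by simp; omega) (by simp; omega)⟩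
  choose o ho using hmiddle
  obtain ⟨k, k', hne, heq⟩ := Fintype.exists_ne_map_eq_of_card_lt o (by simp)
  have hk := ho k
  rw [heq] at hk
  exact hne (by simpa using hf (hk.unique (ho k')))

lemma satFormula_of_contigAlloc_RV (hf : f.Injective) (hc : ContigAlloc owner)
    (h : ∀ r, 2 ≤ ownedCount (RV m n φ r) owner (f r)) : SatFormula m n φ := by
  obtain ⟨x, hx⟩ := exists_assignment_of_owns_pairStart hf hc h
  exact ⟨x, fun i => (exists_owns_pairStart hf hc h i).imp fun k => hx (i, k)⟩

end Restriction

variable {owner : Fin (10 * m + 5 * n + (6 * m + 4 * n + 14)) → RAgent' m n}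

/-- The Special-Gadget agents value `6m + 4n + 14` items in all, two for each of them. -/
lemma exists_owner_natAdd_eq_special (h : ∀ a, 2 ≤ ownedCount (RV' m n φ a) owner a)
    (u : Fin (6 * m + 4 * n + 14)) : ∃ s, owner (Fin.natAdd _ u) = .inr s := by
  have s₀ : Fin (3 * m + 2 * n + 7) := ⟨0, by omega⟩
  refine exists_owner_eq_of_card_le (S := RV' m n φ (.inr s₀)) (k := 2) Sum.inr_injective
    (fun s => h (.inr s)) ?_ ?_
  · rw [card_RV', Fintype.card_fin]
    omega
  · simp [mem_RV'_special]

lemma satFormula_of_two_le_ownedCount (hc : ContigAlloc owner)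
    (h : ∀ a, 2 ≤ ownedCount (RV' m n φ a) owner a) : SatFormula m n φ := by
  refine satFormula_of_contigAlloc_RV (owner := owner ∘ Fin.castAdd _) Sum.inl_injective
    (fun a t₁ t₂ t₃ h₁₂ h₂₃ => hc a _ _ _ h₁₂ h₂₃) fun r => ?_
  obtain ⟨t₁, h₁, t₂, h₂, hne, o₁, o₂⟩ := two_le_ownedCount_iff.1 (h (.inl r))
  have hold (t) (ht : t ∈ RV' m n φ (.inl r)) (o : owner t = .inl r) :
      ∃ t' ∈ RV m n φ r, Fin.castAdd _ t' = t := by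
    induction t using Fin.addCases with
    | left t' => exact ⟨t', (castAdd_mem_RV' φ).1 ht, rfl⟩
    | right u =>
      obtain ⟨s, hs⟩ := exists_owner_natAdd_eq_special h u
      simp [o] at hs
  obtain ⟨t₁, mem₁, rfl⟩ := hold t₁ h₁ o₁
  obtain ⟨t₂, mem₂, rfl⟩ := hold t₂ h₂ o₂
  exact two_le_ownedCount_iff.2 ⟨t₁, mem₁, t₂, mem₂, fun heq => hne (heq ▸ rfl), o₁, o₂⟩

end Satisfiability

section BalancedAllocation

open Finset

/-- In a clause whose literal `k₀` is served in its Variable-Gadget, which of the two halves of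
the Clause-Gadget (`0` or `1`) serves the agent of the literal `k ≠ k₀`. -/
def freeSlot (k₀ k : Fin 3) : ℕ :=
  if k₀ < k then k.val - 1 else k.val

lemma freeSlot_lt_two {k₀ k : Fin 3} (h : k ≠ k₀) : freeSlot k₀ k < 2 := by
  decide +revert

lemma freeSlot_ne {k₀ k k' : Fin 3} (h : k ≠ k₀) (h' : k' ≠ k₀) (hne : k ≠ k') :
    freeSlot k₀ k ≠ freeSlot k₀ k' := by
  decide +revert

lemma exists_freeSlot_eq (k₀ : Fin 3) (b : Fin 2) : ∃ k, k ≠ k₀ ∧ freeSlot k₀ k = b.val := by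
  decide +revert

variable {m n : ℕ} (φ : Fin m → Fin 3 → Fin n × Bool) (x : Fin n → Bool) (pick : Fin m → Fin 3)

/-- The interval of items of `R`, given by its end points, that each agent certainly receives when
the assignment `x` makes the literal `pick i` of each clause `C_i` true. -/
def core : RAgent m n → ℕ × ℕ
  | .inl (i, k) =>
    if k = pick i then (pairStart m n φ (i, k), pairStart m n φ (i, k) + 1)
    else (4 * i.val + 2 * freeSlot (pick i) k, 4 * i.val + 2 * freeSlot (pick i) k + 1)
  | .inr (j, true) =>
    if x j then (varStartR m n φ j + 1, varStartR m n φ j + 2)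
    else (varStartR m n φ j + 2, midItem φ j)
  | .inr (j, false) =>
    if x j then (midItem φ j, lastItem φ j)
    else (varStartR m n φ j, varStartR m n φ j + 1)

/-- The extension of `core` to the instance `R'`: the Special-Gadget agents take the new items two
by two. -/
def extCore : RAgent' m n → ℕ × ℕ :=
  Sum.elim (core φ x pick) fun s =>
    (10 * m + 5 * n + 2 * s.val, 10 * m + 5 * n + 2 * s.val + 1)

lemma core_clause_pick (i : Fin m) :
    core φ x pick (.inl (i, pick i)) =
      (pairStart m n φ (i, pick i), pairStart m n φ (i, pick i) + 1) :=
  if_pos rfl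

variable {pick} in
lemma core_clause_of_ne {i : Fin m} {k : Fin 3} (h : k ≠ pick i) :
    core φ x pick (.inl (i, k)) =
      (4 * i.val + 2 * freeSlot (pick i) k, 4 * i.val + 2 * freeSlot (pick i) k + 1) :=
  if_neg h

lemma core_clause_snd_lt_of_ne {i : Fin m} {k : Fin 3} (h : k ≠ pick i) :
    (core φ x pick (.inl (i, k))).2 < 4 * m := by
  have hslot := freeSlot_lt_two h
  rw [core_clause_of_ne φ x h]
  omega

lemma core_var_mem (j : Fin n) (b : Bool) :
    varStartR m n φ j ≤ (core φ x pick (.inr (j, b))).1 ∧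
      (core φ x pick (.inr (j, b))).2 ≤ lastItem φ j := by
  have hmid := varStartR_add_three_le_midItem φ j
  have hlast := midItem_lt_lastItem φ j
  cases b <;> simp only [core] <;> split_ifs <;> omega

lemma core_fst_lt_snd (r : RAgent m n) : (core φ x pick r).1 < (core φ x pick r).2 := by
  rcases r with ⟨i, k⟩ | ⟨j, b⟩
  · simp only [core]
    split_ifs <;> omega
  · have hmid := varStartR_add_three_le_midItem φ j
    have hlast := midItem_lt_lastItem φ j
    cases b <;> simp only [core] <;> split_ifs <;> omega

lemma core_snd_lt (r : RAgent m n) : (core φ x pick r).2 < 10 * m + 5 * n := by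
  rcases r with ⟨i, k⟩ | ⟨j, b⟩
  · by_cases hk : k = pick i
    · rw [hk, core_clause_pick]
      exact pairStart_add_one_lt φ _
    · have hlt := core_clause_snd_lt_of_ne φ x pick hk
      omega
  · exact (core_var_mem φ x pick j b).2.trans_lt (lastItem_lt φ j)

lemma core_clause_disjoint {p p' : Fin m × Fin 3} (h : p ≠ p') :
    (core φ x pick (.inl p)).2 < (core φ x pick (.inl p')).1 ∨
      (core φ x pick (.inl p')).2 < (core φ x pick (.inl p)).1 := by
  obtain ⟨i, k⟩ := p
  obtain ⟨i', k'⟩ := p'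
  by_cases hk : k = pick i <;> by_cases hk' : k' = pick i'
  · rw [hk, hk', core_clause_pick, core_clause_pick]
    exact pairStart_disjoint φ (by rwa [hk, hk'] at h)
  · have hpair := le_pairStart φ (i, pick i)
    have hslot := core_clause_snd_lt_of_ne φ x pick hk'
    rw [hk, core_clause_pick]
    omega
  · have hpair := le_pairStart φ (i', pick i')
    have hslot := core_clause_snd_lt_of_ne φ x pick hk
    rw [hk', core_clause_pick]
    omega
  · rw [core_clause_of_ne φ x hk, core_clause_of_ne φ x hk']
    have hslot := freeSlot_lt_two hk
    have hslot' := freeSlot_lt_two hk'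
    rcases eq_or_ne i i' with rfl | hi
    · have hne := freeSlot_ne hk hk' fun heq => h (heq ▸ rfl)
      omega
    · have hi' := Fin.val_ne_of_ne hi
      omega

lemma core_var_disjoint {v v' : Fin n × Bool} (h : v ≠ v') :
    (core φ x pick (.inr v)).2 < (core φ x pick (.inr v')).1 ∨
      (core φ x pick (.inr v')).2 < (core φ x pick (.inr v)).1 := by
  obtain ⟨j, b⟩ := v
  obtain ⟨j', b'⟩ := v'
  have hmem := core_var_mem φ x pick j b
  have hmem' := core_var_mem φ x pick j' b'
  rcases lt_trichotomy j j' with hlt | rfl | hlt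
  · have hgadget := lastItem_lt_varStartR φ hlt
    omega
  · have hmid := varStartR_add_three_le_midItem φ j
    cases b <;> cases b' <;> first | exact absurd rfl h | simp only [core]; split_ifs <;> omega
  · have hgadget := lastItem_lt_varStartR φ hlt
    omega

variable {x pick} in
lemma core_clause_var_disjoint (hx : ∀ i, x (φ i (pick i)).1 = (φ i (pick i)).2)
    (p : Fin m × Fin 3) (v : Fin n × Bool) :
    (core φ x pick (.inl p)).2 < (core φ x pick (.inr v)).1 ∨
      (core φ x pick (.inr v)).2 < (core φ x pick (.inl p)).1 := by
  obtain ⟨i, k⟩ := p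
  obtain ⟨j, b⟩ := v
  have hvar := core_var_mem φ x pick j b
  by_cases hk : k = pick i
  swap
  · have hclause := core_clause_snd_lt_of_ne φ x pick hk
    have hstart := le_varStartR φ j
    omega
  rw [hk, core_clause_pick]
  have hpair := pairStart_mem (φ := φ) (p := (i, pick i)) rfl
  dsimp only at hpair
  rcases lt_trichotomy (φ i (pick i)).1 j with hlt | heq | hlt
  · have hgadget := lastItem_lt_varStartR φ hlt
    omega
  · have hxj : x j = (φ i (pick i)).2 := heq ▸ hx i
    cases hpol : (φ i (pick i)).2
    · have hneg := pairStart_mem_of_neg (p := (i, pick i)) (Prod.ext heq hpol)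
      cases b <;> simp only [core, hxj, hpol] <;> grind
    · have hpos := pairStart_mem_of_pos (p := (i, pick i)) (Prod.ext heq hpol)
      cases b <;> simp only [core, hxj, hpol] <;> grind
  · have hgadget := lastItem_lt_varStartR φ hlt
    omega

variable {x pick} in
lemma extCore_disjoint (hx : ∀ i, x (φ i (pick i)).1 = (φ i (pick i)).2) (a b : RAgent' m n)
    (h : a ≠ b) :
    (extCore φ x pick a).2 < (extCore φ x pick b).1 ∨
      (extCore φ x pick b).2 < (extCore φ x pick a).1 := by
  rcases a with r | s <;> rcases b with r' | s' <;> simp only [extCore, Sum.elim_inl, Sum.elim_inr]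
  · rcases r with p | v <;> rcases r' with p' | v'
    · exact core_clause_disjoint φ x pick (by simpa using h)
    · exact core_clause_var_disjoint φ hx p v'
    · exact (core_clause_var_disjoint φ hx p' v).symm
    · exact core_var_disjoint φ x pick (by simpa using h)
  · have hr := core_snd_lt φ x pick r
    omega
  · have hr := core_snd_lt φ x pick r'
    omega
  · have hs : s.val ≠ s'.val := Fin.val_ne_of_ne (by simpa using h)
    omega

lemma extCore_fst_lt_snd (a : RAgent' m n) :
    (extCore φ x pick a).1 < (extCore φ x pick a).2 := by
  rcases a with r | s
  · exact core_fst_lt_snd φ x pick r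
  · exact Nat.lt_succ_self _

lemma core_ends_mem (r : RAgent m n) :
    ∃ s ∈ RV m n φ r, ∃ e ∈ RV m n φ r, s.val = (core φ x pick r).1 ∧
      e.val = (core φ x pick r).2 := by
  have hlt := core_snd_lt φ x pick r
  refine ⟨⟨_, (core_fst_lt_snd φ x pick r).trans hlt⟩, ?_, ⟨_, hlt⟩, ?_, rfl, rfl⟩
  all_goals
    rcases r with ⟨i, k⟩ | ⟨j, b⟩
    · by_cases hk : k = pick i
      · simp [mem_RV_clause, core, hk]
      · have hslot := freeSlot_lt_two hk
        simp only [mem_RV_clause, core_clause_of_ne φ x hk]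
        omega
    · cases b <;> cases hxj : x j <;> simp [mem_RV_pos, mem_RV_neg, core, hxj]

lemma extCore_ends_mem (a : RAgent' m n) :
    ∃ s ∈ RV' m n φ a, ∃ e ∈ RV' m n φ a, s.val = (extCore φ x pick a).1 ∧
      e.val = (extCore φ x pick a).2 := by
  rcases a with r | s
  · obtain ⟨t, ht, e, he, ht', he'⟩ := core_ends_mem φ x pick r
    exact ⟨_, (castAdd_mem_RV' φ).2 ht, _, (castAdd_mem_RV' φ).2 he, ht', he'⟩
  · exact ⟨⟨10 * m + 5 * n + 2 * s.val, by omega⟩, (mem_RV'_special φ).2 (Nat.le_add_right _ _),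
      ⟨10 * m + 5 * n + 2 * s.val + 1, by omega⟩,
      (mem_RV'_special φ).2 ((Nat.le_add_right _ _).trans (Nat.le_succ _)), rfl, rfl⟩

lemma exists_core_fst_clause (i : Fin m) (b : Fin 2) :
    ∃ r, (core φ x pick r).1 = 4 * i.val + 2 * b.val := by
  obtain ⟨k, hk, hslot⟩ := exists_freeSlot_eq (pick i) b
  exact ⟨.inl (i, k), by rw [core_clause_of_ne φ x hk, hslot]⟩

lemma core_sep_clause (p : Fin m × Fin 3) {t₁ t₂ t₃ : Fin (10 * m + 5 * n)}
    (h₁ : t₁ ∈ RV m n φ (.inl p)) (h₂ : t₂ ∈ RV m n φ (.inl p)) (h₃ : t₃ ∈ RV m n φ (.inl p))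
    (h₁₂ : t₁ < t₂) (h₂₃ : t₂ < t₃) :
    ∃ r, t₁.val < (core φ x pick r).1 ∧ (core φ x pick r).1 ≤ t₃.val := by
  rw [mem_RV_clause] at h₁ h₂ h₃
  have hp := p.1.isLt
  have hstart := le_varStartR φ (φ p.1 p.2).1
  have hpair := pairStart_mem (φ := φ) (p := p) rfl
  by_cases hfirst : t₁.val ≤ 4 * p.1.val + 1
  · obtain ⟨r, hr⟩ := exists_core_fst_clause φ x pick p.1 1
    rw [Fin.val_one] at hr
    exact ⟨r, by omega, by omega⟩
  · refine ⟨.inr ((φ p.1 p.2).1, true), ?_⟩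
    simp only [core]
    split_ifs <;> omega

lemma core_sep_var (v : Fin n × Bool) {t₁ t₂ t₃ : Fin (10 * m + 5 * n)}
    (h₁ : t₁ ∈ RV m n φ (.inr v)) (h₂ : t₂ ∈ RV m n φ (.inr v)) (h₃ : t₃ ∈ RV m n φ (.inr v))
    (h₁₂ : t₁ < t₂) (h₂₃ : t₂ < t₃) :
    ∃ r, t₁.val < (core φ x pick r).1 ∧ (core φ x pick r).1 ≤ t₃.val := by
  obtain ⟨j, b⟩ := v
  have hmid := varStartR_add_three_le_midItem φ j
  have hlast := midItem_lt_lastItem φ j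
  have hspread : t₁.val ≤ varStartR m n φ j + 1 ∧ varStartR m n φ j + 2 ≤ t₃.val ∧
      (t₁.val = varStartR m n φ j ∨ midItem φ j ≤ t₃.val) := by
    cases b
    · rw [mem_RV_neg] at h₁ h₂ h₃
      omega
    · rw [mem_RV_pos] at h₁ h₂ h₃
      omega
  by_cases hxj : x j ∧ t₁.val ≠ varStartR m n φ j
  · refine ⟨.inr (j, false), ?_⟩
    simp only [core, hxj.1, if_true]
    omega
  · refine ⟨.inr (j, true), ?_⟩
    simp only [core]
    split_ifs with hx <;> grind

lemma core_sep (r : RAgent m n) {t₁ t₂ t₃ : Fin (10 * m + 5 * n)}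
    (h₁ : t₁ ∈ RV m n φ r) (h₂ : t₂ ∈ RV m n φ r) (h₃ : t₃ ∈ RV m n φ r)
    (h₁₂ : t₁ < t₂) (h₂₃ : t₂ < t₃) :
    ∃ c, t₁.val < (core φ x pick c).1 ∧ (core φ x pick c).1 ≤ t₃.val := by
  rcases r with p | v
  · exact core_sep_clause φ x pick p h₁ h₂ h₃ h₁₂ h₂₃
  · exact core_sep_var φ x pick v h₁ h₂ h₃ h₁₂ h₂₃

lemma extCore_sep (a : RAgent' m n) (t₁) (h₁ : t₁ ∈ RV' m n φ a) (t₂) (h₂ : t₂ ∈ RV' m n φ a)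
    (t₃) (h₃ : t₃ ∈ RV' m n φ a) (h₁₂ : t₁ < t₂) (h₂₃ : t₂ < t₃) :
    ∃ c, t₁.val < (extCore φ x pick c).1 ∧ (extCore φ x pick c).1 ≤ t₃.val := by
  by_cases hold : t₃.val < 10 * m + 5 * n
  · have hcast (t : Fin _) (ht : t ≤ t₃) : ∃ u : Fin (10 * m + 5 * n), Fin.castAdd _ u = t :=
      ⟨⟨t, lt_of_le_of_lt ht hold⟩, rfl⟩
    obtain ⟨u₁, rfl⟩ := hcast t₁ (h₁₂.trans h₂₃).le
    obtain ⟨u₂, rfl⟩ := hcast t₂ h₂₃.le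
    obtain ⟨u₃, rfl⟩ := hcast t₃ le_rfl
    rcases a with r | s
    · rw [castAdd_mem_RV'] at h₁ h₂ h₃
      obtain ⟨c, hc⟩ := core_sep φ x pick r h₁ h₂ h₃ h₁₂ h₂₃
      exact ⟨.inl c, hc⟩
    · exact absurd ((mem_RV'_special φ).1 h₃) hold.not_ge
  · by_cases hnew : 10 * m + 5 * n ≤ t₁.val
    · refine ⟨.inr ⟨(t₁.val - (10 * m + 5 * n)) / 2 + 1, by omega⟩, ?_⟩
      simp only [extCore, Sum.elim_inr]
      omega
    · refine ⟨.inr ⟨0, by omega⟩, ?_⟩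
      simp only [extCore, Sum.elim_inr]
      omega

variable {φ}

lemma exists_contigAlloc_isBalanced_RV' (hm : 0 < m) (h : SatFormula m n φ) :
    ∃ owner, ContigAlloc owner ∧ IsBalanced (RV' m n φ) owner := by
  obtain ⟨x, hx⟩ := h
  choose pick hpick using hx
  obtain ⟨r, hr⟩ := exists_core_fst_clause φ x pick ⟨0, hm⟩ 0
  exact exists_contigAlloc_isBalanced ⟨.inl r, hr⟩ (extCore_fst_lt_snd φ x pick)
    (extCore_disjoint φ hpick) (extCore_ends_mem φ x pick) (extCore_sep φ x pick)

lemma satFormula_iff_exists_contigAlloc (hm : 0 < m)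
    {P : (Fin (10 * m + 5 * n + (6 * m + 4 * n + 14)) → RAgent' m n) → Prop}
    (hP : ∀ owner, IsBalanced (RV' m n φ) owner → P owner)
    (htwo : ∀ owner, P owner → ∀ a, 2 ≤ ownedCount (RV' m n φ a) owner a) :
    SatFormula m n φ ↔ ∃ owner, ContigAlloc owner ∧ P owner := by
  constructor
  · intro h
    obtain ⟨owner, hc, hbal⟩ := exists_contigAlloc_isBalanced_RV' hm h
    exact ⟨owner, hc, hP owner hbal⟩
  · rintro ⟨owner, hc, h⟩
    exact satFormula_of_two_le_ownedCount hc (htwo owner h)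

end BalancedAllocation

/-- For the extended instance `R'` built from the 3-SAT formula `φ`
(with `6m + 4n + 7` agents, every agent valuing exactly `6m + 4n + 14` items), the
following are equivalent: (i) `φ` is satisfiable; (ii) `R'` admits a contiguous envy-free
allocation; (iii) `R'` admits a contiguous proportional allocation; (iv) `R'` admits a
contiguous equitable allocation. -/
theorem satisfiable_iff_fair_allocations
    (m n : ℕ) (hm : 0 < m) (hn : 0 < n)
    (φ : Fin m → Fin 3 → Fin n × Bool) :
    (SatFormula m n φ ↔
      (∃ owner : Fin (10 * m + 5 * n + (6 * m + 4 * n + 14)) → RAgent' m n,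
        ContigAlloc owner ∧
        ∀ a b, discVal (RV' m n φ) owner a a ≥ discVal (RV' m n φ) owner a b)) ∧
    (SatFormula m n φ ↔
      (∃ owner : Fin (10 * m + 5 * n + (6 * m + 4 * n + 14)) → RAgent' m n,
        ContigAlloc owner ∧
        ∀ a, discVal (RV' m n φ) owner a a ≥
          1 / (Fintype.card (RAgent' m n) : ℝ))) ∧
    (SatFormula m n φ ↔
      (∃ owner : Fin (10 * m + 5 * n + (6 * m + 4 * n + 14)) → RAgent' m n,
        ContigAlloc owner ∧
        ∀ a b, discVal (RV' m n φ) owner a a = discVal (RV' m n φ) owner b b)) := by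
  have hcard (a b) : (RV' m n φ a).card = (RV' m n φ b).card := by rw [card_RV', card_RV']
  have hlt (a) : Fintype.card (RAgent' m n) < (RV' m n φ a).card := by
    rw [card_RV', card_RAgent']
    omega
  have hle (a) : (RV' m n φ a).card ≤ Fintype.card (RAgent' m n) * 2 := by
    rw [card_RV', card_RAgent']
    omega
  have hcommon : Fintype.card (RAgent' m n) < (commonNewItems m n).card := by
    rw [card_commonNewItems, card_RAgent']
    omega
  refine ⟨satFormula_iff_exists_contigAlloc hm ?_ ?_, satFormula_iff_exists_contigAlloc hm ?_ ?_,
    satFormula_iff_exists_contigAlloc hm ?_ ?_⟩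
  · exact fun owner h => h.envyFree
  · exact fun owner h a => two_le_ownedCount_of_envyFree (hlt a) (h a)
  · exact fun owner h a => (one_div_card_le_discVal_iff (hlt a) (hle a)).2 (h a).1.ge
  · exact fun owner h a => (one_div_card_le_discVal_iff (hlt a) (hle a)).1 (h a)
  · exact fun owner h => h.equitable hcard
  · exact fun owner h =>
      two_le_ownedCount_of_equitable (commonNewItems_subset_RV' φ) hcommon hcard h
end
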